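/- arXiv:0707.0593 — 2 statements merged into one kernel-verified Lean document; each statement's English description precedes it below -/
import Mathlib

section
/- Let $\alpha = \sqrt[5]{2}$ (the real fifth root of $2$) and $K = \mathbb{Q}(\alpha)$. The only solutions of the equation $\alpha^4 X^4 + \alpha^3 X^3 + \alpha^2 X^2 + \alpha X + 1 = (\alpha - 1) Y^2$ with $X \in \mathbb{Q}$ and $Y \in K$ are $(X, Y) = \bigl(1, \pm(\alpha^4+\alpha^3+\alpha^2+\alpha+1)\bigr)$ and $(X, Y) = \bigl(-\tfrac{1}{3}, \pm\tfrac{3\alpha^4+5\alpha^3-\alpha^2+3\alpha+5}{9}\bigr)$. -/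
open NumberField Polynomial

/-!
With `x = α X` and `γ = α - 1` the curve is the quartic `γ Y² = x⁴ + x³ + x² + x + 1` of genus one,
and the question is which of its points have `x / α` rational. In the ring of integers of `K`
localized at `α`, where `2 = α⁵`, a rational `X` with a point above it is congruent to `1` or
`-1/3` modulo `8`: even denominators are excluded by the involution `x ↦ x⁻¹`.

A point close to a known point `(x₀, Y₀)` maps, under a quotient of degree two sending `(x₀, Y₀)`
to infinity, to a point of `y² = t (t² - 5 δ t + 5 δ²)` with `t` close to `1`, where `δ` is `γ`
times the square of `(x - x₀) / 2`. Since `K` has class number one and unit rank two, the first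
coordinate of any such point is a product of `-1`, `α - 1`, `1 + α + α³`, `5` and a square; these
four are independent even modulo squares and `α¹¹`, so a first coordinate that is a square modulo
`α¹¹` is a square. This lets the point be lifted through two two-isogenies, whose composite is
multiplication by two up to rescaling, again with `t` close to `1` and with `δ` divided by `4`.
Iterating, `δ` becomes divisible by only a small power of `α`, and one further lift has a first
coordinate that is negative at the real place, where `t < 0` makes the quadratic factor positive
and the product negative.
-/

section RadicalExtension

variable {F L : Type*} [Field F] [Field L] [Algebra F L]

theorem exists_powerBasis_gen_eq [FiniteDimensional F L] {x : L}
    (hx : (minpoly F x).natDegree = Module.finrank F L) : ∃ pb : PowerBasis F L, pb.gen = x := by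
  have hx' : IsIntegral F x := .of_finite F x
  have htop := (Field.primitive_element_iff_minpoly_natDegree_eq F x).2 hx
  rw [← IntermediateField.toSubalgebra_inj,
    IntermediateField.adjoin_simple_toSubalgebra_of_isAlgebraic hx'.isAlgebraic] at htop
  exact ⟨.ofAdjoinEqTop hx' htop, PowerBasis.ofAdjoinEqTop_gen ..⟩

theorem norm_algebraMap_sub_gen (pb : PowerBasis F L) (c : F) :
    Algebra.norm F (algebraMap F L c - pb.gen) = (minpoly F pb.gen).eval c := by
  rw [Algebra.norm_eq_matrix_det pb.basis, map_sub, AlgHom.commutes,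
    ← charpoly_leftMulMatrix, Matrix.eval_charpoly]
  rfl

variable {p : ℕ} {m : F} {x : L}

theorem minpoly_eq_X_pow_sub_C (hp : p.Prime) (hm : ∀ b : F, b ^ p ≠ m)
    (hx : x ^ p = algebraMap F L m) : minpoly F x = X ^ p - C m :=
  (minpoly.eq_of_irreducible_of_monic (X_pow_sub_C_irreducible_of_prime hp hm)
    (by simp [hx]) (monic_X_pow_sub_C m hp.ne_zero)).symm

theorem exists_powerBasis_gen_eq_of_pow_eq (hp : p.Prime) (hm : ∀ b : F, b ^ p ≠ m)
    (hx : x ^ p = algebraMap F L m) (hL : Module.finrank F L = p) :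
    ∃ pb : PowerBasis F L, pb.gen = x := by
  have : FiniteDimensional F L := .of_finrank_pos (hL ▸ hp.pos)
  refine exists_powerBasis_gen_eq ?_
  rw [minpoly_eq_X_pow_sub_C hp hm hx, natDegree_X_pow_sub_C, hL]

theorem norm_algebraMap_sub_of_pow_eq (hp : p.Prime) (hm : ∀ b : F, b ^ p ≠ m)
    (hx : x ^ p = algebraMap F L m) (hL : Module.finrank F L = p) (c : F) :
    Algebra.norm F (algebraMap F L c - x) = c ^ p - m := by
  obtain ⟨pb, rfl⟩ := exists_powerBasis_gen_eq_of_pow_eq hp hm hx hL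
  rw [norm_algebraMap_sub_gen, minpoly_eq_X_pow_sub_C hp hm hx]
  simp

end RadicalExtension

theorem pow_ne_of_not_dvd_padicValRat {p : ℕ} [Fact p.Prime] {n : ℕ} {q : ℚ}
    (hq : ¬ (n : ℤ) ∣ padicValRat p q) (b : ℚ) : b ^ n ≠ q := by
  rintro rfl
  exact hq (by rw [padicValRat.pow]; exact dvd_mul_right _ _)

theorem abs_discr_le_abs_discr_of_isIntegral {K : Type*} [Field K] [NumberField K] {ι : Type*}
    [Fintype ι] [DecidableEq ι] (b : Module.Basis ι ℚ K) (hb : ∀ i, IsIntegral ℤ (b i)) :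
    |(discr K : ℚ)| ≤ |Algebra.discr ℚ b| := by
  let B := (integralBasis K).reindex ((integralBasis K).indexEquiv b)
  have hB : Algebra.discr ℚ B = discr K := by
    rw [coe_discr, Module.Basis.coe_reindex, Algebra.discr_reindex]
  have hdet : Algebra.discr ℚ b = (B.toMatrix b).det ^ 2 * discr K := by
    rw [← hB, ← Algebra.discr_of_matrix_vecMul, Module.Basis.toMatrix_map_vecMul]
  have hint : IsIntegral ℤ (B.toMatrix b).det := by
    refine IsIntegral.det fun i j => ?_
    have := integralBasis_repr_apply K (RingOfIntegers.restrict b hb j)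
      (((integralBasis K).indexEquiv b).symm i)
    rw [Module.Basis.toMatrix_apply, Module.Basis.repr_reindex_apply]
    exact this ▸ isIntegral_algebraMap
  obtain ⟨n, hn⟩ := IsIntegrallyClosed.isIntegral_iff.1 hint
  have hn0 : n ≠ 0 := by
    rintro rfl
    refine Algebra.discr_not_zero_of_basis ℚ b ?_
    rw [hdet, ← hn, map_zero, zero_pow two_ne_zero, zero_mul]
  have hn1 : (1 : ℚ) ≤ n ^ 2 :=
    (one_le_sq_iff_one_le_abs _).2 (by exact_mod_cast Int.one_le_abs hn0)
  rw [hdet, ← hn, eq_intCast, abs_mul, abs_of_nonneg (sq_nonneg (n : ℚ))]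
  exact le_mul_of_one_le_left (abs_nonneg _) hn1

section FifthRootOfTwo

variable {K : Type*} [Field K] [NumberField K] {a : 𝓞 K}

theorem coe_pow_eq_algebraMap (ha : a ^ 5 = 2) (k : ℕ) :
    (-(a : K) ^ k) ^ 5 = algebraMap ℚ K (-2 ^ k) := by
  have : (a : K) ^ 5 = 2 := by
    rw [← map_pow, ha, map_ofNat]
  rw [(by decide : Odd 5).neg_pow, pow_right_comm, this]
  simp

theorem pow_five_ne_neg_two_pow {k : ℕ} (hk : ¬ 5 ∣ k) (b : ℚ) : b ^ 5 ≠ -2 ^ k :=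
  have hval : padicValRat 2 (-2 ^ k) = k := by
    rw [padicValRat.neg, padicValRat.pow]
    exact mul_right_eq_self₀.2 (.inl (by exact_mod_cast padicValRat.self (p := 2) one_lt_two))
  pow_ne_of_not_dvd_padicValRat (by rwa [hval, Int.natCast_dvd_natCast]) b

theorem norm_add_pow (ha : a ^ 5 = 2) (hK : Module.finrank ℚ K = 5) (c : ℤ) {k : ℕ}
    (hk : ¬ 5 ∣ k) : Algebra.norm ℤ (c + a ^ k) = c ^ 5 + 2 ^ k := by
  have := norm_algebraMap_sub_of_pow_eq Nat.prime_five (pow_five_ne_neg_two_pow hk)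
    (coe_pow_eq_algebraMap ha k) hK c
  apply Int.cast_injective (α := ℚ)
  rw [Algebra.coe_norm_int]
  simpa using this

theorem norm_fifthRoot (ha : a ^ 5 = 2) (hK : Module.finrank ℚ K = 5) : Algebra.norm ℤ a = 2 := by
  simpa using norm_add_pow ha hK 0 (k := 1) (by decide)

theorem abs_discr_le (ha : a ^ 5 = 2) (hK : Module.finrank ℚ K = 5) : |discr K| ≤ 50000 := by
  have hm := pow_five_ne_neg_two_pow (k := 1) (by decide)
  have hx := coe_pow_eq_algebraMap ha 1
  obtain ⟨pb, hgen⟩ := exists_powerBasis_gen_eq_of_pow_eq Nat.prime_five hm hx hK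
  have hnorm : Algebra.norm ℚ (a : K) = 2 := by
    rw [← Algebra.coe_norm_int, norm_fifthRoot ha hK, Int.cast_ofNat]
  have hdiscr : Algebra.discr ℚ pb.basis = 50000 := by
    rw [Algebra.discr_powerBasis_eq_norm, hgen, minpoly_eq_X_pow_sub_C Nat.prime_five hm hx, hK]
    have hder : aeval (-(a : K) ^ 1) (derivative (X ^ 5 - C (-2 ^ 1 : ℚ))) =
        algebraMap ℚ K 5 * a ^ 4 := by
      norm_num [(by decide : Even 4).neg_pow]
    rw [hder, map_mul, map_pow, hnorm, Algebra.norm_algebraMap, hK]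
    norm_num
  have hle := abs_discr_le_abs_discr_of_isIntegral pb.basis fun i => by
    rw [pb.basis_eq_pow, hgen, pow_one]
    exact a.isIntegral_coe.neg.pow i
  rw [hdiscr] at hle
  exact_mod_cast hle

end FifthRootOfTwo

theorem zmod_fifthRoot_cases {p : ℕ} (hp : p.Prime) (h5 : 5 ≤ p) (h13 : p ≤ 13) {x : ZMod p}
    (hx : x ^ 5 = 2) :
    1 + x = 0 ∨ 1 + x ^ 2 = 0 ∨ 1 + x + x ^ 2 = 0 ∨ 1 - x ^ 2 + x ^ 4 = 0 := by
  interval_cases p <;> first | (revert x; decide) | norm_num at hp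

theorem one_add_fifthRoot_eq_zero {F : Type*} [Field F] (h3 : (3 : F) = 0) {x : F}
    (hx : x ^ 5 = 2) (h9 : x ^ 9 = x) : 1 + x = 0 := by
  have hx0 : x ≠ 0 := by
    rintro rfl
    exact one_ne_zero (α := F) (by linear_combination h3 + hx)
  have hx3 : 2 * x ^ 3 - 1 = 0 :=
    (mul_eq_zero.1 (by linear_combination h9 - x ^ 4 * hx : x * (2 * x ^ 3 - 1) = 0)).resolve_left
      hx0
  exact eq_zero_of_pow_eq_zero (n := 3) (by linear_combination -hx3 + (x ^ 3 + x ^ 2 + x) * h3)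

theorem fifthRoot_cases_of_card_eq_prime {F : Type*} [Field F] [Fintype F] {p : ℕ} (hp : p.Prime)
    (hF : Fintype.card F = p) (h5 : 5 ≤ p) (h13 : p ≤ 13) {x : F} (hx : x ^ 5 = 2) :
    1 + x = 0 ∨ 1 + x ^ 2 = 0 ∨ 1 + x + x ^ 2 = 0 ∨ 1 - x ^ 2 + x ^ 4 = 0 := by
  let e := (ZMod.ringEquivOfPrime F hp hF).symm
  have := zmod_fifthRoot_cases hp h5 h13 (x := e x) (by rw [← map_pow, hx, map_ofNat])
  simpa only [← map_one e, ← map_pow, ← map_add, ← map_sub, map_eq_zero_iff e e.injective]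
    using this

theorem fifthRoot_cases_of_card_le {F : Type*} [Field F] [Fintype F] (hF : Fintype.card F ≤ 13)
    {x : F} (hx : x ^ 5 = 2) :
    x = 0 ∨ 1 + x = 0 ∨ 1 + x ^ 2 = 0 ∨ 1 + x + x ^ 2 = 0 ∨ 1 - x ^ 2 + x ^ 4 = 0 := by
  obtain ⟨p, hpF, ⟨n, hn⟩, hp, hcard : Fintype.card F = p ^ n⟩ := FiniteField.card' F
  have hp0 : (p : F) = 0 := CharP.cast_eq_zero F p
  have hle : p ^ n ≤ 13 := hcard ▸ hF
  obtain rfl | hp2 := hp.eq_two_or_odd'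
  · exact .inl (eq_zero_of_pow_eq_zero (hx.trans (mod_cast hp0)))
  obtain rfl | hp3 := eq_or_ne p 3
  · refine .inr (.inl (one_add_fifthRoot_eq_zero (mod_cast hp0) hx ?_))
    have hpow : x ^ 3 ^ n = x := hcard ▸ FiniteField.pow_card x
    have hn2 : n ≤ 2 := by
      by_contra! h
      linarith [Nat.pow_le_pow_right hp.pos h]
    interval_cases n
    · linear_combination (x ^ 6 + x ^ 4 + x ^ 2 + 1) * hpow
    · exact hpow
  · have hp5 : 5 ≤ p := by
      have := hp.two_le
      grind
    have hn1 : n = 1 := by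
      by_contra h
      linarith [Nat.pow_le_pow_right hp.pos (by omega : 2 ≤ n), Nat.pow_le_pow_left hp5 2]
    rw [hn1, pow_one] at hcard hle
    exact .inr (fifthRoot_cases_of_card_eq_prime hp hcard hp5 hle hx)

theorem prime_of_norm_prime {K : Type*} [Field K] [NumberField K] {x : 𝓞 K}
    (hx : (Algebra.norm ℤ x).natAbs.Prime) : Prime x := by
  have hx0 : x ≠ 0 := by
    rintro rfl
    rw [Algebra.norm_zero] at hx
    exact Nat.not_prime_zero hx
  refine (Ideal.span_singleton_prime hx0).1 (Ideal.isPrime_of_irreducible_absNorm ?_)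
  rwa [Ideal.absNorm_span_singleton]

theorem isPrincipal_of_mem_of_norm_prime {K : Type*} [Field K] [NumberField K] {I : Ideal (𝓞 K)}
    (hI : I ≠ ⊤) {x : 𝓞 K} (hxI : x ∈ I) (hx : (Algebra.norm ℤ x).natAbs.Prime) :
    I.IsPrincipal := by
  have hprime := prime_of_norm_prime hx
  have hmax : (Ideal.span {x}).IsMaximal :=
    ((Ideal.span_singleton_prime hprime.ne_zero).2 hprime).isMaximal
      (by simpa using hprime.ne_zero)
  exact ⟨x, (hmax.eq_of_le hI ((Ideal.span_singleton_le_iff_mem I).2 hxI)).symm⟩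

section FifthRootOfTwo

variable {K : Type*} [Field K] [NumberField K] {a : 𝓞 K}

theorem norm_one_add (ha : a ^ 5 = 2) (hK : Module.finrank ℚ K = 5) :
    Algebra.norm ℤ (1 + a) = 3 := by
  simpa using norm_add_pow ha hK 1 (k := 1) (by decide)

theorem norm_one_add_sq (ha : a ^ 5 = 2) (hK : Module.finrank ℚ K = 5) :
    Algebra.norm ℤ (1 + a ^ 2) = 5 := by
  simpa using norm_add_pow ha hK 1 (k := 2) (by decide)

theorem norm_one_add_add_sq (ha : a ^ 5 = 2) (hK : Module.finrank ℚ K = 5) :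
    Algebra.norm ℤ (1 + a + a ^ 2) = 7 := by
  have hsub : Algebra.norm ℤ (-1 + a) = 1 := by
    simpa using norm_add_pow ha hK (-1) (k := 1) (by decide)
  have hcube : Algebra.norm ℤ (-1 + a ^ 3) = 7 := by
    simpa using norm_add_pow ha hK (-1) (k := 3) (by decide)
  rwa [show -1 + a ^ 3 = (-1 + a) * (1 + a + a ^ 2) by ring, map_mul, hsub, one_mul] at hcube

theorem norm_one_sub_sq_add_pow_four (ha : a ^ 5 = 2) (hK : Module.finrank ℚ K = 5) :
    Algebra.norm ℤ (1 - a ^ 2 + a ^ 4) = 13 := by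
  have hsix : Algebra.norm ℤ (1 + a ^ 6) = 65 := by
    simpa using norm_add_pow ha hK 1 (k := 6) (by decide)
  rw [show 1 + a ^ 6 = (1 + a ^ 2) * (1 - a ^ 2 + a ^ 4) by ring, map_mul,
    norm_one_add_sq ha hK] at hsix
  linarith

theorem exists_mem_norm_prime (ha : a ^ 5 = 2) (hK : Module.finrank ℚ K = 5) {I : Ideal (𝓞 K)}
    (hI : I.IsPrime) (hI0 : I ≠ ⊥) (hn : Ideal.absNorm I ≤ 13) :
    ∃ x ∈ I, (Algebra.norm ℤ x).natAbs.Prime := by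
  have hmax : I.IsMaximal := hI.isMaximal hI0
  let := Ideal.Quotient.field I
  have hfin : Finite (𝓞 K ⧸ I) := Ideal.finiteQuotientOfFreeOfNeBot I hI0
  let := Fintype.ofFinite (𝓞 K ⧸ I)
  have hcard : Fintype.card (𝓞 K ⧸ I) = Ideal.absNorm I := Nat.card_eq_fintype_card.symm
  have hcases := fifthRoot_cases_of_card_le (hcard.trans_le hn) (x := Ideal.Quotient.mk I a)
    (by rw [← map_pow, ha, map_ofNat])
  simp only [← map_one (Ideal.Quotient.mk I), ← map_pow, ← map_add, ← map_sub,
    Ideal.Quotient.eq_zero_iff_mem] at hcases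
  obtain h | h | h | h | h := hcases
  · exact ⟨_, h, by norm_num [norm_fifthRoot ha hK]⟩
  · exact ⟨_, h, by norm_num [norm_one_add ha hK]⟩
  · exact ⟨_, h, by norm_num [norm_one_add_sq ha hK]⟩
  · exact ⟨_, h, by norm_num [norm_one_add_add_sq ha hK]⟩
  · exact ⟨_, h, by norm_num [norm_one_sub_sq_add_pow_four ha hK]⟩

theorem minkowskiBound_lt (ha : a ^ 5 = 2) (hK : Module.finrank ℚ K = 5) :
    (4 / Real.pi) ^ InfinitePlace.nrComplexPlaces K *
      ((Module.finrank ℚ K).factorial / (Module.finrank ℚ K : ℝ) ^ Module.finrank ℚ K *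
        √|discr K|) < 14 := by
  have hdiscr : √|(discr K : ℝ)| ≤ 224 := by
    rw [Real.sqrt_le_left (by norm_num)]
    have : |(discr K : ℝ)| ≤ 50000 := mod_cast abs_discr_le ha hK
    linarith
  have hplaces : InfinitePlace.nrComplexPlaces K ≤ 2 := by
    have := InfinitePlace.card_add_two_mul_card_eq_rank K
    omega
  have hpi : (4 / Real.pi) ^ InfinitePlace.nrComplexPlaces K ≤ (4 / 3.14 : ℝ) ^ 2 := by
    have h1 : 1 ≤ 4 / Real.pi := (one_le_div Real.pi_pos).2 Real.pi_le_four
    refine (pow_le_pow_right₀ h1 hplaces).trans ?_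
    gcongr
    exact Real.pi_gt_d2.le
  rw [hK]
  calc _ ≤ (4 / 3.14 : ℝ) ^ 2 * ((Nat.factorial 5 : ℕ) / (5 : ℕ) ^ 5 * 224) := by gcongr
    _ < 14 := by norm_num [Nat.factorial]

theorem isPrincipalIdealRing_ringOfIntegers (ha : a ^ 5 = 2) (hK : Module.finrank ℚ K = 5) :
    IsPrincipalIdealRing (𝓞 K) := by
  refine RingOfIntegers.isPrincipalIdealRing_of_isPrincipal_of_norm_le_of_isPrime
    fun I hI hle => ?_
  have hn : Ideal.absNorm (I : Ideal (𝓞 K)) < 14 := mod_cast hle.trans_lt (minkowskiBound_lt ha hK)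
  obtain ⟨x, hxI, hx⟩ := exists_mem_norm_prime ha hK hI (nonZeroDivisors.coe_ne_zero I)
    (Nat.lt_succ_iff.1 hn)
  exact isPrincipal_of_mem_of_norm_prime hI.ne_top hxI hx

end FifthRootOfTwo

theorem exists_eq_prod_pow_mul_sq {G ι T : Type*} [CommGroup G] [Fintype ι] [Finite T] {f : G → T}
    (hf : ∀ x y, f x = f y → IsSquare (x * y)) (hT : Nat.card T = 2 ^ Fintype.card ι)
    {g : ι → G} (hg : ∀ e : ι → ℕ, IsSquare (∏ i, g i ^ e i) → ∀ i, Even (e i)) (u : G) :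
    ∃ (e : ι → ℕ) (v : G), u = (∏ i, g i ^ e i) * v ^ 2 := by
  classical
  let F (s : ι → Fin 2) : T := f (∏ i, g i ^ (s i : ℕ))
  have hF : F.Injective := fun s t hst => by
    have := hf _ _ hst
    simp only [← Finset.prod_mul_distrib, ← pow_add] at this
    ext i
    have := Nat.even_iff.1 (hg _ this i)
    omega
  obtain ⟨s, hs⟩ := ((Nat.bijective_iff_injective_and_card F).2 ⟨hF, by simp [hT]⟩).2 (f u)
  obtain ⟨w, hw⟩ := hf _ _ hs
  refine ⟨fun i => s i, (∏ i, g i ^ (s i : ℕ))⁻¹ * w, ?_⟩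
  rw [mul_pow, sq w, ← hw]
  group

theorem exists_isSquare_mul_of_eq (K : Type*) [Field K] [NumberField K] :
    ∃ f : (𝓞 K)ˣ → Units.torsion K × (Fin (Units.rank K) → ZMod 2),
      ∀ x y, f x = f y → IsSquare (x * y) := by
  have hdecomp (x : (𝓞 K)ˣ) := (Units.exist_unique_eq_mul_prod K x).exists
  choose ζe hζe using hdecomp
  refine ⟨fun x => ((ζe x).1, fun i => (ζe x).2 i), fun x y hxy => ?_⟩
  obtain ⟨hζ, he⟩ := Prod.mk.inj hxy
  rw [hζe x, hζe y, hζ, mul_mul_mul_comm, ← Finset.prod_mul_distrib]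
  refine (IsSquare.mul_self _).mul (Finset.isSquare_prod _ fun i _ => ?_)
  rw [← zpow_add]
  have hi := (ZMod.intCast_eq_intCast_iff_dvd_sub _ _ 2).1 (congrFun he i)
  exact Even.isSquare_zpow (by grind) _

section FifthRootOfTwo

variable {K : Type*} [Field K] [NumberField K] {a : 𝓞 K}

theorem ringHom_real_ext (ha : a ^ 5 = 2) (hK : Module.finrank ℚ K = 5) (φ ψ : K →+* ℝ) :
    φ = ψ := by
  obtain ⟨pb, hgen⟩ := exists_powerBasis_gen_eq_of_pow_eq Nat.prime_five
    (pow_five_ne_neg_two_pow (k := 1) (by decide)) (coe_pow_eq_algebraMap ha 1) hK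
  have hpow (χ : K →+* ℝ) : χ pb.gen ^ 5 = -2 := by
    rw [← map_pow, hgen, coe_pow_eq_algebraMap ha 1]
    rw [eq_ratCast, map_ratCast]
    norm_num
  have hφψ : φ pb.gen = ψ pb.gen :=
    (by decide : Odd 5).strictMono_pow.injective ((hpow φ).trans (hpow ψ).symm)
  exact RingHom.ext fun x =>
    DFunLike.congr_fun (pb.algHom_ext (f := φ.toRatAlgHom) (g := ψ.toRatAlgHom) hφψ) x

theorem units_rank_eq_two (ha : a ^ 5 = 2) (hK : Module.finrank ℚ K = 5) : Units.rank K = 2 := by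
  have hreal : InfinitePlace.nrRealPlaces K ≤ 1 := by
    classical
    rw [← InfinitePlace.card_real_embeddings, Fintype.card_le_one_iff_subsingleton]
    refine ⟨fun φ ψ => Subtype.ext (RingHom.ext fun x => ?_)⟩
    rw [← ComplexEmbedding.IsReal.coe_embedding_apply φ.2,
      ← ComplexEmbedding.IsReal.coe_embedding_apply ψ.2,
      ringHom_real_ext ha hK φ.2.embedding ψ.2.embedding]
  have hplaces := InfinitePlace.card_add_two_mul_card_eq_rank K
  rw [hK] at hplaces
  rw [Units.rank, InfinitePlace.card_eq_nrRealPlaces_add_nrComplexPlaces]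
  omega

theorem exists_unit_eq_prod_pow_mul_sq (ha : a ^ 5 = 2) (hK : Module.finrank ℚ K = 5)
    {g : Fin 3 → (𝓞 K)ˣ} (hg : ∀ e : Fin 3 → ℕ, IsSquare (∏ i, g i ^ e i) → ∀ i, Even (e i))
    (u : (𝓞 K)ˣ) : ∃ (e : Fin 3 → ℕ) (v : (𝓞 K)ˣ), u = (∏ i, g i ^ e i) * v ^ 2 := by
  obtain ⟨f, hf⟩ := exists_isSquare_mul_of_eq K
  refine exists_eq_prod_pow_mul_sq hf ?_ hg u
  have hodd : Odd (Module.finrank ℚ K) := hK ▸ by decide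
  have htors : Nat.card (Units.torsion K) = 2 := Units.torsionOrder_eq_two_of_odd_finrank hodd
  simp [Nat.card_prod, htors, units_rank_eq_two ha hK]

end FifthRootOfTwo

/-- A uniformizer `ω` with residue field `𝔽₂` in a ring where `2 = ω ^ 5`. -/
structure IsDyadicUniformizer {R : Type*} [CommRing R] (ω : R) : Prop where
  pow_five : ω ^ 5 = 2
  prime : Prime ω
  dvd_or_dvd_sub_one : ∀ x, ω ∣ x ∨ ω ∣ x - 1

/-- Elements whose classes modulo squares generate a `2`-Selmer group over the field `ℚ(ω)` with
`ω ^ 5 = 2`: the root of unity `-1`, two units, and a generator `5` of the only odd prime that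
divides the discriminants of the elliptic curves below, up to a square of a unit. -/
def selmerGen {R : Type*} [CommRing R] (ω : R) : Fin 4 → R := ![-1, ω - 1, 1 + ω + ω ^ 3, 5]

/-- Integer coordinates with respect to the powers `1, ω, ω ^ 2, ω ^ 3, ω ^ 4` of a fifth root `ω`
of two; they make congruences modulo powers of `ω` decidable. -/
structure Quintic where
  c₀ : ℤ
  c₁ : ℤ
  c₂ : ℤ
  c₃ : ℤ
  c₄ : ℤ

namespace Quintic

instance : One Quintic := ⟨⟨1, 0, 0, 0, 0⟩⟩

instance : Sub Quintic :=
  ⟨fun x y => ⟨x.c₀ - y.c₀, x.c₁ - y.c₁, x.c₂ - y.c₂, x.c₃ - y.c₃, x.c₄ - y.c₄⟩⟩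

instance : Mul Quintic where
  mul x y :=
    { c₀ := x.c₀ * y.c₀ + 2 * (x.c₁ * y.c₄ + x.c₂ * y.c₃ + x.c₃ * y.c₂ + x.c₄ * y.c₁)
      c₁ := x.c₀ * y.c₁ + x.c₁ * y.c₀ + 2 * (x.c₂ * y.c₄ + x.c₃ * y.c₃ + x.c₄ * y.c₂)
      c₂ := x.c₀ * y.c₂ + x.c₁ * y.c₁ + x.c₂ * y.c₀ + 2 * (x.c₃ * y.c₄ + x.c₄ * y.c₃)
      c₃ := x.c₀ * y.c₃ + x.c₁ * y.c₂ + x.c₂ * y.c₁ + x.c₃ * y.c₀ + 2 * (x.c₄ * y.c₄)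
      c₄ := x.c₀ * y.c₄ + x.c₁ * y.c₃ + x.c₂ * y.c₂ + x.c₃ * y.c₁ + x.c₄ * y.c₀ }

instance : Pow Quintic ℕ := ⟨fun x n => npowRec n x⟩

/-- The element with the given coordinates. -/
def eval {R : Type*} [CommRing R] (ω : R) (x : Quintic) : R :=
  x.c₀ + x.c₁ * ω + x.c₂ * ω ^ 2 + x.c₃ * ω ^ 3 + x.c₄ * ω ^ 4

/-- Divisibility by `ω ^ n`, in coordinates: an element is divisible by `ω` when `c₀` is even, and
the coordinates of the quotient are then `c₁, c₂, c₃, c₄, c₀ / 2`. -/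
def PowDvd : ℕ → Quintic → Prop
  | 0, _ => True
  | n + 1, x => 2 ∣ x.c₀ ∧ PowDvd n ⟨x.c₁, x.c₂, x.c₃, x.c₄, x.c₀ / 2⟩

instance : ∀ n x, Decidable (PowDvd n x)
  | 0, _ => .isTrue trivial
  | n + 1, x =>
    have := instDecidablePowDvd n ⟨x.c₁, x.c₂, x.c₃, x.c₄, x.c₀ / 2⟩
    inferInstanceAs (Decidable (2 ∣ x.c₀ ∧ _))

/-- The element `1 + e₁ ω + e₂ ω ^ 2 + e₃ ω ^ 3 + e₄ ω ^ 4` with digits `0` and `1`. -/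
def ofDigits (e₁ e₂ e₃ e₄ : Fin 2) : Quintic := ⟨1, e₁.val, e₂.val, e₃.val, e₄.val⟩

/-- Coordinates of `∏ i, selmerGen ω i ^ e i`. -/
def ofExponents (e : Fin 4 → ℕ) : Quintic :=
  ⟨-1, 0, 0, 0, 0⟩ ^ e 0 * ⟨-1, 1, 0, 0, 0⟩ ^ e 1 * ⟨1, 1, 0, 1, 0⟩ ^ e 2 * ⟨5, 0, 0, 0, 0⟩ ^ e 3

set_option maxRecDepth 100000 in
theorem eq_zero_of_powDvd : ∀ (e : Fin 4 → Fin 2) (e₁ e₂ e₃ e₄ : Fin 2),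
    PowDvd 11 (ofExponents (fun i => e i) * ofDigits e₁ e₂ e₃ e₄ ^ 2 - 1) → e = 0 := by
  decide +kernel

set_option maxRecDepth 100000 in
theorem eq_one_or_eq_five_of_powDvd : ∀ (n : Fin 8) (e₁ e₂ e₃ e₄ : Fin 2),
    PowDvd 11 (⟨-1, 1, 0, 0, 0⟩ * ⟨1, n.val, n.val ^ 2, n.val ^ 3, n.val ^ 4⟩ -
      ofDigits e₁ e₂ e₃ e₄ ^ 2) → n = 1 ∨ n = 5 := by
  decide +kernel

section Eval

variable {R : Type*} [CommRing R] {ω : R}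

theorem eval_one : eval ω 1 = 1 := by
  simp [eval, show (1 : Quintic) = ⟨1, 0, 0, 0, 0⟩ from rfl]

theorem eval_sub (x y : Quintic) : (x - y).eval ω = x.eval ω - y.eval ω := by
  simp only [eval, show x - y = ⟨x.c₀ - y.c₀, x.c₁ - y.c₁, x.c₂ - y.c₂, x.c₃ - y.c₃, x.c₄ - y.c₄⟩
    from rfl]
  push_cast
  ring

theorem mul_def (x y : Quintic) : x * y =
    { c₀ := x.c₀ * y.c₀ + 2 * (x.c₁ * y.c₄ + x.c₂ * y.c₃ + x.c₃ * y.c₂ + x.c₄ * y.c₁)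
      c₁ := x.c₀ * y.c₁ + x.c₁ * y.c₀ + 2 * (x.c₂ * y.c₄ + x.c₃ * y.c₃ + x.c₄ * y.c₂)
      c₂ := x.c₀ * y.c₂ + x.c₁ * y.c₁ + x.c₂ * y.c₀ + 2 * (x.c₃ * y.c₄ + x.c₄ * y.c₃)
      c₃ := x.c₀ * y.c₃ + x.c₁ * y.c₂ + x.c₂ * y.c₁ + x.c₃ * y.c₀ + 2 * (x.c₄ * y.c₄)
      c₄ := x.c₀ * y.c₄ + x.c₁ * y.c₃ + x.c₂ * y.c₂ + x.c₃ * y.c₁ + x.c₄ * y.c₀ } :=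
  rfl

theorem eval_mul (hω : ω ^ 5 = 2) (x y : Quintic) : (x * y).eval ω = x.eval ω * y.eval ω := by
  simp only [eval, mul_def]
  push_cast
  linear_combination -(x.c₁ * y.c₄ + x.c₂ * y.c₃ + x.c₃ * y.c₂ + x.c₄ * y.c₁ +
    (x.c₂ * y.c₄ + x.c₃ * y.c₃ + x.c₄ * y.c₂) * ω + (x.c₃ * y.c₄ + x.c₄ * y.c₃) * ω ^ 2 +
    x.c₄ * y.c₄ * ω ^ 3 : R) * hω

theorem eval_pow (hω : ω ^ 5 = 2) (x : Quintic) : ∀ n : ℕ, (x ^ n).eval ω = x.eval ω ^ n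
  | 0 => by rw [pow_zero]; exact eval_one
  | n + 1 => by rw [pow_succ, ← eval_pow hω x n, ← eval_mul hω]; rfl

theorem eval_two_mul (hω : ω ^ 5 = 2) (c₁ c₂ c₃ c₄ k : ℤ) :
    eval ω ⟨2 * k, c₁, c₂, c₃, c₄⟩ = ω * eval ω ⟨c₁, c₂, c₃, c₄, k⟩ := by
  simp only [eval]
  push_cast
  linear_combination -k * hω

theorem eval_ofExponents (hω : ω ^ 5 = 2) (e : Fin 4 → ℕ) :
    (ofExponents e).eval ω = ∏ i, selmerGen ω i ^ e i := by
  simp only [ofExponents, eval_mul hω, eval_pow hω, Fin.prod_univ_four]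
  simp [eval, selmerGen, sub_eq_add_neg, add_comm]

end Eval

end Quintic

namespace IsDyadicUniformizer

variable {R : Type*} [CommRing R] {ω : R}

theorem dvd_two (h : IsDyadicUniformizer ω) : ω ∣ 2 :=
  h.pow_five ▸ dvd_pow_self ω (by decide)

theorem dvd_intCast_iff (h : IsDyadicUniformizer ω) {n : ℤ} : ω ∣ (n : R) ↔ 2 ∣ n := by
  have htwo {k : ℤ} : ω ∣ ((2 * k : ℤ) : R) := by
    push_cast
    exact h.dvd_two.mul_right _
  refine ⟨fun hn => ?_, fun ⟨k, hk⟩ => hk ▸ htwo⟩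
  obtain ⟨k, rfl | rfl⟩ := Int.even_or_odd' n
  · exact dvd_mul_right 2 k
  · rw [Int.cast_add, Int.cast_one, dvd_add_right htwo] at hn
    exact absurd (isUnit_of_dvd_one hn) h.prime.not_isUnit

theorem not_dvd_of_dvd_sub_one (h : IsDyadicUniformizer ω) {x : R} (hx : ω ∣ x - 1) : ¬ω ∣ x :=
  fun hx' => h.prime.not_isUnit (isUnit_of_dvd_one ((dvd_sub_right hx').1 hx))

theorem powDvd_of_dvd [IsDomain R] (h : IsDyadicUniformizer ω) :
    ∀ {n : ℕ} {x : Quintic}, ω ^ n ∣ x.eval ω → x.PowDvd n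
  | 0, _, _ => trivial
  | n + 1, ⟨c₀, c₁, c₂, c₃, c₄⟩, hx => by
    have hc₀ : 2 ∣ c₀ := by
      have hrest : ω ∣ c₁ * ω + c₂ * ω ^ 2 + c₃ * ω ^ 3 + c₄ * ω ^ 4 :=
        ⟨c₁ + c₂ * ω + c₃ * ω ^ 2 + c₄ * ω ^ 3, by ring⟩
      refine h.dvd_intCast_iff.1 ((dvd_add_left hrest).1 ?_)
      convert (dvd_pow_self ω n.succ_ne_zero).trans hx using 1
      simp only [Quintic.eval]
      ring
    obtain ⟨k, rfl⟩ := hc₀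
    rw [Quintic.eval_two_mul h.pow_five, pow_succ', mul_dvd_mul_iff_left h.prime.ne_zero] at hx
    refine ⟨dvd_mul_right 2 k, ?_⟩
    rw [show 2 * k / 2 = k by omega]
    exact h.powDvd_of_dvd hx

theorem pow_eleven_dvd_sq_sub_sq (h : IsDyadicUniformizer ω) {x y : R} (hy : ¬ω ∣ y)
    (hxy : ω ^ 5 ∣ x - y) : ω ^ 11 ∣ x ^ 2 - y ^ 2 := by
  obtain ⟨s, hs⟩ := hxy
  have hdvd : ω ∣ s * (s + y) := by
    rcases h.dvd_or_dvd_sub_one s with hs | hs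
    · exact hs.mul_right _
    · have hy := (h.dvd_or_dvd_sub_one y).resolve_left hy
      refine Dvd.dvd.mul_left ?_ s
      convert (hs.add hy).add h.dvd_two using 1
      ring
  obtain ⟨r, hr⟩ := hdvd
  refine ⟨r, ?_⟩
  linear_combination (x + y) * hs + ω ^ 5 * s * hs + ω ^ 10 * hr - ω ^ 5 * s * y * h.pow_five

theorem exists_digits (h : IsDyadicUniformizer ω) {x : R} (hx : ¬ω ∣ x) :
    ∃ e₁ e₂ e₃ e₄, ω ^ 5 ∣ x - (Quintic.ofDigits e₁ e₂ e₃ e₄).eval ω := by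
  have hdigit (y : R) : ∃ (e : Fin 2) (z : R), y = e.val + ω * z := by
    rcases h.dvd_or_dvd_sub_one y with ⟨z, hz⟩ | ⟨z, hz⟩
    · exact ⟨0, z, by simpa using hz⟩
    · exact ⟨1, z, by simp [← hz]⟩
  obtain ⟨y₁, h₁⟩ := (h.dvd_or_dvd_sub_one x).resolve_left hx
  obtain ⟨e₁, y₂, h₂⟩ := hdigit y₁
  obtain ⟨e₂, y₃, h₃⟩ := hdigit y₂
  obtain ⟨e₃, y₄, h₄⟩ := hdigit y₃
  obtain ⟨e₄, y₅, h₅⟩ := hdigit y₄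
  refine ⟨e₁, e₂, e₃, e₄, y₅, ?_⟩
  simp only [Quintic.eval, Quintic.ofDigits]
  push_cast
  linear_combination h₁ + ω * h₂ + ω ^ 2 * h₃ + ω ^ 3 * h₄ + ω ^ 4 * h₅

theorem exists_sq_eval_ofDigits (h : IsDyadicUniformizer ω) {x : R} (hx : ¬ω ∣ x) :
    ∃ e₁ e₂ e₃ e₄, ω ^ 11 ∣ x ^ 2 - (Quintic.ofDigits e₁ e₂ e₃ e₄ ^ 2).eval ω := by
  obtain ⟨e₁, e₂, e₃, e₄, he⟩ := h.exists_digits hx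
  refine ⟨e₁, e₂, e₃, e₄, ?_⟩
  rw [Quintic.eval_pow h.pow_five]
  refine h.pow_eleven_dvd_sq_sub_sq (fun hdvd => hx ?_) he
  exact (dvd_iff_dvd_of_dvd_sub ((dvd_pow_self ω (by decide)).trans he)).2 hdvd

theorem even_of_pow_eleven_dvd [IsDomain R] (h : IsDyadicUniformizer ω) {e : Fin 4 → ℕ} {x : R}
    (hx : ω ^ 11 ∣ (∏ i, selmerGen ω i ^ e i) * x ^ 2 - 1) (i : Fin 4) : Even (e i) := by
  set y := (∏ i, selmerGen ω i ^ (e i / 2)) * x with hy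
  have hred : (∏ i, selmerGen ω i ^ e i) * x ^ 2 =
      (∏ i, selmerGen ω i ^ (e i % 2)) * y ^ 2 := by
    rw [hy, mul_pow, ← mul_assoc, ← Finset.prod_pow, ← Finset.prod_mul_distrib]
    simp only [← pow_mul, ← pow_add, mul_comm _ 2, Nat.mod_add_div]
  rw [hred] at hx
  have hodd : ¬ω ∣ y := fun hdvd =>
    h.not_dvd_of_dvd_sub_one ((dvd_pow_self ω (by decide)).trans hx)
      ((hdvd.trans (dvd_pow_self y two_ne_zero)).mul_left _)
  obtain ⟨e₁, e₂, e₃, e₄, hd⟩ := h.exists_sq_eval_ofDigits hodd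
  have hcoords := h.powDvd_of_dvd (n := 11) (x := Quintic.ofExponents (fun i => e i % 2) *
    Quintic.ofDigits e₁ e₂ e₃ e₄ ^ 2 - 1) <| by
      rw [Quintic.eval_sub, Quintic.eval_mul h.pow_five, Quintic.eval_one,
        Quintic.eval_ofExponents h.pow_five]
      convert hx.sub (hd.mul_left (∏ i, selmerGen ω i ^ (e i % 2))) using 1
      ring
  have hzero := Quintic.eq_zero_of_powDvd (fun i => ⟨e i % 2, Nat.mod_lt _ two_pos⟩) _ _ _ _ hcoords
  exact Nat.even_iff.2 (congrArg Fin.val (congrFun hzero i))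

end IsDyadicUniformizer

/-- Existence of a point with nonzero first coordinate `t` on the curve
`y ^ 2 = t * (t ^ 2 + B * t + C)`. -/
def IsAbscissa {A : Type*} [CommRing A] (B C t : A) : Prop :=
  t ≠ 0 ∧ ∃ y, y ^ 2 = t * (t ^ 2 + B * t + C)

theorem IsAbscissa.map {A B : Type*} [CommRing A] [CommRing B] {f : A →+* B}
    (hf : Function.Injective f) {b c t : A} (ht : IsAbscissa b c t) :
    IsAbscissa (f b) (f c) (f t) := by
  obtain ⟨ht0, y, hy⟩ := ht
  refine ⟨(map_ne_zero_iff f hf).2 ht0, f y, ?_⟩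
  rw [← map_pow, hy]
  simp only [map_mul, map_add, map_pow]

theorem IsAbscissa.pos {δ t : ℝ} (hδ : 0 ≤ δ) (hab : IsAbscissa (-5 * δ) (5 * δ ^ 2) t) :
    0 < t := by
  obtain ⟨ht, y, hy⟩ := hab
  by_contra! hle
  have htneg := hle.lt_of_ne ht
  have hquad : 0 < t ^ 2 + -5 * δ * t + 5 * δ ^ 2 := by nlinarith
  nlinarith [sq_nonneg y]

section PrincipalIdealRing

variable {R : Type*} [CommRing R] [IsDomain R] [IsPrincipalIdealRing R]

theorem isCoprime_sq_add_mul_add_mul_sq {m n d B c : R} (hm : m ≠ 0) (hmnd : m ∣ n * d)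
    (hnd : IsRelPrime n d) (hmc : IsRelPrime m c) :
    IsCoprime m (n ^ 2 + B * n * d + c * d ^ 2) := by
  refine isCoprime_of_prime_dvd (fun h => hm h.1) fun p hp hpm hpq => ?_
  have hpc : ¬p ∣ c := fun hpc => hp.not_isUnit (hmc hpm hpc)
  rcases hp.dvd_or_dvd (hpm.trans hmnd) with hpn | hpd
  · have hcd : p ∣ c * d ^ 2 := by
      convert hpq.sub (hpn.mul_right (n + B * d)) using 1
      ring
    exact hp.not_isUnit (hnd hpn (hp.dvd_of_dvd_pow ((hp.dvd_or_dvd hcd).resolve_left hpc)))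
  · have hn : p ∣ n ^ 2 := by
      convert hpq.sub (hpd.mul_right (B * n + c * d)) using 1
      ring
    exact hp.not_isUnit (hnd (hp.dvd_of_dvd_pow hn) hpd)

theorem exists_associated_prime_pow_mul_sq {π n d B c z : R} {N : ℕ} (hπ : Prime π)
    (hc : c ∣ π ^ N) (hn : n ≠ 0) (hd : d ≠ 0) (hnd : IsRelPrime n d)
    (hz : n * d * (n ^ 2 + B * n * d + c * d ^ 2) = z ^ 2) :
    ∃ (i : ℕ) (x : R), Associated (π ^ i * x ^ 2) (n * d) := by
  have hfin : FiniteMultiplicity π (n * d) :=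
    FiniteMultiplicity.of_prime_left hπ (mul_ne_zero hn hd)
  obtain ⟨m, hm, hπm⟩ := hfin.exists_eq_pow_mul_and_not_dvd
  set i := multiplicity π (n * d)
  have hm0 : m ≠ 0 := by
    rintro rfl
    exact hπm (dvd_zero π)
  have hmπ : IsCoprime m π := (hπ.irreducible.coprime_iff_not_dvd.2 hπm).symm
  have hmc : IsRelPrime m c := (hmπ.pow_right.of_isCoprime_of_dvd_right hc).isRelPrime
  have hcop : IsCoprime m (π ^ i * (n ^ 2 + B * n * d + c * d ^ 2)) :=
    hmπ.pow_right.mul_right (isCoprime_sq_add_mul_add_mul_sq hm0 (hm ▸ dvd_mul_left m _) hnd hmc)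
  obtain ⟨x, hx⟩ := exists_associated_pow_of_mul_eq_pow' hcop (c := z) (k := 2) (by
    rw [← hz, hm]
    ring)
  exact ⟨i, x, hm ▸ hx.mul_left _⟩

theorem IsAbscissa.exists_eq_unit_mul_prime_pow_mul_sq {F : Type*} [Field F] [Algebra R F]
    [IsFractionRing R F] {π B c : R} {N : ℕ} (hπ : Prime π) (hc : c ∣ π ^ N) {t : F}
    (ht : IsAbscissa (algebraMap R F B) (algebraMap R F c) t) :
    ∃ (u : Rˣ) (i : ℕ) (β : F), t = algebraMap R F (u * π ^ i) * β ^ 2 := by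
  obtain ⟨ht0, y, hy⟩ := ht
  obtain ⟨n, ⟨d, hd0⟩, hnd, rfl⟩ := IsFractionRing.exists_reduced_fraction R t
  rw [IsFractionRing.mk'_eq_div] at ht0 hy ⊢
  dsimp only at ht0 hy hnd ⊢
  have hd : algebraMap R F d ≠ 0 := (div_ne_zero_iff.1 ht0).2
  have hz : (y * algebraMap R F d ^ 2) ^ 2 =
      algebraMap R F (n * d * (n ^ 2 + B * n * d + c * d ^ 2)) := by
    rw [mul_pow, hy]
    simp only [map_mul, map_add, map_pow]
    field_simp
  obtain ⟨z, hz'⟩ := IsIntegrallyClosed.exists_algebraMap_eq_of_isIntegral_pow two_pos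
    (hz ▸ isIntegral_algebraMap : IsIntegral R _)
  rw [← hz', ← map_pow] at hz
  obtain ⟨i, x, u, hu⟩ := exists_associated_prime_pow_mul_sq hπ hc
    (by rintro rfl; simp at ht0) (by rintro rfl; simp at hd) hnd
    (IsFractionRing.injective R F hz).symm
  refine ⟨u, i, algebraMap R F x / algebraMap R F d, ?_⟩
  have hu' := congrArg (algebraMap R F) hu
  simp only [map_mul, map_pow] at hu' ⊢
  field_simp
  linear_combination -hu'

end PrincipalIdealRing

/-- Elements that are products of the generators `selmerGen ω i` up to a square. -/
def IsSelmer {R : Type*} [CommRing R] (ω t : R) : Prop :=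
  ∃ (e : Fin 4 → ℕ) (β : R), t = (∏ i, selmerGen ω i ^ e i) * β ^ 2

namespace IsSelmer

variable {R : Type*} [CommRing R] {ω t t' : R}

theorem sq (ω β : R) : IsSelmer ω (β ^ 2) :=
  ⟨0, β, by simp⟩

theorem gen (ω : R) (i : Fin 4) : IsSelmer ω (selmerGen ω i) :=
  ⟨Pi.single i 1, 1, by simp [Pi.single_apply, pow_ite]⟩

theorem mul (ht : IsSelmer ω t) (ht' : IsSelmer ω t') : IsSelmer ω (t * t') := by
  obtain ⟨e, β, rfl⟩ := ht
  obtain ⟨e', β', rfl⟩ := ht'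
  refine ⟨e + e', β * β', ?_⟩
  simp only [Pi.add_apply, pow_add, Finset.prod_mul_distrib]
  ring

theorem pow (ht : IsSelmer ω t) : ∀ n : ℕ, IsSelmer ω (t ^ n)
  | 0 => by simpa using sq ω 1
  | n + 1 => pow_succ t n ▸ (ht.pow n).mul ht

theorem map {S : Type*} [CommRing S] (f : R →+* S) (ht : IsSelmer ω t) :
    IsSelmer (f ω) (f t) := by
  obtain ⟨e, β, rfl⟩ := ht
  refine ⟨e, f β, ?_⟩
  simp [Fin.prod_univ_four, selmerGen, map_ofNat]

end IsSelmer

section Units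

variable {R : Type*} [CommRing R] {ω : R}

/-- The unit `ω - 1` attached to a fifth root `ω` of two. -/
def unitSub (hω : ω ^ 5 = 2) : Rˣ :=
  ⟨ω - 1, 1 + ω + ω ^ 2 + ω ^ 3 + ω ^ 4, by linear_combination hω, by linear_combination hω⟩

/-- The unit `1 + ω + ω ^ 3` attached to a fifth root `ω` of two. -/
def unitAdd (hω : ω ^ 5 = 2) : Rˣ :=
  ⟨1 + ω + ω ^ 3, 1 - ω - ω ^ 2 + ω ^ 4, by linear_combination ω ^ 2 * hω,
    by linear_combination ω ^ 2 * hω⟩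

/-- The unit `(1 + ω ^ 2) ^ 5 / 5` attached to a fifth root `ω` of two. -/
def unitFive (hω : ω ^ 5 = 2) : Rˣ :=
  ⟨1 + 4 * ω + ω ^ 2 + 2 * ω ^ 3 + 2 * ω ^ 4, -3 - 6 * ω - ω ^ 2 + 4 * ω ^ 3 + 3 * ω ^ 4,
    by linear_combination (6 * ω ^ 3 + 14 * ω ^ 2 + 9 * ω + 2) * hω,
    by linear_combination (6 * ω ^ 3 + 14 * ω ^ 2 + 9 * ω + 2) * hω⟩

theorem one_add_sq_pow_five (hω : ω ^ 5 = 2) : (1 + ω ^ 2) ^ 5 = 5 * (unitFive hω : R) := by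
  simp only [unitFive]
  linear_combination (ω ^ 5 + 5 * ω ^ 3 + 10 * ω + 2) * hω

end Units

section FifthRootOfTwo

variable {K : Type*} [Field K] [NumberField K] {a : 𝓞 K}

theorem isDyadicUniformizer (ha : a ^ 5 = 2) (hK : Module.finrank ℚ K = 5) :
    IsDyadicUniformizer a where
  pow_five := ha
  prime := prime_of_norm_prime (by norm_num [norm_fifthRoot ha hK])
  dvd_or_dvd_sub_one x := by
    have hprime : Prime a := prime_of_norm_prime (by norm_num [norm_fifthRoot ha hK])
    have hP := (Ideal.span_singleton_prime hprime.ne_zero).2 hprime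
    have hbot : Ideal.span {a} ≠ ⊥ := by simpa using hprime.ne_zero
    have := hP.isMaximal hbot
    let := Ideal.Quotient.field (Ideal.span {a})
    have hfin : Finite (𝓞 K ⧸ Ideal.span {a}) := Ideal.finiteQuotientOfFreeOfNeBot _ hbot
    let := Fintype.ofFinite (𝓞 K ⧸ Ideal.span {a})
    have hcard : Fintype.card (𝓞 K ⧸ Ideal.span {a}) = 2 := by
      rw [← Nat.card_eq_fintype_card]
      change Ideal.absNorm (Ideal.span {a}) = 2
      rw [Ideal.absNorm_span_singleton, norm_fifthRoot ha hK]
      rfl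
    have hx := FiniteField.pow_card (Ideal.Quotient.mk (Ideal.span {a}) x)
    rw [hcard, ← map_pow, Ideal.Quotient.eq, Ideal.mem_span_singleton,
      show x ^ 2 - x = x * (x - 1) by ring] at hx
    exact hprime.dvd_or_dvd hx

theorem even_of_isSquare_unit_prod (ha : a ^ 5 = 2) (hK : Module.finrank ℚ K = 5)
    (e : Fin 3 → ℕ) (he : IsSquare (∏ i, ![-1, unitSub ha, unitAdd ha] i ^ e i)) (i : Fin 3) :
    Even (e i) := by
  obtain ⟨w, hw⟩ := he
  have hone : (∏ i, selmerGen a i ^ (![e 0, e 1, e 2, 0] i)) * ((w⁻¹ : (𝓞 K)ˣ) : 𝓞 K) ^ 2 = 1 := by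
    have hval : ∏ i, selmerGen a i ^ (![e 0, e 1, e 2, 0] i) = ((w * w : (𝓞 K)ˣ) : 𝓞 K) := by
      rw [← hw]
      simp [Fin.prod_univ_succ, selmerGen, unitSub, unitAdd]
    rw [hval, ← Units.val_pow_eq_pow_val, ← Units.val_mul, ← _root_.sq, inv_pow, mul_inv_cancel,
      Units.val_one]
  have heven := (isDyadicUniformizer ha hK).even_of_pow_eleven_dvd
    (by rw [hone, sub_self]; exact dvd_zero _)
  fin_cases i
  exacts [heven 0, heven 1, heven 2]

theorem isSelmer_unit (ha : a ^ 5 = 2) (hK : Module.finrank ℚ K = 5) (u : (𝓞 K)ˣ) :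
    IsSelmer a (u : 𝓞 K) := by
  obtain ⟨e, v, rfl⟩ := exists_unit_eq_prod_pow_mul_sq ha hK (even_of_isSquare_unit_prod ha hK) u
  refine ⟨![e 0, e 1, e 2, 0], v, ?_⟩
  simp [Fin.prod_univ_succ, selmerGen, unitSub, unitAdd]

theorem isSelmer_of_isAbscissa (ha : a ^ 5 = 2) (hK : Module.finrank ℚ K = 5) {B : 𝓞 K} {t : K}
    (ht : IsAbscissa (algebraMap (𝓞 K) K B) (5 * (algebraMap (𝓞 K) K a - 1) ^ 2) t) :
    IsSelmer (algebraMap (𝓞 K) K a) t := by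
  have hPID := isPrincipalIdealRing_ringOfIntegers ha hK
  have hπ : Prime (1 + a ^ 2) := prime_of_norm_prime (by norm_num [norm_one_add_sq ha hK])
  have hc : 5 * (a - 1) ^ 2 ∣ (1 + a ^ 2) ^ 5 := by
    rw [one_add_sq_pow_five ha]
    exact mul_dvd_mul_left 5 ((unitSub ha ^ 2).isUnit.dvd)
  obtain ⟨u, i, β, rfl⟩ := IsAbscissa.exists_eq_unit_mul_prime_pow_mul_sq (F := K) hπ hc
    (B := B) (by simpa [map_ofNat] using ht)
  have hselmer : IsSelmer a (u * 5 ^ i * unitFive ha ^ i : 𝓞 K) :=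
    ((isSelmer_unit ha hK u).mul ((IsSelmer.gen a 3).pow i)).mul
      ((isSelmer_unit ha hK (unitFive ha)).pow i)
  have hπ0 : algebraMap (𝓞 K) K (1 + a ^ 2) ≠ 0 :=
    (map_ne_zero_iff _ (FaithfulSMul.algebraMap_injective (𝓞 K) K)).2 hπ.ne_zero
  convert (hselmer.map (algebraMap (𝓞 K) K)).mul
    (IsSelmer.sq _ (β / algebraMap (𝓞 K) K (1 + a ^ 2) ^ (2 * i))) using 1
  rw [mul_assoc (u : 𝓞 K), ← mul_pow, ← one_add_sq_pow_five ha]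
  simp only [map_mul, map_pow]
  field_simp
  ring

end FifthRootOfTwo

/-- The outcome of a two-descent for the curves `y ^ 2 = t * (t ^ 2 + n * δ * t + 5 * δ ^ 2)` with
`n` an integer and `δ` a square multiple of `ω - 1`: the first coordinates of points are `IsSelmer`.
The square factor makes the property independent of the scaling of the curve. -/
def HasTwoDescent {R : Type*} [CommRing R] (ω : R) : Prop :=
  ∀ (n : ℤ) (c t : R), c ≠ 0 →
    IsAbscissa (n * ((ω - 1) * c ^ 2)) (5 * ((ω - 1) * c ^ 2) ^ 2) t → IsSelmer ω t

theorem hasTwoDescent_algebraMap {K : Type*} [Field K] [NumberField K] {a : 𝓞 K} (ha : a ^ 5 = 2)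
    (hK : Module.finrank ℚ K = 5) : HasTwoDescent (algebraMap (𝓞 K) K a) := by
  rintro n c t hc ⟨ht, y, hy⟩
  have hscaled : IsAbscissa (algebraMap (𝓞 K) K (n * (a - 1)))
      (5 * (algebraMap (𝓞 K) K a - 1) ^ 2) (t / c ^ 2) := by
    refine ⟨div_ne_zero ht (pow_ne_zero 2 hc), y / c ^ 3, ?_⟩
    rw [map_mul, map_intCast, map_sub, map_one]
    field_simp
    linear_combination hy
  convert (isSelmer_of_isAbscissa ha hK hscaled).mul (IsSelmer.sq _ c) using 1
  field_simp

theorem pow_dvd_or_pow_dvd_of_dvd_mul {M : Type*} [CommRing M] [IsDomain M] {p x y : M} {n : ℕ}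
    (hp : Prime p) (hadd : ¬p ∣ x + y) (h : p ^ n ∣ x * y) : p ^ n ∣ x ∨ p ^ n ∣ y := by
  by_cases hx : p ∣ x
  · exact .inl (hp.pow_dvd_of_dvd_mul_right n (fun hy => hadd (hx.add hy)) h)
  · exact .inr (hp.pow_dvd_of_dvd_mul_left n hx h)

theorem dvd_of_sq_sub_mul_add_eq_zero {A : Type*} [CommRing A] [IsDomain A] [IsIntegrallyClosed A]
    {c d u p : A} (hd : d ^ 2 - c * u * d + c ^ 2 * p = 0) : c ∣ d := by
  obtain rfl | hc := eq_or_ne c 0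
  · simpa using hd
  have hc' : algebraMap A (FractionRing A) c ≠ 0 := by simpa using hc
  have hint : IsIntegral A (algebraMap A (FractionRing A) d / algebraMap A (FractionRing A) c) := by
    refine ⟨X ^ 2 - C u * X + C p, by monicity!, ?_⟩
    have hd' := congrArg (algebraMap A (FractionRing A)) hd
    simp only [map_add, map_sub, map_mul, map_pow, map_zero] at hd'
    simp only [eval₂_add, eval₂_sub, eval₂_mul, eval₂_C, eval₂_X, eval₂_X_pow]
    field_simp
    linear_combination hd'
  obtain ⟨x, hx⟩ := IsIntegrallyClosed.algebraMap_eq_of_integral hint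
  refine ⟨x, FaithfulSMul.algebraMap_injective A (FractionRing A) ?_⟩
  rw [map_mul, hx]
  field_simp

theorem pow_eleven_dvd_first_approx_root {R : Type*} [CommRing R] {ω δ : R} (hω : ω ^ 5 = 2)
    (hδ : ω ^ 11 ∣ δ - (ω - 1) * ω ^ 2) :
    ω ^ 11 ∣ ((1 + ω ^ 2 + ω ^ 3 + ω ^ 4) ^ 2) ^ 2 -
      (1 ^ 2 - 10 * δ) * (1 + ω ^ 2 + ω ^ 3 + ω ^ 4) ^ 2 + 5 * δ ^ 2 := by
  obtain ⟨k, hk⟩ := hδ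
  obtain rfl : δ = (ω - 1) * ω ^ 2 + ω ^ 11 * k := by linear_combination hk
  refine ⟨47 + 37 * ω + 29 * ω ^ 2 + 29 * ω ^ 3 + 26 * ω ^ 4 +
    k * (10 * (1 + ω ^ 2 + ω ^ 3 + ω ^ 4) ^ 2 + 5 * (2 * (ω - 1) * ω ^ 2 + ω ^ 11 * k)), ?_⟩
  linear_combination (4 * ω ^ 2 - 6 * ω ^ 3 + 4 * ω ^ 4 - 7 * ω ^ 6 - 14 * ω ^ 7 -
    13 * ω ^ 8 - 19 * ω ^ 9 - 22 * ω ^ 10 + ω ^ 11) * hω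

theorem pow_eleven_dvd_second_approx_root {R : Type*} [CommRing R] {ω δ : R} (hω : ω ^ 5 = 2)
    (hδ : ω ^ 11 ∣ δ - (ω - 1) * ω ^ 2) :
    ω ^ 11 ∣ (-((ω - 1) * (1 + ω + ω ^ 3)) * (1 + ω ^ 2 + ω ^ 4) ^ 2) ^ 2 -
      ((1 + ω ^ 2 + ω ^ 3 + ω ^ 4) ^ 2 + 5 * δ) *
        (-((ω - 1) * (1 + ω + ω ^ 3)) * (1 + ω ^ 2 + ω ^ 4) ^ 2) + 5 * δ ^ 2 := by
  obtain ⟨k, hk⟩ := hδ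
  obtain rfl : δ = (ω - 1) * ω ^ 2 + ω ^ 11 * k := by linear_combination hk
  refine ⟨84 - 44 * ω + 44 * ω ^ 2 + 11 * ω ^ 3 - 16 * ω ^ 4 +
    k * (5 * ((ω - 1) * (1 + ω + ω ^ 3)) * (1 + ω ^ 2 + ω ^ 4) ^ 2 +
      5 * (2 * (ω - 1) * ω ^ 2 + ω ^ 11 * k)), ?_⟩
  linear_combination (-2 * ω ^ 2 + 3 * ω ^ 3 - 3 * ω ^ 4 + 6 * ω ^ 5 + 5 * ω ^ 6 -
    4 * ω ^ 7 + 19 * ω ^ 8 - 12 * ω ^ 9 + 19 * ω ^ 10 + 40 * ω ^ 11 - 27 * ω ^ 12 +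
    40 * ω ^ 13 - 23 * ω ^ 14 + 22 * ω ^ 15 - 10 * ω ^ 16 + 7 * ω ^ 17 - 2 * ω ^ 18 +
    ω ^ 19) * hω

section TwoIsogeny

/-! The two-isogeny from `y ^ 2 = t * (t ^ 2 - s * t + p)` to the curve with parameters
`(2 * s, s ^ 2 - 4 * p)` sends first coordinates `T` to squares `t` with
`T ^ 2 - (t + s) * T + p = 0`. -/

variable {A : Type*} [CommRing A] {s p t : A}

theorem IsAbscissa.exists_root [IsDomain A] [IsIntegrallyClosed A] (h2 : (2 : A) ≠ 0)
    (hab : IsAbscissa (2 * s) (s ^ 2 - 4 * p) t) (ht : IsSquare t) :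
    ∃ T, T ^ 2 - (t + s) * T + p = 0 := by
  obtain ⟨ht0, y, hy⟩ := hab
  obtain ⟨β, rfl⟩ := ht
  obtain ⟨v, rfl⟩ : β ∣ y := by
    rw [← IsIntegrallyClosed.pow_dvd_pow_iff two_ne_zero, hy, sq]
    exact dvd_mul_right _ _
  have hv : v ^ 2 = (β * β + s) ^ 2 - 4 * p :=
    mul_left_cancel₀ ht0 (by linear_combination hy)
  obtain ⟨T, hT⟩ : 2 ∣ β * β + s + v :=
    dvd_of_sq_sub_mul_add_eq_zero (u := β * β + s) (p := p) (by linear_combination hv)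
  refine ⟨T, mul_left_cancel₀ (pow_ne_zero 2 h2) ?_⟩
  linear_combination hv - (2 * T - β * β - s + v) * hT

theorem isAbscissa_of_root {T : A} (ht : IsSquare t) (hT : T ^ 2 - (t + s) * T + p = 0)
    (hT0 : T ≠ 0) : IsAbscissa (-s) p T := by
  obtain ⟨β, rfl⟩ := ht
  exact ⟨hT0, β * T, by linear_combination -T * hT⟩

end TwoIsogeny

namespace IsDyadicUniformizer

section IsLocalRing

variable {A : Type*} [CommRing A] [IsLocalRing A] {ω : A}

theorem isUnit_of_not_dvd (h : IsDyadicUniformizer ω) {x : A} (hx : ¬ω ∣ x) : IsUnit x := by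
  obtain ⟨r, hr⟩ := (h.dvd_or_dvd_sub_one x).resolve_left hx
  refine (IsLocalRing.isUnit_or_isUnit_of_add_one (b := -(ω * r))
    (by linear_combination hr)).resolve_right fun hu => ?_
  exact h.prime.not_isUnit (isUnit_of_mul_isUnit_left ((IsUnit.neg_iff _).1 hu))

theorem isUnit_selmerGen (h : IsDyadicUniformizer ω) (i : Fin 4) : IsUnit (selmerGen ω i) := by
  refine h.isUnit_of_not_dvd (h.not_dvd_of_dvd_sub_one ?_)
  fin_cases i
  · exact ⟨-ω ^ 4, by simp [selmerGen]; linear_combination h.pow_five⟩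
  · exact ⟨1 - ω ^ 4, by simp [selmerGen]; linear_combination h.pow_five⟩
  · exact ⟨1 + ω ^ 2, by simp [selmerGen]; ring⟩
  · exact ⟨2 * ω ^ 4, by simp [selmerGen]; linear_combination -2 * h.pow_five⟩

theorem isSquare_of_isSelmer [IsDomain A] (h : IsDyadicUniformizer ω) {t w : A}
    (ht : IsSelmer ω t) (hw : ¬ω ∣ w) (htw : ω ^ 11 ∣ t - w ^ 2) : IsSquare t := by
  obtain ⟨e, β, rfl⟩ := ht
  obtain ⟨s, hs⟩ := (h.isUnit_of_not_dvd hw).exists_right_inv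
  have heven := h.even_of_pow_eleven_dvd (e := e) (x := β * s) <| by
    convert htw.mul_right (s ^ 2) using 1
    linear_combination (w * s + 1) * hs
  exact (Finset.isSquare_prod _ fun i _ => (heven i).isSquare_pow _).mul (IsSquare.sq β)

theorem hasTwoDescent [IsDomain A] [IsIntegrallyClosed A] {F : Type*} [Field F] [Algebra A F]
    [IsFractionRing A F] (h : IsDyadicUniformizer ω) (hF : HasTwoDescent (algebraMap A F ω)) :
    HasTwoDescent ω := by
  intro n c t hc ht
  have hinj := IsFractionRing.injective A F
  obtain ⟨e, β, hβ⟩ := hF n (algebraMap A F c) (algebraMap A F t)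
    ((map_ne_zero_iff _ hinj).2 hc) (by simpa [map_ofNat] using ht.map hinj)
  obtain ⟨g, hg⟩ : IsUnit (∏ i, selmerGen ω i ^ e i) := by
    simp only [IsUnit.prod_iff, Finset.mem_univ, forall_true_left]
    exact fun i => (h.isUnit_selmerGen i).pow _
  have hmap : algebraMap A F g = ∏ i, selmerGen (algebraMap A F ω) i ^ e i := by
    rw [hg]
    simp [Fin.prod_univ_four, selmerGen, map_ofNat]
  have hβ' : β ^ 2 = algebraMap A F (↑g⁻¹ * t) := by
    rw [map_mul, hβ, ← hmap, ← mul_assoc, ← map_mul, Units.inv_mul, map_one, one_mul]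
  obtain ⟨x, rfl⟩ := IsIntegrallyClosed.exists_algebraMap_eq_of_isIntegral_pow two_pos
    (hβ' ▸ isIntegral_algebraMap : IsIntegral A _)
  exact ⟨e, x, hinj (by rw [hβ, ← hmap, ← hg, map_mul, map_pow])⟩

theorem exists_abscissa_of_approx_root [IsDomain A] [IsIntegrallyClosed A]
    (h : IsDyadicUniformizer ω) {s p t w₀ w : A} (ht : IsSelmer ω t)
    (hab : IsAbscissa (2 * s) (s ^ 2 - 4 * p) t) (hs : ω ∣ s) (hw₀ : ¬ω ∣ w₀)
    (htw : ω ^ 11 ∣ t - w₀ ^ 2) (hw : ¬ω ∣ w) (hq : ω ^ 11 ∣ w ^ 2 - (w₀ ^ 2 + s) * w + p) :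
    ∃ t', IsAbscissa (-s) p t' ∧ ω ^ 11 ∣ t' - w := by
  have h2 : (2 : A) ≠ 0 := h.pow_five ▸ pow_ne_zero 5 h.prime.ne_zero
  have hdvd {x : A} (hx : ω ^ 11 ∣ x) : ω ∣ x := (dvd_pow_self ω (by decide)).trans hx
  have hsq := h.isSquare_of_isSelmer ht hw₀ htw
  have hroot {T : A} (hT : T ^ 2 - (t + s) * T + p = 0) (hTw : ω ^ 11 ∣ T - w) :
      ∃ t', IsAbscissa (-s) p t' ∧ ω ^ 11 ∣ t' - w := by
    refine ⟨T, isAbscissa_of_root hsq hT ?_, hTw⟩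
    rintro rfl
    exact hw ((dvd_sub_right (dvd_zero ω)).1 (hdvd hTw))
  obtain ⟨T, hT⟩ := hab.exists_root h2 hsq
  have hsum : ¬ω ∣ (T - w) + (t + s - T - w) := by
    intro hsum
    have hrest : ω ∣ (t - w₀ ^ 2) + s - 2 * w :=
      ((hdvd htw).add hs).sub (h.dvd_two.mul_right w)
    refine hw₀ (h.prime.dvd_of_dvd_pow (n := 2) ?_)
    convert hsum.sub hrest using 1
    ring
  have hprod : ω ^ 11 ∣ (T - w) * (t + s - T - w) := by
    convert hq.sub (htw.mul_right w) using 1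
    linear_combination -hT
  rcases pow_dvd_or_pow_dvd_of_dvd_mul h.prime hsum hprod with hTw | hTw
  · exact hroot hT hTw
  · exact hroot (by linear_combination hT) hTw

theorem exists_abscissa_descent [IsDomain A] [IsIntegrallyClosed A] (h : IsDyadicUniformizer ω)
    (hdesc : HasTwoDescent ω) {c δ t w₀ w₁ w₂ : A} (hc : c ≠ 0) (hδ : δ = (ω - 1) * c ^ 2)
    (hωδ : ω ∣ δ) (hab : IsAbscissa (-5 * (4 * δ)) (5 * (4 * δ) ^ 2) t)
    (hw₀ : ¬ω ∣ w₀) (hw₁ : ¬ω ∣ w₁) (hw₂ : ¬ω ∣ w₂) (ht : ω ^ 11 ∣ t - w₀ ^ 2)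
    (h₁ : ω ^ 11 ∣ (w₁ ^ 2) ^ 2 - (w₀ ^ 2 - 10 * δ) * w₁ ^ 2 + 5 * δ ^ 2)
    (h₂ : ω ^ 11 ∣ w₂ ^ 2 - (w₁ ^ 2 + 5 * δ) * w₂ + 5 * δ ^ 2) :
    ∃ t₂, IsAbscissa (-5 * δ) (5 * δ ^ 2) t₂ ∧ ω ^ 11 ∣ t₂ - w₂ := by
  have h2 : (2 : A) ≠ 0 := h.pow_five ▸ pow_ne_zero 5 h.prime.ne_zero
  have hw₁' : ¬ω ∣ w₁ ^ 2 := fun hdvd => hw₁ (h.prime.dvd_of_dvd_pow hdvd)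
  have hsel : IsSelmer ω t := by
    refine hdesc (-5) (2 * c) t (mul_ne_zero h2 hc) ?_
    convert hab using 1 <;> (rw [hδ]; push_cast; ring)
  obtain ⟨t₁, hab₁, ht₁⟩ := h.exists_abscissa_of_approx_root (s := -(10 * δ)) (p := 5 * δ ^ 2) hsel
    (by convert hab using 1 <;> ring) (hωδ.mul_left 10).neg_right hw₀ ht hw₁' (by
      simpa [← sub_eq_add_neg] using h₁)
  have hsel₁ : IsSelmer ω t₁ := hdesc 10 c t₁ hc (by simpa [hδ] using hab₁)
  obtain ⟨t₂, hab₂, ht₂⟩ := h.exists_abscissa_of_approx_root (s := 5 * δ) (p := 5 * δ ^ 2) hsel₁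
    (by convert hab₁ using 1 <;> ring) (hωδ.mul_left 5) hw₁ ht₁ hw₂ h₂
  exact ⟨t₂, by rwa [neg_mul], ht₂⟩

end IsLocalRing

section RealEmbedding

variable {A : Type*} [CommRing A] {ω : A} {φ : A →+* ℝ}

theorem one_lt_map (h : IsDyadicUniformizer ω) (φ : A →+* ℝ) : 1 < φ ω := by
  rw [← (by decide : Odd 5).pow_lt_pow, ← map_pow, h.pow_five, map_ofNat]
  norm_num

variable [IsDomain A] [IsLocalRing A]

theorem false_of_isSelmer_abscissa (h : IsDyadicUniformizer ω) (hφ : Function.Injective φ)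
    {c t : A} (hsel : IsSelmer ω t)
    (hab : IsAbscissa (-5 * ((ω - 1) * c ^ 2)) (5 * ((ω - 1) * c ^ 2) ^ 2) t)
    (ht : ω ^ 11 ∣ t - -((ω - 1) * (1 + ω + ω ^ 3)) * (1 + ω ^ 2 + ω ^ 4) ^ 2) : False := by
  have hω5 := h.pow_five
  have hw : ω ∣ (ω - 1) * (1 + ω + ω ^ 3) * (1 + ω ^ 2 + ω ^ 4) - 1 :=
    ⟨-ω ^ 2 + ω ^ 3 - 2 * ω ^ 4 + 2 * ω ^ 5 - ω ^ 6 + ω ^ 7, by linear_combination hω5⟩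
  have hsel' : IsSelmer ω (-1 * (ω - 1) * (1 + ω + ω ^ 3) * t) :=
    (((IsSelmer.gen ω 0).mul (IsSelmer.gen ω 1)).mul (IsSelmer.gen ω 2)).mul hsel
  obtain ⟨β, hβ⟩ := h.isSquare_of_isSelmer hsel' (h.not_dvd_of_dvd_sub_one hw) <| by
    convert ht.mul_left (-1 * (ω - 1) * (1 + ω + ω ^ 3)) using 1
    ring
  have hω1 := h.one_lt_map φ
  have hpos : 0 < φ t := by
    refine IsAbscissa.pos (δ := (φ ω - 1) * φ c ^ 2)
      (mul_nonneg (sub_nonneg.2 hω1.le) (sq_nonneg _)) ?_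
    simpa [map_ofNat] using hab.map hφ
  have hneg : 0 ≤ -1 * (φ ω - 1) * (1 + φ ω + φ ω ^ 3) * φ t := by
    have hβ' := congrArg φ hβ
    simp only [map_mul, map_sub, map_neg, map_add, map_pow, map_one] at hβ'
    exact hβ' ▸ mul_self_nonneg _
  have : 0 < (φ ω - 1) * (1 + φ ω + φ ω ^ 3) * φ t :=
    have := zero_lt_one.trans hω1
    mul_pos (mul_pos (sub_pos.2 hω1) (by positivity)) hpos
  linarith

theorem not_isAbscissa_base [IsIntegrallyClosed A] (h : IsDyadicUniformizer ω)
    (hdesc : HasTwoDescent ω) (hφ : Function.Injective φ) {c δ t : A} (hc : c ≠ 0)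
    (hδ : δ = (ω - 1) * c ^ 2) (hδ₀ : ω ^ 11 ∣ δ - (ω - 1) * ω ^ 2)
    (hab : IsAbscissa (-5 * (4 * δ)) (5 * (4 * δ) ^ 2) t) : ¬ω ^ 11 ∣ t - 1 := by
  intro ht
  have hω5 := h.pow_five
  have hωδ : ω ∣ δ :=
    (dvd_sub_left ((dvd_pow_self ω two_ne_zero).mul_left (ω - 1))).1
      ((dvd_pow_self ω (by decide)).trans hδ₀)
  have hw₁ : ω ∣ (1 + ω ^ 2 + ω ^ 3 + ω ^ 4) - 1 := ⟨ω + ω ^ 2 + ω ^ 3, by ring⟩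
  have hw₂ : ω ∣ -((ω - 1) * (1 + ω + ω ^ 3)) * (1 + ω ^ 2 + ω ^ 4) ^ 2 - 1 :=
    ⟨-2 + 3 * ω - 7 * ω ^ 2 + 4 * ω ^ 3 - 4 * ω ^ 4, by
      linear_combination
        (-ω + ω ^ 2 - 4 * ω ^ 3 + 2 * ω ^ 4 - 3 * ω ^ 5 + ω ^ 6 - ω ^ 7) * hω5⟩
  -- Two two-isogenies later the first coordinate is `-(ω - 1) * (1 + ω + ω ^ 3)` times a square,
  -- and this unit is negative at the real place.
  obtain ⟨t₂, hab₂, ht₂⟩ := h.exists_abscissa_descent hdesc hc hδ hωδ hab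
    (h.not_dvd_of_dvd_sub_one (by simp)) (h.not_dvd_of_dvd_sub_one hw₁)
    (h.not_dvd_of_dvd_sub_one hw₂) (by rwa [one_pow])
    (pow_eleven_dvd_first_approx_root h.pow_five hδ₀)
    (pow_eleven_dvd_second_approx_root h.pow_five hδ₀)
  rw [hδ] at hab₂
  exact h.false_of_isSelmer_abscissa hφ (hdesc (-5) c t₂ hc (by simpa using hab₂)) hab₂ ht₂

theorem not_isAbscissa [IsIntegrallyClosed A] (h : IsDyadicUniformizer ω)
    (hdesc : HasTwoDescent ω) (hφ : Function.Injective φ) {r : A}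
    (hr : ω ^ 11 ∣ r ^ 2 - 1) (m : ℕ) {δ t : A} (hδ : δ = (ω - 1) * (2 ^ m * ω ^ 6 * r) ^ 2)
    (hab : IsAbscissa (-5 * δ) (5 * δ ^ 2) t) : ¬ω ^ 11 ∣ t - 1 := by
  have hω5 := h.pow_five
  have hω0 := h.prime.ne_zero
  have hr0 : r ≠ 0 := by
    rintro rfl
    refine h.prime.not_isUnit (isUnit_of_dvd_one ((dvd_pow_self ω (n := 11) (by decide)).trans ?_))
    simpa using hr
  induction m generalizing δ t with
  | zero =>
    refine h.not_isAbscissa_base hdesc hφ (mul_ne_zero hω0 hr0) rfl ?_ (?_ : IsAbscissa _ _ _)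
    · convert hr.mul_left ((ω - 1) * ω ^ 2) using 1
      ring
    · have h4 : 4 * ((ω - 1) * (ω * r) ^ 2) = δ := by
        rw [hδ]
        linear_combination (-(ω ^ 5 + 2) * (ω - 1) * ω ^ 2 * r ^ 2) * hω5
      rwa [h4]
  | succ m ih =>
    intro ht
    have hω1 : ¬ω ∣ 1 := h.prime.not_dvd_one
    set δ' := (ω - 1) * (2 ^ m * ω ^ 6 * r) ^ 2 with hδ'
    have hωδ' : ω ^ 11 ∣ δ' := ⟨(ω - 1) * ω * (2 ^ m * r) ^ 2, by ring⟩
    have h4 : 4 * δ' = δ := by rw [hδ, hδ']; ring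
    have h2 : (2 : A) ≠ 0 := hω5 ▸ pow_ne_zero 5 hω0
    obtain ⟨t₂, hab₂, ht₂⟩ := h.exists_abscissa_descent hdesc (w₀ := 1) (w₁ := 1) (w₂ := 1)
      (mul_ne_zero (mul_ne_zero (pow_ne_zero m h2) (pow_ne_zero 6 hω0)) hr0) hδ'
      ((dvd_pow_self ω (by decide)).trans hωδ') (h4 ▸ hab) hω1 hω1 hω1 (by simpa using ht)
      (by convert hωδ'.mul_right (10 + 5 * δ') using 1; ring)
      (by convert hωδ'.mul_right (-5 + 5 * δ') using 1; ring)
    exact ih rfl hab₂ ht₂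

end RealEmbedding

end IsDyadicUniformizer

/-- The affine points of `γ * Y ^ 2 = x ^ 4 + x ^ 3 + x ^ 2 + x + 1`, a twist of a curve of genus
one with the involution `x ↦ x⁻¹`. -/
def IsQuarticPoint {A : Type*} [CommRing A] (γ x Y : A) : Prop :=
  γ * Y ^ 2 = x ^ 4 + x ^ 3 + x ^ 2 + x + 1

section KnownPoints

variable {R : Type*} [CommRing R] {ω : R}

theorem isQuarticPoint_one (hω : ω ^ 5 = 2) :
    IsQuarticPoint (ω - 1) (ω * 1) (ω ^ 4 + ω ^ 3 + ω ^ 2 + ω + 1) := by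
  unfold IsQuarticPoint
  linear_combination (ω ^ 4 + ω ^ 3 + ω ^ 2 + ω + 1) * hω

theorem isQuarticPoint_neg_one_third (hω : ω ^ 5 = 2) {s : R} (hs : 3 * s = 1) :
    IsQuarticPoint (ω - 1) (ω * -s) (s ^ 2 * (3 * ω ^ 4 + 5 * ω ^ 3 - ω ^ 2 + 3 * ω + 5)) := by
  unfold IsQuarticPoint
  linear_combination s ^ 4 * (53 - 11 * ω - 11 * ω ^ 2 + 21 * ω ^ 3 + 9 * ω ^ 4) * hω +
    (27 * s ^ 3 + 9 * s ^ 2 + 3 * s + 1 - ω * s * (9 * s ^ 2 + 3 * s + 1) +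
      ω ^ 2 * s ^ 2 * (3 * s + 1) - ω ^ 3 * s ^ 3) * hs

theorem pow_eleven_dvd_neg_one_third (hω : ω ^ 5 = 2) {s : R} (hs : 3 * s = 1) :
    ω ^ 11 ∣ ((ω - 1) * (s ^ 2 * (3 * ω ^ 4 + 5 * ω ^ 3 - ω ^ 2 + 3 * ω + 5))) ^ 2 - 1 := by
  have hs4 : s ^ 4 * 81 = 1 := by linear_combination (27 * s ^ 3 + 9 * s ^ 2 + 3 * s + 1) * hs
  have hdvd : ω ^ 11 ∣ 4 * (ω * (1 + 2 * ω - 3 * ω ^ 2 + ω ^ 3)) *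
      (ω * (1 + 2 * ω - 3 * ω ^ 2 + ω ^ 3) + 1) - 80 := by
    refine ⟨(1 + 2 * ω - 3 * ω ^ 2 + ω ^ 3) * (ω * (1 + 2 * ω - 3 * ω ^ 2 + ω ^ 3) + 1) -
      5 * ω ^ 9, ?_⟩
    linear_combination (-(ω ^ 5 + 2) * (ω * (1 + 2 * ω - 3 * ω ^ 2 + ω ^ 3)) *
      (ω * (1 + 2 * ω - 3 * ω ^ 2 + ω ^ 3) + 1) +
        5 * (ω ^ 15 + 2 * ω ^ 10 + 4 * ω ^ 5 + 8)) * hω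
  have hval : (ω - 1) * (3 * ω ^ 4 + 5 * ω ^ 3 - ω ^ 2 + 3 * ω + 5) =
    1 + 2 * (ω * (1 + 2 * ω - 3 * ω ^ 2 + ω ^ 3)) := by linear_combination 3 * hω
  convert hdvd.mul_left (s ^ 4) using 1
  linear_combination hs4 + s ^ 4 * ((ω - 1) * (3 * ω ^ 4 + 5 * ω ^ 3 - ω ^ 2 + 3 * ω + 5) +
    1 + 2 * (ω * (1 + 2 * ω - 3 * ω ^ 2 + ω ^ 3))) * hval

end KnownPoints

theorem IsQuarticPoint.inv {F : Type*} [Field F] {γ x Y : F} (h : IsQuarticPoint γ x Y)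
    (hx : x ≠ 0) : IsQuarticPoint γ x⁻¹ (Y / x ^ 2) := by
  unfold IsQuarticPoint at h ⊢
  field_simp
  linear_combination h

theorem IsQuarticPoint.iff_eq_or_eq_neg {A : Type*} [CommRing A] [IsDomain A] {γ x Y₀ Y : A}
    (h₀ : IsQuarticPoint γ x Y₀) (hγ : γ ≠ 0) : IsQuarticPoint γ x Y ↔ Y = Y₀ ∨ Y = -Y₀ := by
  rw [IsQuarticPoint, ← h₀, mul_right_inj' hγ, sq_eq_sq_iff_eq_or_eq_neg]

theorem exists_isQuarticPoint_of_algebraMap {A F : Type*} [CommRing A] [IsIntegrallyClosed A]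
    [Field F] [Algebra A F] [IsFractionRing A F] {ω x : A} (hω : ω ^ 5 = 2) {Y : F}
    (hY : IsQuarticPoint (algebraMap A F ω - 1) (algebraMap A F x) Y) :
    ∃ y, IsQuarticPoint (ω - 1) x y := by
  unfold IsQuarticPoint at hY ⊢
  have hωF : algebraMap A F ω ^ 5 = 2 := by rw [← map_pow, hω, map_ofNat]
  have hsq : algebraMap A F ((ω ^ 4 + ω ^ 3 + ω ^ 2 + ω + 1) * (x ^ 4 + x ^ 3 + x ^ 2 + x + 1)) =
      Y ^ 2 := by
    simp only [map_mul, map_add, map_pow, map_one, ← hY]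
    linear_combination Y ^ 2 * hωF
  obtain ⟨y, rfl⟩ := IsIntegrallyClosed.exists_algebraMap_eq_of_isIntegral_pow (R := A) two_pos
    (hsq ▸ isIntegral_algebraMap)
  refine ⟨y, IsFractionRing.injective A F ?_⟩
  simpa using hY

section Quotient

variable {A : Type*} [CommRing A]

/-- `γ * quotientNumerator γ x₀ Y₀ x Y / (2 * (x - x₀) ^ 2)` is the first coordinate of the image of
`(x, Y)` under a quotient of degree two of the quartic, which is a curve
`y ^ 2 = t * (t ^ 2 - 5 * γ * t + 5 * γ ^ 2)` on which `(x₀, Y₀)` goes to infinity. -/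
def quotientNumerator (γ x₀ Y₀ x Y : A) : A :=
  (2 * x₀ ^ 2 + x₀ + 2) * (2 * x ^ 2 + x + 2) - 5 * x₀ * x + 4 * γ * Y₀ * Y

variable {γ x₀ Y₀ x Y c τ : A}

theorem isAbscissa_of_isQuarticPoint [IsDomain A] [IsIntegrallyClosed A] (h2 : (2 : A) ≠ 0)
    (h₀ : IsQuarticPoint γ x₀ Y₀) (h : IsQuarticPoint γ x Y) (hxx : x * x₀ ≠ 1)
    (hc : x - x₀ = 2 * c) (hτ : γ * quotientNumerator γ x₀ Y₀ x Y = 8 * τ) (hτ0 : τ ≠ 0) :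
    IsAbscissa (-5 * (γ * c ^ 2)) (5 * (γ * c ^ 2) ^ 2) τ := by
  set L := quotientNumerator γ x₀ Y₀ x Y with hL
  set Q := (x₀ ^ 2 - 1) * Y + Y₀ * (x ^ 2 - 1) with hQ
  have hcurve : 2 * γ * L * Q ^ 2 =
      (x * x₀ - 1) ^ 2 * (L ^ 2 - 10 * L * (x - x₀) ^ 2 + 20 * (x - x₀) ^ 4) := by
    unfold IsQuarticPoint at h h₀
    rw [hQ, hL, quotientNumerator]
    linear_combination
      2 * ((2 * x₀ ^ 2 + x₀ + 2) * (2 * x ^ 2 + x + 2) - 5 * x₀ * x + 4 * γ * Y₀ * Y) *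
        ((x₀ ^ 2 - 1) ^ 2 * h + (x ^ 2 - 1) ^ 2 * h₀) +
      16 * ((x₀ ^ 2 - 1) * (x ^ 2 - 1) - (x * x₀ - 1) ^ 2) *
        (γ * Y₀ ^ 2 * h + (x ^ 4 + x ^ 3 + x ^ 2 + x + 1) * h₀)
  have hsq : (γ * τ * Q) ^ 2 = (2 * (x * x₀ - 1)) ^ 2 *
      (τ * (τ ^ 2 + -5 * (γ * c ^ 2) * τ + 5 * (γ * c ^ 2) ^ 2)) := by
    rw [hc] at hcurve
    refine mul_left_cancel₀ (pow_ne_zero 4 h2) ?_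
    linear_combination τ * γ ^ 2 * hcurve - 2 * τ * γ ^ 2 * Q ^ 2 * hτ +
      τ * (x * x₀ - 1) ^ 2 * (γ * L + 8 * τ - 40 * γ * c ^ 2) * hτ
  obtain ⟨y, hy⟩ : 2 * (x * x₀ - 1) ∣ γ * τ * Q := by
    rw [← IsIntegrallyClosed.pow_dvd_pow_iff two_ne_zero, hsq]
    exact dvd_mul_right _ _
  refine ⟨hτ0, y, mul_left_cancel₀ (pow_ne_zero 2 (mul_ne_zero h2 (sub_ne_zero.2 hxx))) ?_⟩
  rw [← hsq, hy]
  ring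

theorem mul_quotientNumerator (h₀ : IsQuarticPoint γ x₀ Y₀) (h : IsQuarticPoint γ x Y)
    (hc : x - x₀ = 2 * c) : ∃ k, γ * quotientNumerator γ x₀ Y₀ x Y =
      8 * ((γ * Y₀) ^ 2 + c * k) - 2 * (γ * (Y - Y₀)) ^ 2 := by
  obtain rfl : x = x₀ + 2 * c := by linear_combination hc
  refine ⟨γ * (4 * x₀ ^ 3 + 3 * x₀ ^ 2 + 2 * x₀ + 1 + c * (8 * x₀ ^ 2 + 4 * x₀ + 3 +
    2 * c * (4 * x₀ + 1) + 4 * c ^ 2)), ?_⟩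
  unfold IsQuarticPoint at h h₀
  rw [quotientNumerator]
  linear_combination γ * (2 * h - 6 * h₀)

end Quotient

namespace IsDyadicUniformizer

variable {A : Type*} [CommRing A] {ω : A}

theorem pow_eleven_dvd_sub_or_dvd_add [IsDomain A] [IsIntegrallyClosed A]
    (h : IsDyadicUniformizer ω) {x₀ Y₀ x Y : A} (h₀ : IsQuarticPoint (ω - 1) x₀ Y₀)
    (hxY : IsQuarticPoint (ω - 1) x Y)
    (hY₀ : ¬ω ∣ Y₀) (hx : ω ^ 16 ∣ x - x₀) : ω ^ 11 ∣ Y - Y₀ ∨ ω ^ 11 ∣ -Y - Y₀ := by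
  have hω5 := h.pow_five
  obtain ⟨P, hP⟩ : ω ^ 16 ∣ (Y - Y₀) * (Y + Y₀) := by
    refine h.prime.pow_dvd_of_dvd_mul_left 16
      (fun hdvd => h.prime.not_dvd_one ((dvd_sub_right (dvd_refl ω)).1 hdvd)) ?_
    convert hx.mul_right (x ^ 3 + x ^ 2 * x₀ + x * x₀ ^ 2 + x₀ ^ 3 + x ^ 2 + x * x₀ + x₀ ^ 2 +
      x + x₀ + 1) using 1
    unfold IsQuarticPoint at h₀ hxY
    linear_combination hxY - h₀
  obtain ⟨e, he⟩ : ω ^ 5 ∣ Y - Y₀ :=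
    dvd_of_sq_sub_mul_add_eq_zero (u := -Y₀) (p := -(ω ^ 6 * P)) (by
      linear_combination hP + Y₀ * (Y - Y₀) * hω5)
  have hprod : ω ^ 6 ∣ e * (e + Y₀) := by
    refine ⟨P, mul_left_cancel₀ (pow_ne_zero 10 h.prime.ne_zero) ?_⟩
    rw [show Y = Y₀ + ω ^ 5 * e by linear_combination he] at hP
    linear_combination hP + ω ^ 5 * e * Y₀ * hω5
  have hsum : ¬ω ∣ e + (e + Y₀) := fun hdvd => hY₀ <| by
    convert hdvd.sub (h.dvd_two.mul_right e) using 1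
    ring
  rcases pow_dvd_or_pow_dvd_of_dvd_mul h.prime hsum hprod with ⟨d, hd⟩ | ⟨d, hd⟩
  · exact .inl ⟨d, by linear_combination he + ω ^ 5 * hd⟩
  · exact .inr ⟨-d, by linear_combination -he - ω ^ 5 * hd + Y₀ * hω5⟩

theorem exists_abscissa_of_isQuarticPoint [IsDomain A] [IsIntegrallyClosed A]
    (h : IsDyadicUniformizer ω) {x₀ Y₀ x Y c : A} (h₀ : IsQuarticPoint (ω - 1) x₀ Y₀)
    (hxY : IsQuarticPoint (ω - 1) x Y) (hx₀ : ω ∣ x₀) (hY₀ : ω ^ 11 ∣ ((ω - 1) * Y₀) ^ 2 - 1)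
    (hY : ω ^ 11 ∣ Y - Y₀) (hc : x - x₀ = 2 * c) (hωc : ω ^ 11 ∣ c) :
    ∃ t, IsAbscissa (-5 * ((ω - 1) * c ^ 2)) (5 * ((ω - 1) * c ^ 2) ^ 2) t ∧ ω ^ 11 ∣ t - 1 := by
  have h2 : (2 : A) ≠ 0 := h.pow_five ▸ pow_ne_zero 5 h.prime.ne_zero
  obtain ⟨d, hd⟩ := hY
  obtain ⟨k, hk⟩ := mul_quotientNumerator h₀ hxY hc
  let t := ((ω - 1) * Y₀) ^ 2 + c * k - ω ^ 11 * (ω * ((ω - 1) * d) ^ 2)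
  have ht : (ω - 1) * quotientNumerator (ω - 1) x₀ Y₀ x Y = 8 * t := by
    rw [hk, hd]
    linear_combination -2 * ω ^ 12 * ((ω - 1) * d) ^ 2 * (ω ^ 5 + 2) * h.pow_five
  have ht1 : ω ^ 11 ∣ t - 1 := by
    convert (hY₀.add (hωc.mul_right k)).sub (Dvd.intro (ω * ((ω - 1) * d) ^ 2) rfl) using 1
    ring
  refine ⟨t, isAbscissa_of_isQuarticPoint h2 h₀ hxY (fun hxx => ?_) hc ht (fun ht0 => ?_), ht1⟩
  · exact h.prime.not_dvd_one (hxx ▸ hx₀.mul_left x)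
  · exact h.not_dvd_of_dvd_sub_one ((dvd_pow_self ω (by decide)).trans ht1) (ht0 ▸ dvd_zero ω)

theorem not_isQuarticPoint_near [IsDomain A] [IsLocalRing A] [IsIntegrallyClosed A]
    (h : IsDyadicUniformizer ω) (hdesc : HasTwoDescent ω) {φ : A →+* ℝ}
    (hφ : Function.Injective φ) {x₀ Y₀ x r : A} (hr : ω ^ 11 ∣ r ^ 2 - 1) (m : ℕ)
    (h₀ : IsQuarticPoint (ω - 1) x₀ Y₀) (hx₀ : ω ∣ x₀)
    (hY₀ : ω ^ 11 ∣ ((ω - 1) * Y₀) ^ 2 - 1) (hx : x - x₀ = ω ^ 16 * 2 ^ m * r) (Y : A) :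
    ¬IsQuarticPoint (ω - 1) x Y := by
  intro hxY
  have hoddY₀ : ¬ω ∣ Y₀ := fun hdvd =>
    h.not_dvd_of_dvd_sub_one ((dvd_pow_self ω (by decide)).trans hY₀)
      ((hdvd.mul_left _).trans (dvd_pow_self _ two_ne_zero))
  wlog hY : ω ^ 11 ∣ Y - Y₀ generalizing Y
  · refine this (-Y) (by rwa [IsQuarticPoint, neg_sq])
      ((h.pow_eleven_dvd_sub_or_dvd_add h₀ hxY hoddY₀ ?_).resolve_left hY)
    exact ⟨2 ^ m * r, by rw [hx]; ring⟩
  obtain ⟨t, hab, ht⟩ := h.exists_abscissa_of_isQuarticPoint (c := 2 ^ (m + 1) * ω ^ 6 * r)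
    h₀ hxY hx₀ hY₀ hY
    (by linear_combination hx + (ω ^ 5 + 2) * ω ^ 6 * 2 ^ m * r * h.pow_five)
    ⟨2 ^ m * r, by linear_combination -(ω ^ 6 * 2 ^ m * r) * h.pow_five⟩
  exact h.not_isAbscissa hdesc hφ hr (m + 1) rfl hab ht

theorem not_sq_dvd_sq_sub_sub_one [IsDomain A] (h : IsDyadicUniformizer ω) (z : A) :
    ¬ω ^ 2 ∣ z ^ 2 - (ω - 1) := by
  rintro ⟨k, hk⟩
  suffices ω ∣ 1 from h.prime.not_dvd_one this
  rcases h.dvd_or_dvd_sub_one z with ⟨s, hs⟩ | ⟨s, hs⟩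
  · obtain rfl : z = ω * s := hs
    exact ⟨ω * k - ω * s ^ 2 + 1, by linear_combination hk⟩
  · obtain rfl : z = 1 + ω * s := by linear_combination hs
    refine ⟨ω ^ 3 + ω ^ 4 * s + s ^ 2 - k, mul_left_cancel₀ h.prime.ne_zero ?_⟩
    linear_combination -hk - (1 + ω * s) * h.pow_five

theorem not_isQuarticPoint_of_sq_dvd [IsDomain A] (h : IsDyadicUniformizer ω) {x : A}
    (hx : ω ^ 2 ∣ x) (Y : A) : ¬IsQuarticPoint (ω - 1) x Y := by
  intro hY
  refine h.not_sq_dvd_sq_sub_sub_one ((ω - 1) * Y)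
    ((hx.mul_right ((ω - 1) * (1 + x + x ^ 2 + x ^ 3))).trans (dvd_of_eq ?_))
  unfold IsQuarticPoint at hY
  linear_combination (1 - ω) * hY

theorem eq_one_or_eq_five_of_isQuarticPoint [IsDomain A] (h : IsDyadicUniformizer ω) {X Y : A}
    {n : Fin 8} (hn : ω ^ 10 ∣ X - (n.val : A)) (hY : IsQuarticPoint (ω - 1) (ω * X) Y) :
    n = 1 ∨ n = 5 := by
  have hω5 := h.pow_five
  have hodd : ¬ω ∣ (ω - 1) * Y := by
    refine fun hdvd => h.prime.not_dvd_one ?_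
    convert (hdvd.mul_right Y).sub (Dvd.intro (X * (1 + ω * X + (ω * X) ^ 2 + (ω * X) ^ 3)) rfl)
      using 1
    unfold IsQuarticPoint at hY
    linear_combination -hY
  obtain ⟨e₁, e₂, e₃, e₄, he⟩ := h.exists_sq_eval_ofDigits hodd
  refine Quintic.eq_one_or_eq_five_of_powDvd n e₁ e₂ e₃ e₄ (h.powDvd_of_dvd ?_)
  obtain ⟨k, hk⟩ := hn
  rw [Quintic.eval_sub, Quintic.eval_mul hω5]
  convert he.sub (Dvd.intro ((ω - 1) * k * (1 + ω * (X + n.val) + ω ^ 2 * (X ^ 2 + X * n.val +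
    n.val ^ 2) + ω ^ 3 * (X ^ 3 + X ^ 2 * n.val + X * n.val ^ 2 + n.val ^ 3))) rfl) using 1
  unfold IsQuarticPoint at hY
  simp only [Quintic.eval]
  push_cast
  linear_combination -(ω - 1) * hY - (ω - 1) * ω * (1 + ω * (X + n.val) +
    ω ^ 2 * (X ^ 2 + X * n.val + n.val ^ 2) +
    ω ^ 3 * (X ^ 3 + X ^ 2 * n.val + X * n.val ^ 2 + n.val ^ 3)) * hk

section IsLocalRing

variable [IsLocalRing A]

theorem isUnit_intCast (h : IsDyadicUniformizer ω) {d : ℤ} (hd : ¬2 ∣ d) : IsUnit (d : A) :=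
  h.isUnit_of_not_dvd (h.dvd_intCast_iff.not.2 hd)

theorem exists_eq_eight_mul_two_pow_mul (h : IsDyadicUniformizer ω) {n d : ℤ} {x : A} (hn : n ≠ 0)
    (hn8 : 8 ∣ n) (hd : ¬2 ∣ d) (hx : d * x = n) :
    ∃ (m : ℕ) (r : A), x = 8 * 2 ^ m * r ∧ ω ^ 11 ∣ r ^ 2 - 1 := by
  obtain ⟨c, rfl⟩ := hn8
  have hfin : FiniteMultiplicity 2 c :=
    Int.finiteMultiplicity_iff.2 ⟨by decide, right_ne_zero_of_mul hn⟩
  obtain ⟨c', hc, hc'⟩ := hfin.exists_eq_pow_mul_and_not_dvd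
  obtain ⟨s, hs⟩ := (h.isUnit_intCast hd).exists_right_inv
  have hodd {k : ℤ} (hk : ¬2 ∣ k) : Odd k := Int.not_even_iff_odd.1 (by rwa [even_iff_two_dvd])
  obtain ⟨j, hj⟩ : (8 : ℤ) ∣ c' ^ 2 - d ^ 2 := by
    simpa using (Int.eight_dvd_sq_sub_one_of_odd (hodd hc')).sub
      (Int.eight_dvd_sq_sub_one_of_odd (hodd hd))
  refine ⟨multiplicity 2 c, c' * s, ?_, ω ^ 4 * j * s ^ 2, ?_⟩
  · have hcA := congrArg (Int.cast : ℤ → A) hc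
    push_cast at hx hcA
    linear_combination s * hx - x * hs + 8 * s * hcA
  · have hjA := congrArg (Int.cast : ℤ → A) hj
    push_cast at hjA
    linear_combination s ^ 2 * hjA + (d * s + 1) * hs -
      j * s ^ 2 * (ω ^ 10 + 2 * ω ^ 5 + 4) * h.pow_five

variable [IsDomain A]

theorem eight_dvd_of_isQuarticPoint (h : IsDyadicUniformizer ω) {X Y : A} {n d : ℤ} (hd : ¬2 ∣ d)
    (hX : d * X = n) (hY : IsQuarticPoint (ω - 1) (ω * X) Y) : 8 ∣ n - d ∨ 8 ∣ 3 * n + d := by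
  obtain ⟨j, hj⟩ : 8 ∣ d ^ 2 - 1 := Int.eight_dvd_sq_sub_one_of_odd (by grind)
  obtain ⟨i, q, hq⟩ : ∃ (i : Fin 8) (q : ℤ), n * d = i.val + 8 * q :=
    ⟨⟨(n * d % 8).toNat, by lia⟩, n * d / 8, by lia⟩
  obtain ⟨s, hs⟩ := (h.isUnit_intCast hd).exists_right_inv
  have hi : ω ^ 10 ∣ X - (i.val : A) := by
    refine ⟨ω ^ 5 * s * (d * q - n * j), ?_⟩
    have hqA := congrArg (Int.cast : ℤ → A) hq
    have hjA := congrArg (Int.cast : ℤ → A) hj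
    push_cast at hqA hjA
    linear_combination (i.val - X) * hs + s * hX + s * d * hqA - s * n * hjA -
      s * (d * q - n * j) * (ω ^ 10 + 2 * ω ^ 5 + 4) * h.pow_five
  refine (h.eq_one_or_eq_five_of_isQuarticPoint hi hY).imp ?_ ?_
  · rintro rfl
    exact ⟨d * q - n * j, by norm_num at hq; linear_combination d * hq - n * hj⟩
  · rintro rfl
    exact ⟨3 * (d * q - n * j) + 2 * d, by
      norm_num at hq; linear_combination 3 * d * hq - 3 * n * hj⟩

variable [IsIntegrallyClosed A] {φ : A →+* ℝ}

theorem eq_or_eq_of_isQuarticPoint (h : IsDyadicUniformizer ω) (hdesc : HasTwoDescent ω)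
    (hφ : Function.Injective φ) {X Y : A} {n d : ℤ} (hd : ¬2 ∣ d)
    (hX : d * X = n) (hY : IsQuarticPoint (ω - 1) (ω * X) Y) : n = d ∨ n * 3 = -d := by
  have hω5 := h.pow_five
  refine (h.eight_dvd_of_isQuarticPoint hd hX hY).imp (fun h8 => ?_) fun h8 => ?_
  · by_contra hne
    obtain ⟨m, r, hmr, hr⟩ := h.exists_eq_eight_mul_two_pow_mul (x := X - 1) (sub_ne_zero.2 hne)
      h8 hd (by push_cast; linear_combination hX)
    refine h.not_isQuarticPoint_near hdesc hφ hr m (isQuarticPoint_one hω5) (.intro _ rfl)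
      ⟨0, ?_⟩ ?_ Y hY
    · linear_combination ω ^ 5 * hω5
    · linear_combination ω * hmr - ω * 2 ^ m * r * (ω ^ 10 + 2 * ω ^ 5 + 4) * hω5
  · by_contra hne
    obtain ⟨s, hs⟩ := (h.isUnit_intCast (d := 3) (by decide)).exists_right_inv
    push_cast at hs
    obtain ⟨m, r, hmr, hr⟩ := h.exists_eq_eight_mul_two_pow_mul (d := 3 * d) (x := X + s)
      (by lia) h8 (by lia) (by push_cast; linear_combination 3 * hX + d * hs)
    refine h.not_isQuarticPoint_near hdesc hφ hr m (isQuarticPoint_neg_one_third hω5 hs)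
      (.intro _ rfl) (pow_eleven_dvd_neg_one_third hω5 hs) ?_ Y hY
    linear_combination ω * hmr - ω * 2 ^ m * r * (ω ^ 10 + 2 * ω ^ 5 + 4) * hω5

variable {F : Type*} [Field F] [Algebra A F] [IsFractionRing A F]

theorem not_two_dvd_den_of_isQuarticPoint [CharZero F] (h : IsDyadicUniformizer ω) {X : ℚ} {Y : F}
    (hY : IsQuarticPoint (algebraMap A F ω - 1) (algebraMap A F ω * X) Y) :
    ¬2 ∣ (X.den : ℤ) := by
  rintro ⟨c, hc⟩
  have hnum : ¬2 ∣ X.num := fun hnum =>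
    Nat.not_coprime_of_dvd_of_dvd one_lt_two (Int.natCast_dvd.1 hnum) (by lia) X.reduced
  obtain ⟨s, hs⟩ := (h.isUnit_intCast hnum).exists_right_inv
  have hinv : algebraMap A F (ω ^ 4 * c * s) = (algebraMap A F ω * X)⁻¹ := by
    have hX : (X.den : F) * X = X.num := by exact_mod_cast X.den_mul_eq_num
    have hcF : (X.den : F) = 2 * c := by exact_mod_cast congrArg (Int.cast : ℤ → F) hc
    have hsF := congrArg (algebraMap A F) hs
    have hωF := congrArg (algebraMap A F) h.pow_five
    simp only [map_mul, map_pow, map_intCast, map_one, map_ofNat] at hsF hωF ⊢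
    refine eq_inv_of_mul_eq_one_left ?_
    linear_combination c * algebraMap A F s * X * hωF + algebraMap A F s * (hX - X * hcF) + hsF
  have hX0 : algebraMap A F ω * X ≠ 0 := by
    refine mul_ne_zero ((map_ne_zero_iff _ (IsFractionRing.injective A F)).2 h.prime.ne_zero)
      (Rat.cast_ne_zero.2 ?_)
    rintro rfl
    exact hnum (dvd_zero 2)
  obtain ⟨y, hy⟩ := exists_isQuarticPoint_of_algebraMap h.pow_five (hinv ▸ hY.inv hX0)
  exact h.not_isQuarticPoint_of_sq_dvd ⟨ω ^ 2 * c * s, by ring⟩ y hy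

theorem abscissa_eq_of_isQuarticPoint (h : IsDyadicUniformizer ω) (hdesc : HasTwoDescent ω)
    (φ : F →+* ℝ) {X : ℚ} {Y : F}
    (hY : IsQuarticPoint (algebraMap A F ω - 1) (algebraMap A F ω * X) Y) :
    X = 1 ∨ X = -(1 / 3) := by
  have := φ.charZero
  have hden := h.not_two_dvd_den_of_isQuarticPoint hY
  obtain ⟨s, hs⟩ := (h.isUnit_intCast hden).exists_right_inv
  have hXA : algebraMap A F (X.num * s) = X := by
    have hX : (X.den : F) * X = X.num := by exact_mod_cast X.den_mul_eq_num
    have hsF := congrArg (algebraMap A F) hs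
    simp only [map_mul, map_intCast, map_one, Int.cast_natCast, map_natCast] at hsF ⊢
    rw [← hX]
    linear_combination X * hsF
  have hYA : IsQuarticPoint (algebraMap A F ω - 1) (algebraMap A F (ω * (X.num * s))) Y := by
    rwa [map_mul, hXA]
  obtain ⟨y, hy⟩ := exists_isQuarticPoint_of_algebraMap h.pow_five hYA
  have hcases := h.eq_or_eq_of_isQuarticPoint hdesc (φ := φ.comp (algebraMap A F))
    (φ.injective.comp (IsFractionRing.injective A F)) hden (n := X.num)
    (by linear_combination X.num * hs) hy
  rw [← X.num_div_den]
  have := X.den_ne_zero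
  field_simp
  exact_mod_cast hcases

end IsLocalRing

end IsDyadicUniformizer

theorem IsDyadicUniformizer.algebraMap_of_isLocalization {R A : Type*} [CommRing R] [IsDomain R]
    [CommRing A] [Algebra R A] {ω : R} (h : IsDyadicUniformizer ω) [(Ideal.span {ω}).IsPrime]
    [IsLocalization.AtPrime A (Ideal.span {ω})] : IsDyadicUniformizer (algebraMap R A ω) where
  pow_five := by rw [← map_pow, h.pow_five, map_ofNat]
  prime := by
    have := IsLocalization.AtPrime.isLocalRing A (Ideal.span {ω})
    have hmax := IsLocalization.AtPrime.map_eq_maximalIdeal (Ideal.span {ω}) A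
    rw [Ideal.map_span, Set.image_singleton] at hmax
    have hinj := IsLocalization.injective A (Ideal.span {ω}).primeCompl_le_nonZeroDivisors
    rw [← Ideal.span_singleton_prime ((map_ne_zero_iff _ hinj).2 h.prime.ne_zero), hmax]
    infer_instance
  dvd_or_dvd_sub_one x := by
    obtain ⟨⟨n, d, hd⟩, hx⟩ := IsLocalization.surj (Ideal.span {ω}).primeCompl x
    have hunit := IsLocalization.map_units A (⟨d, hd⟩ : (Ideal.span {ω}).primeCompl)
    have hdω : ω ∣ d - 1 :=
      (h.dvd_or_dvd_sub_one d).resolve_left (Ideal.mem_span_singleton.not.1 hd)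
    refine (h.dvd_or_dvd_sub_one n).imp (fun hn => ?_) fun hn => ?_
    · rw [← hunit.dvd_mul_right, hx]
      exact map_dvd _ hn
    · rw [← hunit.dvd_mul_right, sub_mul, hx, one_mul, ← map_sub]
      exact map_dvd _ (by simpa using hn.sub hdω)

section NumberField

variable {K : Type*} [Field K] [NumberField K] {a : 𝓞 K} {X : ℚ} {Y : K}

theorem abscissa_eq_of_isLocalization {A : Type*} [CommRing A] [IsDomain A] [Algebra (𝓞 K) A]
    [(Ideal.span {a}).IsPrime] [IsLocalization.AtPrime A (Ideal.span {a})] [Algebra A K]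
    [IsFractionRing A K] [IsScalarTower (𝓞 K) A K]
    (ha : a ^ 5 = 2) (hK : Module.finrank ℚ K = 5) (φ : K →+* ℝ)
    (hY : IsQuarticPoint ((a : K) - 1) (a * X) Y) : X = 1 ∨ X = -(1 / 3) := by
  have : IsLocalRing A := IsLocalization.AtPrime.isLocalRing A (Ideal.span {a})
  have : IsIntegrallyClosed A :=
    isIntegrallyClosed_of_isLocalization A _ (Ideal.span {a}).primeCompl_le_nonZeroDivisors
  have h : IsDyadicUniformizer (algebraMap (𝓞 K) A a) :=
    (isDyadicUniformizer ha hK).algebraMap_of_isLocalization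
  have hdesc := hasTwoDescent_algebraMap ha hK
  rw [IsScalarTower.algebraMap_apply (𝓞 K) A K] at hdesc
  exact h.abscissa_eq_of_isQuarticPoint (h.hasTwoDescent hdesc) φ
    (by rwa [← IsScalarTower.algebraMap_apply])

theorem abscissa_eq_of_isQuarticPoint (ha : a ^ 5 = 2) (hK : Module.finrank ℚ K = 5)
    (φ : K →+* ℝ) (hY : IsQuarticPoint ((a : K) - 1) (a * X) Y) : X = 1 ∨ X = -(1 / 3) := by
  have hprime := (isDyadicUniformizer ha hK).prime
  have : (Ideal.span {a}).IsPrime := (Ideal.span_singleton_prime hprime.ne_zero).2 hprime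
  exact abscissa_eq_of_isLocalization (A := Localization.subalgebra.ofField K _
    (Ideal.span {a}).primeCompl_le_nonZeroDivisors) ha hK φ hY

theorem isIntegral_of_pow_five_eq_two {R L : Type*} [CommRing R] [CommRing L] [Algebra R L] {x : L}
    (hx : x ^ 5 = 2) : IsIntegral R x := by
  refine .of_pow (n := 5) (by decide) ?_
  rw [hx, ← map_ofNat (algebraMap R L) 2]
  exact isIntegral_algebraMap

theorem finrank_adjoin_fifthRoot {L : Type*} [Field L] [Algebra ℚ L] {x : L} (hx : x ^ 5 = 2) :
    Module.finrank ℚ (IntermediateField.adjoin ℚ {x}) = 5 := by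
  have hirr (b : ℚ) (hb : b ^ 5 = 2) : False :=
    pow_five_ne_neg_two_pow (k := 1) (by decide) (-b) (by linear_combination -hb)
  rw [IntermediateField.adjoin.finrank (isIntegral_of_pow_five_eq_two hx),
    minpoly_eq_X_pow_sub_C Nat.prime_five hirr (by simpa using hx), natDegree_X_pow_sub_C]

theorem abscissa_eq_of_mem_adjoin {α : ℝ} (hα : α ^ 5 = 2) {X : ℚ} {Y : ℝ}
    (hY : Y ∈ IntermediateField.adjoin ℚ {α}) (hXY : IsQuarticPoint (α - 1) (α * X) Y) :
    X = 1 ∨ X = -(1 / 3) := by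
  have hK := finrank_adjoin_fifthRoot hα
  have : NumberField (IntermediateField.adjoin ℚ {α}) :=
    { to_finiteDimensional := .of_finrank_pos (by lia) }
  let a : 𝓞 (IntermediateField.adjoin ℚ {α}) :=
    ⟨IntermediateField.AdjoinSimple.gen ℚ α, isIntegral_of_pow_five_eq_two (Subtype.ext hα)⟩
  exact abscissa_eq_of_isQuarticPoint (a := a) (RingOfIntegers.ext (Subtype.ext hα)) hK
    (algebraMap _ ℝ) (Y := ⟨Y, hY⟩) (Subtype.ext hXY)

end NumberField

/-- Lemma 5 (first curve) of the paper: with `α = ⁵√2` and `K = ℚ(α) ⊆ ℝ`, the only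
solutions of `α⁴X⁴ + α³X³ + α²X² + αX + 1 = (α-1)Y²` with `X ∈ ℚ` and `Y ∈ K` are
`(X,Y) = (1, ±(α⁴+α³+α²+α+1))` and `(X,Y) = (-1/3, ±(3α⁴+5α³-α²+3α+5)/9)`. -/
theorem chabauty_curve_C1 (α : ℝ) (hα : α ^ 5 = 2) (hαpos : 0 < α)
    (X : ℚ) (Y : ℝ) (hY : Y ∈ IntermediateField.adjoin ℚ ({α} : Set ℝ)) :
    α ^ 4 * (X : ℝ) ^ 4 + α ^ 3 * (X : ℝ) ^ 3 + α ^ 2 * (X : ℝ) ^ 2 + α * (X : ℝ) + 1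
        = (α - 1) * Y ^ 2 ↔
      (X = 1 ∧ (Y = α ^ 4 + α ^ 3 + α ^ 2 + α + 1 ∨
                Y = -(α ^ 4 + α ^ 3 + α ^ 2 + α + 1))) ∨
      (X = -(1 / 3) ∧ (Y = (3 * α ^ 4 + 5 * α ^ 3 - α ^ 2 + 3 * α + 5) / 9 ∨
                       Y = -((3 * α ^ 4 + 5 * α ^ 3 - α ^ 2 + 3 * α + 5) / 9))) := by
  have hα1 : α - 1 ≠ 0 := by
    intro h
    norm_num [sub_eq_zero.1 h] at hα
  have hone : IsQuarticPoint (α - 1) (α * (1 : ℚ)) (α ^ 4 + α ^ 3 + α ^ 2 + α + 1) := by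
    simpa only [Rat.cast_one] using isQuarticPoint_one hα
  have hthird : IsQuarticPoint (α - 1) (α * (-(1 / 3) : ℚ))
      ((3 * α ^ 4 + 5 * α ^ 3 - α ^ 2 + 3 * α + 5) / 9) := by
    convert isQuarticPoint_neg_one_third hα (s := 1 / 3) (by norm_num) using 1
    · push_cast; rfl
    · ring
  trans IsQuarticPoint (α - 1) (α * X) Y
  · rw [IsQuarticPoint, eq_comm]
    simp only [mul_pow]
  constructor
  · intro hXY
    rcases abscissa_eq_of_mem_adjoin hα hY hXY with rfl | rfl
    exacts [.inl ⟨rfl, (hone.iff_eq_or_eq_neg hα1).1 hXY⟩,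
      .inr ⟨rfl, (hthird.iff_eq_or_eq_neg hα1).1 hXY⟩]
  · rintro (⟨rfl, hY'⟩ | ⟨rfl, hY'⟩)
    exacts [(hone.iff_eq_or_eq_neg hα1).2 hY', (hthird.iff_eq_or_eq_neg hα1).2 hY']
end

section
/- Let $\alpha = \sqrt[5]{2}$ (the real fifth root of $2$) and $K = \mathbb{Q}(\alpha)$. The only solutions of the equation $\alpha^4 X^4 - \alpha^3 X^3 + \alpha^2 X^2 - \alpha X + 1 = (\alpha^4 - \alpha^3 + \alpha^2 - \alpha + 1) Y^2$ with $X \in \mathbb{Q}$ and $Y \in K$ are $(X, Y) = (1, \pm 1)$. -/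
/-!
With `δ = α⁴ - α³ + α² - α + 1`, the curve is `δ Y² = δ(αX)`, a principal homogeneous space of the
elliptic curve `y² = x (x² - 5δx + 5δ²)` trivialised by the point `(1, 1)`. Modulo `4` a solution
`X = p / r` satisfies `p ≡ r`, so its image is a point close to the origin at the prime `α` above
`2`. The square classes of the `x`-coordinates of this curve and of its `2`-isogenous curve
`y² = x (x² + 10δx + 5δ²)` are represented by units of `ℤ[α]` and the primes dividing `5δ`, because
`ℤ[α]` is the ring of integers of `K` and has class number one; a nontrivial product of these
generators is not a square modulo a small power of `α`. Hence a point close to the origin can be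
halved, and its half is still close unless the distance was minimal, a case excluded modulo `4`. So
the point is the origin and `X = 1`.
-/

open Polynomial NumberField

/-! ### Square classes -/

open scoped symmDiff in
theorem prod_mul_prod_eq_prod_symmDiff_mul_sq {ι M : Type*} [DecidableEq ι] [CommMonoid M]
    (f : ι → M) (s t : Finset ι) :
    (∏ i ∈ s, f i) * ∏ i ∈ t, f i = (∏ i ∈ s ∆ t, f i) * (∏ i ∈ s ∩ t, f i) ^ 2 := by
  have hs := Finset.prod_inter_mul_prod_sdiff s t f
  have ht := Finset.prod_inter_mul_prod_sdiff t s f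
  have hst : Disjoint (s \ t) (t \ s) := disjoint_sdiff_sdiff
  rw [← hs, ← ht, Finset.inter_comm t s, symmDiff_def, Finset.sup_eq_union,
    Finset.prod_union hst, sq]
  ac_rfl

/-- The submonoid of the elements whose class modulo squares is a product of distinct classes of
the elements `f i`. -/
def squareClassSpan {ι M : Type*} [CommMonoid M] (f : ι → M) : Submonoid M where
  carrier := {x | ∃ (s : Finset ι) (t : M), x = (∏ i ∈ s, f i) * t ^ 2}
  one_mem' := ⟨∅, 1, by simp⟩
  mul_mem' := by
    classical
    rintro _ _ ⟨s, x, rfl⟩ ⟨t, y, rfl⟩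
    refine ⟨symmDiff s t, (∏ i ∈ s ∩ t, f i) * (x * y), ?_⟩
    rw [mul_mul_mul_comm, prod_mul_prod_eq_prod_symmDiff_mul_sq, mul_assoc, ← mul_pow, ← mul_pow]

section SquareClassSpan

variable {ι M : Type*} [CommMonoid M] {f : ι → M}

theorem apply_mem_squareClassSpan (i : ι) : f i ∈ squareClassSpan f := ⟨{i}, 1, by simp⟩

theorem sq_mem_squareClassSpan (t : M) : t ^ 2 ∈ squareClassSpan f := ⟨∅, t, by simp⟩

theorem map_mem_of_mem_squareClassSpan {N F : Type*} [CommMonoid N] [FunLike F M N]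
    [MonoidHomClass F M N] {κ : Type*} {g : κ → N} (φ : F) (hφ : ∀ i, φ (f i) ∈ squareClassSpan g)
    {x : M} (hx : x ∈ squareClassSpan f) : φ x ∈ squareClassSpan g := by
  obtain ⟨s, t, rfl⟩ := hx
  rw [map_mul, map_prod, map_pow]
  exact mul_mem (prod_mem fun i _ => hφ i) (sq_mem_squareClassSpan _)

end SquareClassSpan

/-! ### The curve and its square classes -/

/-- The coefficient `δ = a⁴ - a³ + a² - a + 1` of the curve, for which `(1 + a) δ = 3` when
`a⁵ = 2`. The left-hand side of the equation of the curve is `delta (a * X)`. -/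
def delta {A : Type*} [CommRing A] (a : A) : A := a ^ 4 - a ^ 3 + a ^ 2 - a + 1

/-- The homogenisation of `delta`: the equation of the curve at `X = p / r` becomes
`delta a * y ^ 2 = quarticForm (a * p) r`. -/
def quarticForm {A : Type*} [CommRing A] (x y : A) : A :=
  x ^ 4 - x ^ 3 * y + x ^ 2 * y ^ 2 - x * y ^ 3 + y ^ 4

/-- Generators, modulo squares, of the group of `S`-units of `ℤ[⁵√2]`, where `S` consists of the
primes dividing `5δ`: three units, the prime `δ` and the prime `1 + a²` above `5`. -/
def classGen {A : Type*} [CommRing A] (a : A) : Fin 5 → A :=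
  ![-1, a - 1, a ^ 3 + a ^ 2 - 1, delta a, 1 + a ^ 2]

/-- The representative of a square class of `S`-units indexed by a set of generators. -/
def classRep {A : Type*} [CommRing A] (a : A) (s : Finset (Fin 5)) : A := ∏ i ∈ s, classGen a i

theorem mem_squareClassSpan_classGen {A : Type*} [CommRing A] {a b : A} :
    b ∈ squareClassSpan (classGen a) ↔ ∃ s t, b = classRep a s * t ^ 2 := Iff.rfl

theorem one_add_mul_delta {A : Type*} [CommRing A] {a : A} (ha : a ^ 5 = 2) :
    (1 + a) * delta a = 3 := by
  rw [delta]
  linear_combination ha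

theorem quarticForm_mul_left {A : Type*} [CommRing A] (x y : A) :
    quarticForm (x * y) y = y ^ 4 * delta x := by
  rw [quarticForm, delta]
  ring

section Map

variable {A B : Type*} [CommRing A] [CommRing B] (f : A →+* B) (a : A)

theorem map_delta : f (delta a) = delta (f a) := by
  simp only [delta, map_add, map_sub, map_pow, map_one]

theorem map_quarticForm (x y : A) : f (quarticForm x y) = quarticForm (f x) (f y) := by
  simp only [quarticForm, map_add, map_sub, map_mul, map_pow]

theorem map_classGen (i : Fin 5) : f (classGen a i) = classGen (f a) i := by
  fin_cases i <;> simp [classGen, map_delta]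

theorem map_classRep (s : Finset (Fin 5)) : f (classRep a s) = classRep (f a) s := by
  simp only [classRep, map_prod, map_classGen]

end Map

/-! ### The ring `A[t]/(t⁵ - 2)` -/

/-- The ring `A[t]/(t⁵ - 2)`, an element being stored as its coordinates with respect to
`1, t, t², t³, t⁴`, so that identities over a finite ring `A` can be decided by evaluation. -/
@[ext]
structure Quintic_s10 (A : Type*) where
  (c0 c1 c2 c3 c4 : A)

namespace Quintic_s10

instance {A : Type*} [DecidableEq A] : DecidableEq (Quintic_s10 A) :=
  fun _ _ => decidable_of_iff' _ Quintic_s10.ext_iff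

section CommRing

variable {A : Type*} [CommRing A]

instance : Zero (Quintic_s10 A) := ⟨⟨0, 0, 0, 0, 0⟩⟩

instance : One (Quintic_s10 A) := ⟨⟨1, 0, 0, 0, 0⟩⟩

instance : Add (Quintic_s10 A) :=
  ⟨fun x y => ⟨x.c0 + y.c0, x.c1 + y.c1, x.c2 + y.c2, x.c3 + y.c3, x.c4 + y.c4⟩⟩

instance : Neg (Quintic_s10 A) := ⟨fun x => ⟨-x.c0, -x.c1, -x.c2, -x.c3, -x.c4⟩⟩

instance : Mul (Quintic_s10 A) := ⟨fun x y =>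
  ⟨x.c0 * y.c0 + 2 * (x.c1 * y.c4 + x.c2 * y.c3 + x.c3 * y.c2 + x.c4 * y.c1),
    x.c0 * y.c1 + x.c1 * y.c0 + 2 * (x.c2 * y.c4 + x.c3 * y.c3 + x.c4 * y.c2),
    x.c0 * y.c2 + x.c1 * y.c1 + x.c2 * y.c0 + 2 * (x.c3 * y.c4 + x.c4 * y.c3),
    x.c0 * y.c3 + x.c1 * y.c2 + x.c2 * y.c1 + x.c3 * y.c0 + 2 * (x.c4 * y.c4),
    x.c0 * y.c4 + x.c1 * y.c3 + x.c2 * y.c2 + x.c3 * y.c1 + x.c4 * y.c0⟩⟩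

theorem zero_def : (0 : Quintic_s10 A) = ⟨0, 0, 0, 0, 0⟩ := rfl

theorem one_def : (1 : Quintic_s10 A) = ⟨1, 0, 0, 0, 0⟩ := rfl

theorem add_def (x y : Quintic_s10 A) :
    x + y = ⟨x.c0 + y.c0, x.c1 + y.c1, x.c2 + y.c2, x.c3 + y.c3, x.c4 + y.c4⟩ := rfl

theorem neg_def (x : Quintic_s10 A) : -x = ⟨-x.c0, -x.c1, -x.c2, -x.c3, -x.c4⟩ := rfl

theorem mul_def_s10 (x y : Quintic_s10 A) : x * y =
    ⟨x.c0 * y.c0 + 2 * (x.c1 * y.c4 + x.c2 * y.c3 + x.c3 * y.c2 + x.c4 * y.c1),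
      x.c0 * y.c1 + x.c1 * y.c0 + 2 * (x.c2 * y.c4 + x.c3 * y.c3 + x.c4 * y.c2),
      x.c0 * y.c2 + x.c1 * y.c1 + x.c2 * y.c0 + 2 * (x.c3 * y.c4 + x.c4 * y.c3),
      x.c0 * y.c3 + x.c1 * y.c2 + x.c2 * y.c1 + x.c3 * y.c0 + 2 * (x.c4 * y.c4),
      x.c0 * y.c4 + x.c1 * y.c3 + x.c2 * y.c2 + x.c3 * y.c1 + x.c4 * y.c0⟩ := rfl

instance : CommRing (Quintic_s10 A) :=
  .ofMinimalAxioms (by intros; simp only [add_def, add_assoc])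
    (by intros; ext <;> simp only [add_def, zero_def, zero_add])
    (by intros; ext <;> simp only [add_def, neg_def, zero_def, neg_add_cancel])
    (by intros; ext <;> simp only [mul_def_s10] <;> ring)
    (by intros; ext <;> simp only [mul_def_s10] <;> ring)
    (by intros; ext <;> simp [mul_def_s10, one_def])
    (by intros; ext <;> simp only [mul_def_s10, add_def] <;> ring)

/-- The class of `t` in `A[t]/(t⁵ - 2)`. -/
def root : Quintic_s10 A := ⟨0, 1, 0, 0, 0⟩

theorem root_pow_five : (root : Quintic_s10 A) ^ 5 = 2 := by
  have h2 : (2 : Quintic_s10 A) = 1 + 1 := one_add_one_eq_two.symm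
  ext <;> simp [pow_succ, mul_def_s10, root, h2, add_def, one_def, one_add_one_eq_two]

/-- The constants in `A[t]/(t⁵ - 2)`. -/
@[simps]
def const : A →+* Quintic_s10 A where
  toFun a := ⟨a, 0, 0, 0, 0⟩
  map_one' := rfl
  map_zero' := rfl
  map_add' _ _ := by simp [add_def]
  map_mul' _ _ := by simp [mul_def_s10]

/-- The element of `A[t]/(t⁵ - 2)` whose coordinates are the given binary digits. -/
def digits (d₀ d₁ d₂ d₃ d₄ : Bool) : Quintic_s10 A :=
  ⟨bif d₀ then 1 else 0, bif d₁ then 1 else 0, bif d₂ then 1 else 0, bif d₃ then 1 else 0,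
    bif d₄ then 1 else 0⟩

end CommRing

theorem exists_eq_bit_add_two_mul {n : ℕ} (a : ZMod n) :
    ∃ (d : Bool) (b : ZMod n), a = (bif d then 1 else 0) + 2 * b := by
  obtain ⟨m, rfl⟩ := ZMod.intCast_surjective a
  obtain ⟨b, rfl | rfl⟩ := m.even_or_odd'
  · exact ⟨false, b, by simp⟩
  · exact ⟨true, b, by simp [add_comm]⟩

theorem exists_eq_digits_add {n : ℕ} {d₀ : Bool} {x : Quintic_s10 (ZMod n)} {b₀ : ZMod n}
    (hx : x.c0 = (bif d₀ then 1 else 0) + 2 * b₀) :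
    ∃ d₁ d₂ d₃ d₄ y, x = digits d₀ d₁ d₂ d₃ d₄ + 2 * y := by
  obtain ⟨d₁, b₁, h₁⟩ := exists_eq_bit_add_two_mul x.c1
  obtain ⟨d₂, b₂, h₂⟩ := exists_eq_bit_add_two_mul x.c2
  obtain ⟨d₃, b₃, h₃⟩ := exists_eq_bit_add_two_mul x.c3
  obtain ⟨d₄, b₄, h₄⟩ := exists_eq_bit_add_two_mul x.c4
  refine ⟨d₁, d₂, d₃, d₄, ⟨b₀, b₁, b₂, b₃, b₄⟩, ?_⟩
  rw [two_mul]
  ext <;> simp only [add_def, digits, hx, h₁, h₂, h₃, h₄, two_mul]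

theorem sq_digits_add_two_mul {d₀ d₁ d₂ d₃ d₄ : Bool} (y : Quintic_s10 (ZMod 4)) :
    (digits d₀ d₁ d₂ d₃ d₄ + 2 * y) ^ 2 = digits d₀ d₁ d₂ d₃ d₄ ^ 2 := by
  have h4 : (4 : Quintic_s10 (ZMod 4)) = 0 := by decide
  linear_combination (digits d₀ d₁ d₂ d₃ d₄ * y + y ^ 2) * h4

theorem exists_sq_eq_digits_sq {d₀ : Bool} {x : Quintic_s10 (ZMod 4)} {b₀ : ZMod 4}
    (hx : x.c0 = (bif d₀ then 1 else 0) + 2 * b₀) :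
    ∃ d₁ d₂ d₃ d₄, x ^ 2 = digits d₀ d₁ d₂ d₃ d₄ ^ 2 := by
  obtain ⟨d₁, d₂, d₃, d₄, y, rfl⟩ := exists_eq_digits_add hx
  exact ⟨d₁, d₂, d₃, d₄, sq_digits_add_two_mul y⟩

theorem four_mul_root_pow_four_mul (x : Quintic_s10 (ZMod 8)) :
    4 * root ^ 4 * x = ⟨0, 0, 0, 0, 4 * x.c0⟩ := by
  have h (a : ZMod 8) : 2 * (4 * a) = 0 := by revert a; decide
  have h4 : (4 * root ^ 4 : Quintic_s10 (ZMod 8)) = ⟨0, 0, 0, 0, 4⟩ := by decide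
  rw [h4]
  ext <;> simp [mul_def_s10, h]

theorem exists_root_pow_four_mul_sq_eq {x : Quintic_s10 (ZMod 8)} {b₀ : ZMod 8}
    (hx : x.c0 = 1 + 2 * b₀) :
    ∃ d₁ d₂ d₃ d₄, root ^ 4 * x ^ 2 = root ^ 4 * digits true d₁ d₂ d₃ d₄ ^ 2 := by
  obtain ⟨d₁, d₂, d₃, d₄, y, rfl⟩ := exists_eq_digits_add (d₀ := true) hx
  refine ⟨d₁, d₂, d₃, d₄, ?_⟩
  have hc0 (a b : ZMod 8) : 4 * (a * (1 + a) + 2 * b) = 0 := by revert a b; decide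
  have h : 4 * root ^ 4 * (y * (digits true d₁ d₂ d₃ d₄ + y)) = 0 := by
    rw [four_mul_root_pow_four_mul, mul_def_s10, add_def]
    simp only [digits, cond_true, hc0]
    rfl
  linear_combination h

theorem root_mul_digits_sq : ∀ d₀ d₁ d₂ d₃ d₄ : Bool,
    (root * digits d₀ d₁ d₂ d₃ d₄ : Quintic_s10 (ZMod 4)) ^ 2 = digits false d₀ d₁ d₂ d₃ ^ 2 := by
  decide

theorem isUnit_one_add_root_mul {k : ℕ} (x : Quintic_s10 (ZMod (2 ^ k))) :
    IsUnit (1 + root * x) := by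
  have hroot : IsNilpotent (root : Quintic_s10 (ZMod (2 ^ k))) := by
    refine ⟨5 * k, ?_⟩
    rw [pow_mul, root_pow_five, ← map_ofNat const, ← map_pow]
    have : (2 : ZMod (2 ^ k)) ^ k = 0 := by exact_mod_cast ZMod.natCast_self (2 ^ k)
    rw [this, map_zero]
  exact ((Commute.all root x).isNilpotent_mul_right hroot).isUnit_one_add

theorem exists_c0_eq_of_isUnit {n : ℕ} (hn : 2 ∣ n) {x : Quintic_s10 (ZMod n)} (hx : IsUnit x) :
    ∃ b, x.c0 = 1 + 2 * b := by
  obtain ⟨_ | _, b, hb⟩ := exists_eq_bit_add_two_mul x.c0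
  · obtain ⟨y, hy⟩ := hx.exists_right_inv
    have h : x.c0 * y.c0 + 2 * (x.c1 * y.c4 + x.c2 * y.c3 + x.c3 * y.c2 + x.c4 * y.c1) = 1 :=
      congrArg Quintic_s10.c0 hy
    have h₂ := congrArg (ZMod.castHom hn (ZMod 2)) h
    rw [hb, cond_false, zero_add, mul_assoc, ← mul_add, map_mul, map_ofNat, map_one,
      show (2 : ZMod 2) = 0 from rfl, zero_mul] at h₂
    exact absurd h₂ zero_ne_one
  · exact ⟨b, hb⟩

set_option maxRecDepth 100000 in
theorem eq_empty_of_root_pow_four_mul_classRep_eq : ∀ (s : Finset (Fin 5)) (d₁ d₂ d₃ d₄ : Bool),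
    root ^ 4 * classRep root s = root ^ 4 * (digits true d₁ d₂ d₃ d₄ : Quintic_s10 (ZMod 8)) ^ 2 →
      s = ∅ := by
  decide +kernel

set_option maxRecDepth 100000 in
theorem classRep_quadratic_ne : ∀ (s : Finset (Fin 5)) (d₁ d₂ d₃ d₄ e₂ e₃ e₄ : Bool),
    (classRep root s * digits true d₁ d₂ d₃ d₄ ^ 2) ^ 2 +
        (delta root * digits false true e₂ e₃ e₄ ^ 2) ^ 2 ≠
      classRep root s * digits true d₁ d₂ d₃ d₄ ^ 2 *
        (1 + (delta root * digits false true e₂ e₃ e₄ ^ 2 : Quintic_s10 (ZMod 4))) := by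
  decide +kernel

set_option maxRecDepth 100000 in
theorem eq_or_two_mul_eq_zero_of_delta_mul_sq_eq : ∀ (d₀ d₁ d₂ d₃ d₄ : Bool) (p r : ZMod 4),
    delta root * digits d₀ d₁ d₂ d₃ d₄ ^ 2 = quarticForm (root * const p) (const r) →
      p = r ∨ 2 * p = 0 ∧ 2 * r = 0 := by
  decide +kernel

end Quintic_s10

/-! ### Descent at the prime above `2` -/

theorem sq_mul_inv_eq_of_quadratic {R : Type*} [CommRing R] (g : Rˣ) {c k e z : R}
    (h : (g : R) ^ 4 + c * e ^ 2 * g ^ 2 + k * e ^ 4 = g ^ 2 * z ^ 2) :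
    (z * ↑g⁻¹) ^ 2 = 1 + c * (e * ↑g⁻¹) ^ 2 + k * (e * ↑g⁻¹) ^ 4 := by
  have hg : (g : R) * ↑g⁻¹ = 1 := g.mul_inv
  linear_combination -(↑g⁻¹ : R) ^ 4 * h + (g * ↑g⁻¹ + 1) *
    ((g : R) ^ 2 * ↑g⁻¹ ^ 2 + 1 + c * e ^ 2 * ↑g⁻¹ ^ 2 - z ^ 2 * ↑g⁻¹ ^ 2) * hg

/-- The point `(u, w)` of `w² δ = delta u` goes to `x = δ N / (u - a)²` on the elliptic curve
`y² = x (x² - 5 δ x + 5 δ²)`, whose origin is the image of `(a, 1)`. -/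
theorem quartic_identity {R : Type*} [CommRing R] {a u w N : R}
    (h : delta a * w ^ 2 = delta u)
    (hN : N = (2 * a ^ 2 + 2 - a) * (u ^ 2 + 1) - (a + 1) ^ 2 * u + 2 * delta a * w) :
    (a * u - 1) ^ 2 * (N ^ 2 - 5 * (u - a) ^ 2 * N + 5 * (u - a) ^ 4) =
      ((a ^ 2 - 1) * w + u ^ 2 - 1) ^ 2 * N * delta a := by
  unfold delta at *
  subst hN
  linear_combination (-2 * a ^ 8 * w + 2 * a ^ 7 * w + 2 * a ^ 6 * w - 2 * a ^ 5 * w -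
    2 * a ^ 3 * w + 2 * a ^ 2 * w + 2 * a * w - 2 * w - 2 * a ^ 6 * u ^ 2 + a ^ 5 * u ^ 2 +
    6 * a ^ 4 * u ^ 2 - 6 * a ^ 3 * u ^ 2 + 6 * a ^ 2 * u ^ 2 - 3 * a * u ^ 2 + 2 * u ^ 2 +
    a ^ 6 * u - 6 * a ^ 5 * u + 7 * a ^ 4 * u - 12 * a ^ 3 * u + 7 * a ^ 2 * u - 6 * a * u + u +
    2 * a ^ 6 - 3 * a ^ 5 + 6 * a ^ 4 - 6 * a ^ 3 + 6 * a ^ 2 + a - 2) * h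

theorem dvd_of_sq_add_mul_add_eq_zero {R : Type*} [CommRing R] [IsDomain R] [ValuationRing R]
    {t g b c : R} (h : g ^ 2 + t * b * g + t ^ 2 * c = 0) : t ∣ g := by
  obtain htg | ⟨k, rfl⟩ := ValuationRing.dvd_total t g
  · exact htg
  obtain hg | hk := mul_eq_zero.1 (show g ^ 2 * (1 + k * (b + k * c)) = 0 by linear_combination h)
  · rw [pow_eq_zero_iff two_ne_zero |>.1 hg]
    exact dvd_zero _
  · have hk : IsUnit k := .of_mul_eq_one (-(b + k * c)) (by linear_combination -hk)
    exact hk.mul_right_dvd.2 dvd_rfl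

/-- An irreducible element `ϖ` with `ϖ⁵ = 2` of a ring whose quotients modulo `2 ^ k` map to those
of `ℤ[t]/(t⁵ - 2)`. The example is the image of `⁵√2` in the localization of `ℤ[⁵√2]` above `2`. -/
structure IsFifthRootUniformizer {R : Type*} [CommRing R] (ϖ : R) : Prop where
  pow_five : ϖ ^ 5 = 2
  irreducible : Irreducible ϖ
  exists_reduction : ∀ k : ℕ, ∃ ρ : R →+* Quintic_s10 (ZMod (2 ^ k)), ρ ϖ = Quintic_s10.root

/-- The global input of the descent: for each of the elliptic curves
`y² = x (x² + a δ x + 5 δ²)`, with `δ = delta ϖ` and `a` an integer, the points with `x = b / c²`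
and `b` a unit lie in the square classes of the `S`-units `classRep ϖ s`. -/
def HasSUnitSquareClasses {R : Type*} [CommRing R] (ϖ : R) : Prop :=
  ∀ (a : ℤ) (b c z : R), IsUnit b →
    b ^ 2 + a * delta ϖ * b * c ^ 2 + 5 * delta ϖ ^ 2 * c ^ 4 = b * z ^ 2 →
      b ∈ squareClassSpan (classGen ϖ)

namespace IsFifthRootUniformizer

variable {R : Type*} [CommRing R] {ϖ : R}

protected theorem two_ne_zero [IsDomain R] (h : IsFifthRootUniformizer ϖ) : (2 : R) ≠ 0 :=
  h.pow_five ▸ pow_ne_zero 5 h.irreducible.ne_zero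

theorem intCast_eq_of_delta_mul_sq_eq (h : IsFifthRootUniformizer ϖ) {p r : ℤ} {w : R}
    (hw : delta ϖ * w ^ 2 = quarticForm (ϖ * p) r) :
    (p : ZMod 4) = r ∨ 2 * (p : ZMod 4) = 0 ∧ 2 * (r : ZMod 4) = 0 := by
  obtain ⟨ρ, hρ⟩ := h.exists_reduction 2
  obtain ⟨d₀, b₀, hb₀⟩ := Quintic_s10.exists_eq_bit_add_two_mul (ρ w).c0
  obtain ⟨d₁, d₂, d₃, d₄, hd⟩ := Quintic_s10.exists_sq_eq_digits_sq hb₀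
  refine Quintic_s10.eq_or_two_mul_eq_zero_of_delta_mul_sq_eq d₀ d₁ d₂ d₃ d₄ p r ?_
  simpa only [map_mul, map_pow, map_delta, map_quarticForm, map_intCast, hρ, hd]
    using congrArg ρ hw

theorem four_dvd_sub_and_odd (h : IsFifthRootUniformizer ϖ) {p r : ℤ} (hpr : IsCoprime p r) {w : R}
    (hw : delta ϖ * w ^ 2 = quarticForm (ϖ * p) r) : 4 ∣ p - r ∧ Odd r := by
  have hnot : ¬ (2 ∣ p ∧ 2 ∣ r) := fun ⟨hp, hr⟩ =>
    absurd (hpr.isUnit_of_dvd' hp hr) (by decide)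
  have hmod := h.intCast_eq_of_delta_mul_sq_eq hw
  have hzero (n : ℤ) : (n : ZMod 4) = 0 ↔ 4 ∣ n := ZMod.intCast_zmod_eq_zero_iff_dvd n 4
  rw [← sub_eq_zero] at hmod
  norm_cast at hmod
  rw [hzero, hzero, hzero] at hmod
  rw [← Int.not_even_iff_odd, even_iff_two_dvd]
  omega

theorem sq_sub_add_ne (h : IsFifthRootUniformizer ϖ) (hS : HasSUnitSquareClasses ϖ) {b v : R}
    (hb : IsUnit b) (hv : IsUnit v) :
    b ^ 2 - 5 * delta ϖ * b * (ϖ * v) ^ 2 + 5 * delta ϖ ^ 2 * (ϖ * v) ^ 4 ≠ b := by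
  intro hbv
  obtain ⟨s, t, rfl⟩ := mem_squareClassSpan_classGen.1 <|
    hS (-5) b (ϖ * v) 1 hb (by push_cast; linear_combination hbv)
  have ht : IsUnit t := (isUnit_pow_iff two_ne_zero).1 (isUnit_of_mul_isUnit_right hb)
  obtain ⟨ρ, hρ⟩ := h.exists_reduction 2
  obtain ⟨b₀, hb₀⟩ := Quintic_s10.exists_c0_eq_of_isUnit (by norm_num) (ht.map ρ)
  obtain ⟨c₀, hc₀⟩ := Quintic_s10.exists_c0_eq_of_isUnit (by norm_num) (hv.map ρ)
  obtain ⟨d₁, d₂, d₃, d₄, hd⟩ := Quintic_s10.exists_sq_eq_digits_sq (d₀ := true) hb₀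
  obtain ⟨e₁, e₂, e₃, e₄, y, hy⟩ := Quintic_s10.exists_eq_digits_add (d₀ := true) hc₀
  refine Quintic_s10.classRep_quadratic_ne s d₁ d₂ d₃ d₄ e₁ e₂ e₃ ?_
  have he : (Quintic_s10.root * ρ v) ^ 2 = Quintic_s10.digits false true e₁ e₂ e₃ ^ 2 := by
    rw [← Quintic_s10.root_mul_digits_sq true e₁ e₂ e₃ e₄, mul_pow, mul_pow, hy,
      Quintic_s10.sq_digits_add_two_mul]
  have h4 : (4 : Quintic_s10 (ZMod 4)) = 0 := by decide
  have hρb := congrArg ρ hbv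
  simp only [map_add, map_sub, map_mul, map_pow, map_ofNat, map_classRep, map_delta, hρ] at hρb
  rw [← hd, ← he]
  linear_combination hρb +
    delta Quintic_s10.root * (Quintic_s10.root * ρ v) ^ 2 *
      (classRep Quintic_s10.root s * ρ t ^ 2 - delta Quintic_s10.root * (Quintic_s10.root * ρ v) ^ 2) * h4

variable [IsDomain R] [ValuationRing R]

theorem dvd_of_not_isUnit (h : IsFifthRootUniformizer ϖ) {x : R} (hx : ¬ IsUnit x) : ϖ ∣ x :=
  (ValuationRing.dvd_total ϖ x).elim id fun hxϖ =>
    ((h.irreducible.dvd_iff.1 hxϖ).resolve_left hx).dvd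

theorem isUnit_add_mul (h : IsFifthRootUniformizer ϖ) {x : R} (hx : IsUnit x) (z : R) :
    IsUnit (x + ϖ * z) := by
  rw [← add_neg_cancel_right x (ϖ * z)] at hx
  exact (IsLocalRing.isUnit_or_isUnit_of_isUnit_add hx).resolve_right fun hz =>
    h.irreducible.not_isUnit (isUnit_of_mul_isUnit_left (IsUnit.neg_iff _ |>.1 hz))

theorem isUnit_iff_dvd_sub_one (h : IsFifthRootUniformizer ϖ) {x : R} :
    IsUnit x ↔ ϖ ∣ x - 1 := by
  refine ⟨fun hx => h.dvd_of_not_isUnit fun hx₁ => ?_, fun ⟨y, hy⟩ => ?_⟩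
  · obtain ⟨ρ, -⟩ := h.exists_reduction 1
    obtain ⟨b, hb⟩ := Quintic_s10.exists_c0_eq_of_isUnit (dvd_refl 2) (hx.map ρ)
    obtain ⟨c, hc⟩ := Quintic_s10.exists_c0_eq_of_isUnit (dvd_refl 2) (hx₁.map ρ)
    have hρ : (ρ x).c0 = (ρ (x - 1)).c0 + 1 :=
      congrArg Quintic_s10.c0 (by rw [map_sub, map_one, sub_add_cancel] : ρ x = ρ (x - 1) + 1)
    rw [hb, hc] at hρ
    clear hb hc
    revert b c
    decide
  · rw [← sub_add_cancel x 1, hy, add_comm]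
    exact h.isUnit_add_mul isUnit_one y

theorem isUnit_delta (h : IsFifthRootUniformizer ϖ) : IsUnit (delta ϖ) :=
  h.isUnit_iff_dvd_sub_one.2 ⟨ϖ ^ 3 - ϖ ^ 2 + ϖ - 1, by rw [delta]; ring⟩

theorem isUnit_intCast (h : IsFifthRootUniformizer ϖ) {n : ℤ} (hn : Odd n) :
    IsUnit (n : R) := by
  obtain ⟨m, rfl⟩ := hn
  refine h.isUnit_iff_dvd_sub_one.2 ⟨ϖ ^ 4 * m, ?_⟩
  push_cast
  rw [← h.pow_five]
  ring

theorem exists_eq_sq_of_dvd_sub_sq (h : IsFifthRootUniformizer ϖ) (hS : HasSUnitSquareClasses ϖ)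
    {a : ℤ} {b c z u : R} (hb : IsUnit b) (hbu : ϖ ^ 11 ∣ b - u ^ 2)
    (hbz : b ^ 2 + a * delta ϖ * b * c ^ 2 + 5 * delta ϖ ^ 2 * c ^ 4 = b * z ^ 2) :
    ∃ t : Rˣ, b = t ^ 2 := by
  obtain ⟨s, t, rfl⟩ := mem_squareClassSpan_classGen.1 (hS a b c z hb hbz)
  obtain ⟨t, rfl⟩ := (isUnit_pow_iff two_ne_zero).1 (isUnit_of_mul_isUnit_right hb)
  have hu : IsUnit u := (isUnit_pow_iff two_ne_zero).1 <| by
    obtain ⟨y, hy⟩ := hbu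
    have := h.isUnit_add_mul hb (-(ϖ ^ 10 * y))
    rwa [show classRep ϖ s * t ^ 2 + ϖ * -(ϖ ^ 10 * y) = u ^ 2 by linear_combination hy] at this
  have hsv : ϖ ^ 11 ∣ classRep ϖ s - (u * ↑t⁻¹) ^ 2 := by
    have ht : (t : R) * ↑t⁻¹ = 1 := t.mul_inv
    convert hbu.mul_right (↑t⁻¹ ^ 2) using 1
    linear_combination -classRep ϖ s * (t * ↑t⁻¹ + 1) * ht
  obtain ⟨ρ, hρ⟩ := h.exists_reduction 3
  obtain ⟨b₀, hb₀⟩ := Quintic_s10.exists_c0_eq_of_isUnit (by norm_num) ((hu.mul t⁻¹.isUnit).map ρ)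
  obtain ⟨d₁, d₂, d₃, d₄, hd⟩ := Quintic_s10.exists_root_pow_four_mul_sq_eq hb₀
  have hroot : (Quintic_s10.root : Quintic_s10 (ZMod 8)) ^ 15 = 0 := by decide
  obtain rfl : s = ∅ := by
    refine Quintic_s10.eq_empty_of_root_pow_four_mul_classRep_eq s d₁ d₂ d₃ d₄ (Eq.trans ?_ hd)
    obtain ⟨y, hy⟩ := hsv
    have := congrArg ρ hy
    rw [map_mul, map_sub, map_pow, map_pow, map_classRep, hρ] at this
    linear_combination Quintic_s10.root ^ 4 * this + ρ y * hroot
  exact ⟨t, by rw [classRep, Finset.prod_empty, one_mul]⟩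

/-- The point of the isogenous curve `y² = x (x² + 10 δ x + 5 δ²)` with `x = 1 / e²` is the image
under the `2`-isogeny of the point with `x = b / e²`. -/
theorem exists_isUnit_root (h : IsFifthRootUniformizer ϖ) {e f : R} (he : ϖ ∣ e)
    (hf : f ^ 2 = 1 + 10 * delta ϖ * e ^ 2 + 5 * delta ϖ ^ 2 * e ^ 4) :
    ∃ b, IsUnit b ∧ b ^ 2 - 5 * delta ϖ * b * e ^ 2 + 5 * delta ϖ ^ 2 * e ^ 4 = b := by
  obtain ⟨z, rfl⟩ := he
  obtain ⟨b, hb⟩ : 2 ∣ 1 + f + 5 * delta ϖ * (ϖ * z) ^ 2 :=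
    dvd_of_sq_add_mul_add_eq_zero (b := -(1 + 5 * delta ϖ * (ϖ * z) ^ 2))
      (c := 5 * delta ϖ ^ 2 * (ϖ * z) ^ 4) (by linear_combination hf)
  have hbb : b ^ 2 - 5 * delta ϖ * b * (ϖ * z) ^ 2 + 5 * delta ϖ ^ 2 * (ϖ * z) ^ 4 = b := by
    refine mul_left_cancel₀ (pow_ne_zero 2 h.two_ne_zero) ?_
    linear_combination hf - (2 * b + f - 1 - 5 * delta ϖ * (ϖ * z) ^ 2) * hb
  have hsum : IsUnit (b + (1 + ϖ * (5 * delta ϖ * ϖ * z ^ 2) - b)) := by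
    rw [add_sub_cancel]
    exact h.isUnit_add_mul isUnit_one _
  obtain hu | hu := IsLocalRing.isUnit_or_isUnit_of_isUnit_add hsum
  · exact ⟨b, hu, hbb⟩
  · exact ⟨_, hu, by linear_combination hbb⟩

/-- By `hf`, the element `1 - 5 δ c² + 5 δ² c⁴`, with `c = 2 e`, is the square of `2 f - 1`;
the square class of `f - 5 δ e²` is the obstruction to halving the point with `x = 1 / c²`. -/
theorem exists_sq_eq_of_quadratic (h : IsFifthRootUniformizer ϖ) (hS : HasSUnitSquareClasses ϖ)
    {e f : R} (he : ϖ ∣ e) (hf : f ^ 2 - f = -5 * delta ϖ * e ^ 2 + 20 * delta ϖ ^ 2 * e ^ 4) :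
    ∃ (g : Rˣ) (f' : R),
      f' ^ 2 = 1 + 10 * delta ϖ * (e * g) ^ 2 + 5 * delta ϖ ^ 2 * (e * g) ^ 4 := by
  obtain ⟨z, rfl⟩ := he
  wlog hu : IsUnit f generalizing f
  · have hsum : IsUnit (f + (1 - f)) := by
      rw [add_sub_cancel]
      exact isUnit_one
    exact this (f := 1 - f) (by linear_combination hf)
      ((IsLocalRing.isUnit_or_isUnit_of_isUnit_add hsum).resolve_left hu)
  have hb : IsUnit (f - 5 * delta ϖ * (ϖ * z) ^ 2) := by
    convert h.isUnit_add_mul hu (-(5 * delta ϖ * ϖ * z ^ 2)) using 1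
    ring
  obtain ⟨g, hg⟩ := h.exists_eq_sq_of_dvd_sub_sq hS (a := 10) (c := ϖ * z) (z := 1) (u := f) hb
    ⟨-5 * delta ϖ ^ 2 * ϖ ^ 3 * z ^ 4, by
      linear_combination -hf + 5 * delta ϖ ^ 2 * ϖ ^ 4 * z ^ 4 * (ϖ ^ 5 + 2) * h.pow_five⟩
    (by push_cast; linear_combination hf)
  refine ⟨g⁻¹, 1 * ↑g⁻¹, sq_mul_inv_eq_of_quadratic g ?_⟩
  linear_combination hf - (g ^ 2 + f + 5 * delta ϖ * (ϖ * z) ^ 2 - 1) * hg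

theorem exists_quadratic_of_quartic (h : IsFifthRootUniformizer ϖ)
    (hS : HasSUnitSquareClasses ϖ) (j : ℕ) {b v z : R} (hb : IsUnit b) (hv : IsUnit v)
    (hbz : b ^ 2 - 5 * delta ϖ * b * (ϖ ^ (5 * (j + 1) + 1) * v) ^ 2 +
      5 * delta ϖ ^ 2 * (ϖ ^ (5 * (j + 1) + 1) * v) ^ 4 = b * z ^ 2) :
    ∃ v' f, IsUnit v' ∧ f ^ 2 - f = -5 * delta ϖ * (ϖ ^ (5 * j + 1) * v') ^ 2 +
      20 * delta ϖ ^ 2 * (ϖ ^ (5 * j + 1) * v') ^ 4 := by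
  obtain ⟨b, rfl⟩ := hb
  have hbb : (b : R) * ↑b⁻¹ = 1 := b.mul_inv
  obtain ⟨t, ht⟩ := h.exists_eq_sq_of_dvd_sub_sq hS (a := -5) (c := ϖ ^ (5 * (j + 1) + 1) * v)
    (z := z) (u := z) b.isUnit
    ⟨↑b⁻¹ * ϖ * (5 * delta ϖ * b * (ϖ ^ (5 * j) * v) ^ 2 -
      5 * delta ϖ ^ 2 * (ϖ ^ (5 * j) * v) ^ 4 * ϖ ^ 12), by
      linear_combination ↑b⁻¹ * hbz - (b - z ^ 2) * hbb⟩
    (by push_cast; linear_combination hbz)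
  have hc : ϖ ^ (5 * (j + 1) + 1) * v * ↑t⁻¹ = 2 * (ϖ ^ (5 * j + 1) * (v * ↑t⁻¹)) := by
    rw [← h.pow_five]
    ring
  have hw : (z * ↑t⁻¹) ^ 2 = 1 - 20 * delta ϖ * (ϖ ^ (5 * j + 1) * (v * ↑t⁻¹)) ^ 2 +
      80 * delta ϖ ^ 2 * (ϖ ^ (5 * j + 1) * (v * ↑t⁻¹)) ^ 4 := by
    have := sq_mul_inv_eq_of_quadratic t (c := -5 * delta ϖ) (k := 5 * delta ϖ ^ 2)
      (e := ϖ ^ (5 * (j + 1) + 1) * v) (z := z) (by rw [ht] at hbz; linear_combination hbz)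
    rw [hc] at this
    linear_combination this
  generalize z * ↑t⁻¹ = w at hw
  have hvt : IsUnit (v * ↑t⁻¹) := hv.mul t⁻¹.isUnit
  generalize v * ↑t⁻¹ = v' at hw hvt
  obtain ⟨f, hf⟩ : 2 ∣ w + 1 :=
    dvd_of_sq_add_mul_add_eq_zero (b := -1) (c := 5 * delta ϖ * (ϖ ^ (5 * j + 1) * v') ^ 2 -
      20 * delta ϖ ^ 2 * (ϖ ^ (5 * j + 1) * v') ^ 4) (by linear_combination hw)
  refine ⟨v', f, hvt, mul_left_cancel₀ (pow_ne_zero 2 h.two_ne_zero) ?_⟩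
  linear_combination hw - (w - 1 + 2 * f) * hf

/-- The descent: halving the point with `x = 1 / (2 e)²` divides `e` by `2 = ϖ⁵`, up to a unit. -/
theorem quadratic_ne (h : IsFifthRootUniformizer ϖ) (hS : HasSUnitSquareClasses ϖ) (j : ℕ)
    {v : R} (hv : IsUnit v) (f : R) :
    f ^ 2 - f ≠ -5 * delta ϖ * (ϖ ^ (5 * j + 1) * v) ^ 2 +
      20 * delta ϖ ^ 2 * (ϖ ^ (5 * j + 1) * v) ^ 4 := by
  induction j generalizing v f with
  | zero =>
    rw [mul_zero, zero_add, pow_one]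
    intro hf
    obtain ⟨g, f', hf'⟩ := h.exists_sq_eq_of_quadratic hS (dvd_mul_right ϖ v) hf
    rw [mul_assoc ϖ] at hf'
    obtain ⟨b, hb, hbb⟩ := h.exists_isUnit_root (dvd_mul_right ϖ _) hf'
    exact h.sq_sub_add_ne hS hb (hv.mul g.isUnit) hbb
  | succ j ih =>
    intro hf
    have hdvd (x : R) : ϖ ∣ ϖ ^ (5 * (j + 1) + 1) * x :=
      (dvd_pow_self ϖ (Nat.succ_ne_zero _)).mul_right x
    obtain ⟨g, f', hf'⟩ := h.exists_sq_eq_of_quadratic hS (hdvd v) hf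
    rw [mul_assoc _ v] at hf'
    obtain ⟨b, hb, hbb⟩ := h.exists_isUnit_root (hdvd _) hf'
    obtain ⟨v', f₁, hv', hf₁⟩ := h.exists_quadratic_of_quartic hS j (z := 1) hb (hv.mul g.isUnit)
      (by rw [hbb]; ring)
    exact ih hv' f₁ hf₁

theorem exists_eq_or_neg_eq_one_add (h : IsFifthRootUniformizer ϖ) {w z : R}
    (hw : w ^ 2 = 1 + 4 * ϖ * z) : ∃ y, w = 1 + 2 * ϖ * y ∨ -w = 1 + 2 * ϖ * y := by
  obtain ⟨t, ht⟩ : 2 ∣ w - 1 :=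
    dvd_of_sq_add_mul_add_eq_zero (b := 1) (c := -(ϖ * z)) (by linear_combination hw)
  have htz : t * (t + 1) = ϖ * z := mul_left_cancel₀ (pow_ne_zero 2 h.two_ne_zero) (by
    linear_combination hw - (w + 1 + 2 * t) * ht)
  by_cases htu : IsUnit t
  · obtain ⟨y, hy⟩ := htu.dvd_mul_left.1 (Dvd.intro z htz.symm)
    exact ⟨-y, .inr (by linear_combination -ht - 2 * hy)⟩
  · obtain ⟨y, rfl⟩ := h.dvd_of_not_isUnit htu
    exact ⟨y, .inl (by linear_combination ht)⟩

theorem exists_quartic_point (h : IsFifthRootUniformizer ϖ) {s w y : R}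
    (hw : delta ϖ * w ^ 2 = delta (ϖ + 4 * (ϖ * s))) (hwy : w = 1 + 2 * ϖ * y) :
    ∃ b z, IsUnit b ∧ b ^ 2 - 5 * delta ϖ * b * (2 * (ϖ * s)) ^ 2 +
      5 * delta ϖ ^ 2 * (2 * (ϖ * s)) ^ 4 = b * z ^ 2 := by
  set u := ϖ + 4 * (ϖ * s) with hu
  set q := delta ϖ + (2 * ϖ ^ 2 + 2 - ϖ) * (2 * (ϖ * s) * ϖ + 4 * (ϖ * s) ^ 2) -
    (ϖ + 1) ^ 2 * (ϖ * s) + delta ϖ * ϖ * y with hq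
  set m := ϖ ^ 2 - 1 + 4 * ϖ * (ϖ * s) + 8 * (ϖ * s) ^ 2 + ϖ * y * (ϖ ^ 2 - 1) with hm
  have hqu : IsUnit q := by
    convert h.isUnit_add_mul h.isUnit_delta ((2 * ϖ ^ 2 + 2 - ϖ) * (2 * (ϖ * s) + 4 * ϖ * s ^ 2) -
      (ϖ + 1) ^ 2 * s + delta ϖ * y) using 1
    rw [hq]
    ring
  obtain ⟨i, hi⟩ : ∃ i, (ϖ * u - 1) * i = 1 := by
    refine IsUnit.exists_right_inv ?_
    convert h.isUnit_add_mul isUnit_one.neg u using 1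
    ring
  have hqm : (ϖ * u - 1) ^ 2 * (q ^ 2 - 20 * (ϖ * s) ^ 2 * q + 80 * (ϖ * s) ^ 4) =
      m ^ 2 * q * delta ϖ := by
    refine mul_left_cancel₀ (pow_ne_zero 4 h.two_ne_zero) ?_
    have hid := quartic_identity (N := 4 * q) hw (by rw [hq, hwy, hu, delta]; ring)
    have hm' : (ϖ ^ 2 - 1) * w + u ^ 2 - 1 = 2 * m := by rw [hm, hwy, hu]; ring
    rw [hm', show u - ϖ = 4 * (ϖ * s) by rw [hu]; ring] at hid
    linear_combination hid
  refine ⟨delta ϖ * q, delta ϖ * i * m, h.isUnit_delta.mul hqu, ?_⟩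
  linear_combination delta ϖ ^ 2 * (i ^ 2 * hqm -
    (q ^ 2 - 20 * (ϖ * s) ^ 2 * q + 80 * (ϖ * s) ^ 4) * ((ϖ * u - 1) * i + 1) * hi)

theorem delta_mul_sq_ne (h : IsFifthRootUniformizer ϖ) (hS : HasSUnitSquareClasses ϖ) (j : ℕ)
    {v w : R} (hv : IsUnit v) : delta ϖ * w ^ 2 ≠ delta (ϖ + 4 * (ϖ * (2 ^ j * v))) := by
  intro hw
  set s := 2 ^ j * v with hs
  obtain ⟨i, hi⟩ := h.isUnit_delta.exists_right_inv
  obtain ⟨y, hy⟩ : ∃ y, w = 1 + 2 * ϖ * y ∨ -w = 1 + 2 * ϖ * y := by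
    set u := ϖ + 4 * (ϖ * s) with hu
    refine h.exists_eq_or_neg_eq_one_add (z := i * s * (u ^ 3 + u ^ 2 * ϖ + u * ϖ ^ 2 + ϖ ^ 3 -
      (u ^ 2 + u * ϖ + ϖ ^ 2) + (u + ϖ) - 1)) ?_
    unfold delta at *
    linear_combination i * hw - (w ^ 2 - 1) * hi + i * (u ^ 3 + u ^ 2 * ϖ + u * ϖ ^ 2 + ϖ ^ 3 -
      (u ^ 2 + u * ϖ + ϖ ^ 2) + (u + ϖ) - 1) * hu
  obtain ⟨b, z, hb, hbz⟩ := hy.elim (h.exists_quartic_point hw)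
    (h.exists_quartic_point (w := -w) (by rwa [neg_sq]))
  have hc : 2 * (ϖ * s) = ϖ ^ (5 * (j + 1) + 1) * v := by
    rw [hs, ← h.pow_five]
    ring
  rw [hc] at hbz
  obtain ⟨v', f, hv', hf⟩ := h.exists_quadratic_of_quartic hS j hb hv hbz
  exact h.quadratic_ne hS j hv' f hf

theorem eq_of_delta_mul_sq_eq (h : IsFifthRootUniformizer ϖ) (hS : HasSUnitSquareClasses ϖ)
    {p r : ℤ} (hpr : IsCoprime p r) {w : R} (hw : delta ϖ * w ^ 2 = quarticForm (ϖ * p) r) :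
    p = r := by
  obtain ⟨⟨q, hq⟩, hr⟩ := h.four_dvd_sub_and_odd hpr hw
  by_contra hne
  obtain ⟨j, m, hm, rfl⟩ : ∃ j m, Odd m ∧ q = 2 ^ j * m := by
    have hfin : FiniteMultiplicity 2 q :=
      Int.finiteMultiplicity_iff.2 ⟨by decide, by rintro rfl; omega⟩
    obtain ⟨m, hm, hdvd⟩ := hfin.exists_eq_pow_mul_and_not_dvd
    exact ⟨_, m, by rwa [← Int.not_even_iff_odd, even_iff_two_dvd], hm⟩
  obtain ⟨i, hi⟩ := (h.isUnit_intCast hr).exists_right_inv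
  have hp : ϖ * p = (ϖ + 4 * (ϖ * (2 ^ j * (m * i)))) * r := by
    have hpq : (p : R) = r + 4 * (2 ^ j * m) := by
      exact_mod_cast congrArg (Int.cast (R := R)) (sub_eq_iff_eq_add'.1 hq)
    rw [hpq]
    linear_combination -4 * ϖ * 2 ^ j * m * hi
  rw [hp, quarticForm_mul_left] at hw
  refine h.delta_mul_sq_ne hS j (v := m * i) (w := w * i ^ 2)
    ((h.isUnit_intCast hm).mul (.of_mul_eq_one_right _ hi)) ?_
  have hi4 : (r : R) ^ 4 * i ^ 4 = 1 := by rw [← mul_pow, hi, one_pow]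
  linear_combination i ^ 4 * hw + delta (ϖ + 4 * (ϖ * (2 ^ j * (m * i)))) * hi4

end IsFifthRootUniformizer

/-! ### The ring of integers of `ℚ(⁵√2)` -/

theorem irreducible_X_pow_five_sub_two : Irreducible (X ^ 5 - C 2 : ℚ[X]) := by
  refine X_pow_sub_C_irreducible_of_prime (by norm_num) fun b hb => ?_
  have h := padicValRat.pow (p := 2) (q := b) (k := 5)
  have h2 : padicValRat 2 (2 : ℚ) = 1 := by
    simpa only [Nat.cast_ofNat] using padicValRat.self (p := 2) (by norm_num)
  rw [hb, h2] at h
  push_cast at h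
  omega

theorem minpoly_rat_eq_of_pow_five {L : Type*} [Field L] [CharZero L] {a : L} (ha : a ^ 5 = 2) :
    minpoly ℚ a = X ^ 5 - C 2 :=
  (minpoly.eq_of_irreducible_of_monic irreducible_X_pow_five_sub_two (by simp [ha])
    (monic_X_pow_sub_C _ (by norm_num))).symm

theorem adjoin_singleton_sub_algebraMap {R A : Type*} [CommRing R] [CommRing A] [Algebra R A]
    (a : A) (r : R) : Algebra.adjoin R {a - algebraMap R A r} = Algebra.adjoin R {a} := by
  apply le_antisymm <;> refine Algebra.adjoin_le (Set.singleton_subset_iff.2 ?_)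
  · exact sub_mem (Algebra.self_mem_adjoin_singleton R a) (algebraMap_mem _ r)
  · have := add_mem (Algebra.self_mem_adjoin_singleton R (a - algebraMap R A r))
      (algebraMap_mem _ r)
    rwa [sub_add_cancel] at this

theorem mem_adjoin_of_pow_smul_mem_of_isEisensteinAt {K : Type*} [Field K] [NumberField K] {a : K}
    (ha : IsIntegral ℤ a) (hgen : Algebra.adjoin ℚ {a} = ⊤) {p : ℤ} (hp : Prime p)
    (hE : (minpoly ℤ a).IsEisensteinAt (Ideal.span {p})) (n : ℕ) {x : K} (hx : IsIntegral ℤ x)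
    (hpx : p ^ n • x ∈ Algebra.adjoin ℤ {a}) : x ∈ Algebra.adjoin ℤ {a} := by
  let B := PowerBasis.ofAdjoinEqTop' (ha.tower_top (A := ℚ)) hgen
  have hB : B.gen = a := PowerBasis.ofAdjoinEqTop'_gen _ _
  rw [← hB] at ha hE hpx ⊢
  exact mem_adjoin_of_smul_prime_pow_smul_of_minpoly_isEisensteinAt hp ha hx hpx hE

theorem isIntegral_of_pow_five {A : Type*} [CommRing A] {a : A} (ha : a ^ 5 = 2) :
    IsIntegral ℤ a := by
  refine .of_pow (n := 5) (by norm_num) ?_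
  simpa only [ha, map_ofNat] using isIntegral_algebraMap (R := ℤ) (A := A) (x := 2)

section FifthRoot

variable {K : Type*} [Field K] [NumberField K] {a : K}

theorem minpoly_int_eq_of_pow_five (ha : a ^ 5 = 2) : minpoly ℤ a = X ^ 5 - C 2 := by
  have h := minpoly.isIntegrallyClosed_eq_field_fractions' ℚ (isIntegral_of_pow_five ha)
  rw [minpoly_rat_eq_of_pow_five ha] at h
  apply map_injective (algebraMap ℤ ℚ) (algebraMap ℤ ℚ).injective_int
  rw [← h]
  simp [map_ofNat C 2]

theorem minpoly_int_sub_two_eq_of_pow_five (ha : a ^ 5 = 2) : minpoly ℤ (a - 2) =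
    X ^ 5 + C 10 * X ^ 4 + C 40 * X ^ 3 + C 80 * X ^ 2 + C 80 * X + C 30 := by
  have h := minpoly.sub_algebraMap (A := ℚ) (B := K) (x := a) 2
  rw [minpoly_rat_eq_of_pow_five ha, map_ofNat] at h
  have h₁ := minpoly.isIntegrallyClosed_eq_field_fractions' ℚ
    ((isIntegral_of_pow_five ha).sub (isIntegral_algebraMap (R := ℤ) (A := K) (x := 2)))
  rw [map_ofNat] at h₁
  apply map_injective (algebraMap ℤ ℚ) (algebraMap ℤ ℚ).injective_int
  rw [← h₁, h]
  simp [map_ofNat C]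
  ring

theorem isEisensteinAt_two_of_pow_five (ha : a ^ 5 = 2) :
    (minpoly ℤ a).IsEisensteinAt (Ideal.span {2}) := by
  rw [minpoly_int_eq_of_pow_five ha]
  refine Monic.isEisensteinAt_of_mem_of_notMem (monic_X_pow_sub_C _ (by norm_num)) ?_ ?_ ?_
  · exact (Ideal.span_singleton_eq_top (α := ℤ)).not.2 (by decide)
  · intro n hn
    rw [natDegree_X_pow_sub_C] at hn
    rw [Ideal.mem_span_singleton]
    interval_cases n <;> simp [coeff_X_pow, coeff_ofNat_zero, coeff_ofNat_succ]
  · rw [Ideal.span_singleton_pow, Ideal.mem_span_singleton]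
    simp [coeff_X_pow, coeff_ofNat_zero]

theorem isEisensteinAt_five_of_pow_five (ha : a ^ 5 = 2) :
    (minpoly ℤ (a - 2)).IsEisensteinAt (Ideal.span {5}) := by
  have hd : (X ^ 5 + C 10 * X ^ 4 + C 40 * X ^ 3 + C 80 * X ^ 2 + C 80 * X + C 30 :
    ℤ[X]).natDegree = 5 := by compute_degree!
  rw [minpoly_int_sub_two_eq_of_pow_five ha]
  refine Monic.isEisensteinAt_of_mem_of_notMem (by monicity!) ?_ ?_ ?_
  · exact (Ideal.span_singleton_eq_top (α := ℤ)).not.2 (by decide)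
  · intro n hn
    rw [hd] at hn
    rw [Ideal.mem_span_singleton]
    interval_cases n <;> simp [coeff_X_pow, coeff_X, coeff_ofNat_mul, coeff_ofNat_zero,
      coeff_ofNat_succ]
  · rw [Ideal.span_singleton_pow, Ideal.mem_span_singleton]
    simp [coeff_X_pow, coeff_ofNat_zero, coeff_ofNat_mul]

theorem adjoin_rat_eq_top_of_pow_five (ha : a ^ 5 = 2) (hK : Module.finrank ℚ K = 5) :
    Algebra.adjoin ℚ {a} = ⊤ := by
  rw [← IntermediateField.adjoin_simple_toSubalgebra_of_isAlgebraic
    (Algebra.IsAlgebraic.isAlgebraic a), (Field.primitive_element_iff_minpoly_natDegree_eq ℚ a).2,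
    IntermediateField.top_toSubalgebra]
  rw [minpoly_rat_eq_of_pow_five ha, hK, natDegree_X_pow_sub_C]

/-- The power basis `1, a, a², a³, a⁴` of `ℚ(a)` over `ℚ` for a fifth root `a` of `2`. -/
noncomputable def fifthRootBasis (ha : a ^ 5 = 2) (hK : Module.finrank ℚ K = 5) :
    PowerBasis ℚ K :=
  PowerBasis.ofAdjoinEqTop' (isIntegral_of_pow_five ha).tower_top
    (adjoin_rat_eq_top_of_pow_five ha hK)

theorem fifthRootBasis_gen (ha : a ^ 5 = 2) (hK : Module.finrank ℚ K = 5) :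
    (fifthRootBasis ha hK).gen = a :=
  PowerBasis.ofAdjoinEqTop'_gen _ _

theorem norm_eq_two_of_pow_five (ha : a ^ 5 = 2) (hK : Module.finrank ℚ K = 5) :
    Algebra.norm ℚ a = 2 := by
  have h := Algebra.PowerBasis.norm_gen_eq_coeff_zero_minpoly (fifthRootBasis ha hK)
  rw [fifthRootBasis_gen, minpoly_rat_eq_of_pow_five ha, ← PowerBasis.finrank, hK] at h
  rw [h]
  norm_num [coeff_X_pow]

theorem discr_fifthRootBasis (ha : a ^ 5 = 2) (hK : Module.finrank ℚ K = 5) :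
    Algebra.discr ℚ (fifthRootBasis ha hK).basis = 50000 := by
  have h : aeval a (derivative (X ^ 5 - C 2 : ℚ[X])) = algebraMap ℚ K 5 * a ^ 4 := by norm_num
  rw [Algebra.discr_powerBasis_eq_norm, fifthRootBasis_gen, minpoly_rat_eq_of_pow_five ha, hK, h,
    map_mul, map_pow, norm_eq_two_of_pow_five ha hK, Algebra.norm_algebraMap, hK]
  norm_num

theorem mem_adjoin_int_of_pow_five (ha : a ^ 5 = 2) (hK : Module.finrank ℚ K = 5) {x : K}
    (hx : IsIntegral ℤ x) : x ∈ Algebra.adjoin ℤ {a} := by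
  have hint := isIntegral_of_pow_five ha
  have hgen := adjoin_rat_eq_top_of_pow_five ha hK
  have hdiscr : (2 : ℤ) ^ 4 • (5 : ℤ) ^ 5 • x ∈ Algebra.adjoin ℤ {a} := by
    have h := Algebra.discr_mul_isIntegral_mem_adjoin ℚ (B := fifthRootBasis ha hK)
      (by rwa [fifthRootBasis_gen]) hx
    rw [discr_fifthRootBasis, fifthRootBasis_gen] at h
    convert h using 1
    rw [smul_smul, zsmul_eq_mul, Rat.smul_def]
    norm_num
  have h5 : (5 : ℤ) ^ 5 • x ∈ Algebra.adjoin ℤ {a} :=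
    mem_adjoin_of_pow_smul_mem_of_isEisensteinAt hint hgen (p := 2) (by norm_num)
      (isEisensteinAt_two_of_pow_five ha) 4 (hx.smul _) hdiscr
  have hℤ := adjoin_singleton_sub_algebraMap a (2 : ℤ)
  have hℚ := adjoin_singleton_sub_algebraMap a (2 : ℚ)
  have hint' := hint.sub (isIntegral_algebraMap (R := ℤ) (A := K) (x := 2))
  rw [map_ofNat] at hℤ hℚ hint'
  rw [← hℤ] at h5 ⊢
  exact mem_adjoin_of_pow_smul_mem_of_isEisensteinAt hint' (hℚ.trans hgen) (p := 5) (by norm_num)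
    (isEisensteinAt_five_of_pow_five ha) 5 hx h5

theorem nrRealPlaces_eq_one_of_pow_five (ha : a ^ 5 = 2) (hK : Module.finrank ℚ K = 5) :
    InfinitePlace.nrRealPlaces K = 1 := by
  classical
  have hpos := InfinitePlace.nrRealPlaces_pos_of_odd_finrank (K := K) (by rw [hK]; decide)
  refine le_antisymm (Fintype.card_le_one_iff_subsingleton.2 ⟨?_⟩) hpos
  rintro ⟨v, hv⟩ ⟨w, hw⟩
  have hval (φ : K →+* ℝ) : φ a ^ 5 = 2 := by rw [← map_pow, ha, map_ofNat]
  have heq : InfinitePlace.embedding_of_isReal hv = InfinitePlace.embedding_of_isReal hw := by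
    have h := (fifthRootBasis ha hK).algHom_ext
      (f := (InfinitePlace.embedding_of_isReal hv).toRatAlgHom)
      (g := (InfinitePlace.embedding_of_isReal hw).toRatAlgHom) (by
        rw [fifthRootBasis_gen]
        exact (Odd.strictMono_pow (by decide : Odd 5)).injective ((hval _).trans (hval _).symm))
    exact RingHom.ext fun x => DFunLike.congr_fun h x
  have hemb : v.embedding = w.embedding := RingHom.ext fun x => by
    rw [← InfinitePlace.embedding_of_isReal_apply hv, heq,
      InfinitePlace.embedding_of_isReal_apply hw]
  rw [Subtype.mk.injEq, ← InfinitePlace.mk_embedding v, hemb, InfinitePlace.mk_embedding]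

theorem nrComplexPlaces_eq_two_of_pow_five (ha : a ^ 5 = 2) (hK : Module.finrank ℚ K = 5) :
    InfinitePlace.nrComplexPlaces K = 2 := by
  have := InfinitePlace.card_add_two_mul_card_eq_rank K
  rw [hK, nrRealPlaces_eq_one_of_pow_five ha hK] at this
  omega

end FifthRoot

section RingOfIntegers

variable {K : Type*} [Field K] {θ : 𝓞 K}

theorem coe_pow_five (hθ : θ ^ 5 = 2) : (θ : K) ^ 5 = 2 := by
  rw [← map_pow, hθ, map_ofNat]

variable [NumberField K]

theorem minpoly_ringOfIntegers_of_pow_five (hθ : θ ^ 5 = 2) : minpoly ℤ θ = X ^ 5 - C 2 := by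
  rw [← RingOfIntegers.minpoly_coe, minpoly_int_eq_of_pow_five (coe_pow_five hθ)]

theorem adjoin_eq_top_of_pow_five (hθ : θ ^ 5 = 2) (hK : Module.finrank ℚ K = 5) :
    Algebra.adjoin ℤ {θ} = ⊤ := by
  refine Algebra.eq_top_iff.2 fun x => ?_
  have hx := mem_adjoin_int_of_pow_five (coe_pow_five hθ) hK x.isIntegral_coe
  have hmap := AlgHom.map_adjoin_singleton (IsScalarTower.toAlgHom ℤ (𝓞 K) K) θ
  obtain ⟨y, hy, hyx⟩ := (hmap ▸ hx : (x : K) ∈ (Algebra.adjoin ℤ {θ}).map _)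
  rwa [← RingOfIntegers.coe_injective hyx]

/-- The power basis `1, θ, θ², θ³, θ⁴` of the ring of integers `ℤ[θ]`, for a fifth root `θ`
of `2`. -/
noncomputable def fifthRootIntegralBasis (hθ : θ ^ 5 = 2) (hK : Module.finrank ℚ K = 5) :
    PowerBasis ℤ (𝓞 K) :=
  PowerBasis.ofAdjoinEqTop' (isIntegral_of_pow_five hθ) (adjoin_eq_top_of_pow_five hθ hK)

theorem fifthRootIntegralBasis_gen (hθ : θ ^ 5 = 2) (hK : Module.finrank ℚ K = 5) :
    (fifthRootIntegralBasis hθ hK).gen = θ :=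
  PowerBasis.ofAdjoinEqTop'_gen _ _

theorem exists_ringHom_eq_of_pow_five (hθ : θ ^ 5 = 2) (hK : Module.finrank ℚ K = 5) {S : Type*}
    [CommRing S] {t : S} (ht : t ^ 5 = 2) : ∃ f : 𝓞 K →+* S, f θ = t := by
  have h : aeval t (minpoly ℤ (fifthRootIntegralBasis hθ hK).gen) = 0 := by
    rw [fifthRootIntegralBasis_gen, minpoly_ringOfIntegers_of_pow_five hθ]
    simp [ht, map_ofNat (aeval t)]
  refine ⟨((fifthRootIntegralBasis hθ hK).lift t h).toRingHom, ?_⟩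
  change (fifthRootIntegralBasis hθ hK).lift t h θ = t
  simpa only [fifthRootIntegralBasis_gen] using (fifthRootIntegralBasis hθ hK).lift_gen t h

theorem discr_eq_of_pow_five (hθ : θ ^ 5 = 2) (hK : Module.finrank ℚ K = 5) :
    discr K = 50000 := by
  let b := fifthRootIntegralBasis hθ hK
  let b' := fifthRootBasis (coe_pow_five hθ) hK
  have hdim : b.dim = b'.dim := by
    rw [← b.finrank, ← b'.finrank, RingOfIntegers.rank]
  have hb : b.basis.localizationLocalization ℚ (nonZeroDivisors ℤ) K ∘ (finCongr hdim).symm =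
      b'.basis := by
    ext i
    simp [b, b', fifthRootIntegralBasis_gen, fifthRootBasis_gen]
  have h := Algebra.discr_localizationLocalization ℤ (nonZeroDivisors ℤ) K b.basis (Rₘ := ℚ)
  rw [← Algebra.discr_reindex ℚ (b.basis.localizationLocalization ℚ (nonZeroDivisors ℤ) K)
    (finCongr hdim), hb, discr_fifthRootBasis,
    NumberField.discr_eq_discr, eq_intCast] at h
  exact_mod_cast h.symm

end RingOfIntegers

/-! ### Class number one -/

section Adjoin

variable {R : Type*} [CommRing R] {θ : R}

theorem exists_int_dvd_sub (hθ : Algebra.adjoin ℤ {θ} = ⊤) {g : R} {n : ℤ} (hgn : g ∣ θ - n)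
    (z : R) : ∃ m : ℤ, g ∣ z - m := by
  have hz : z ∈ Algebra.adjoin ℤ {θ} := hθ ▸ Algebra.mem_top
  rw [Algebra.adjoin_singleton_eq_range_aeval] at hz
  obtain ⟨q, rfl⟩ := hz
  refine ⟨q.eval n, hgn.trans ?_⟩
  have h := sub_dvd_eval_sub θ (n : R) (q.map (algebraMap ℤ R))
  rwa [eval_map_algebraMap, eval_intCast_map] at h

theorem eq_span_singleton_of_mem (hθ : Algebra.adjoin ℤ {θ} = ⊤) {P : Ideal R} (hP : P ≠ ⊤) {g : R}
    {p n : ℤ} (hp : Prime p) (hgp : g ∣ p) (hgn : g ∣ θ - n) (hg : g ∈ P) :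
    P = Ideal.span {g} := by
  refine le_antisymm (fun z hz => ?_) ((Ideal.span_singleton_le_iff_mem P).2 hg)
  obtain ⟨m, hm⟩ := exists_int_dvd_sub hθ hgn z
  have hmP : (m : R) ∈ P := by
    have := P.sub_mem hz (P.mem_of_dvd hm hg)
    rwa [sub_sub_cancel] at this
  have hpm : p ∣ m := by
    by_contra h
    obtain ⟨u, v, huv⟩ := (hp.coprime_iff_not_dvd).2 h
    refine hP ((Ideal.eq_top_iff_one P).2 ?_)
    have : (1 : R) = u * p + v * m := by exact_mod_cast congrArg (Int.cast (R := R)) huv.symm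
    rw [this]
    exact P.add_mem (P.mul_mem_left _ (P.mem_of_dvd hgp hg)) (P.mul_mem_left _ hmP)
  rw [Ideal.mem_span_singleton]
  have := dvd_add hm (hgp.trans (Int.cast_dvd_cast _ _ hpm))
  rwa [sub_add_cancel] at this

theorem prime_of_dvd_of_dvd_sub (hθ : Algebra.adjoin ℤ {θ} = ⊤) {g : R} {p n : ℤ} (hp : Prime p)
    (hgp : g ∣ p) (hgn : g ∣ θ - n) (hg0 : g ≠ 0) (hg : ¬IsUnit g) : Prime g := by
  obtain ⟨P, hP, hgP⟩ := exists_max_ideal_of_mem_nonunits hg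
  have h := eq_span_singleton_of_mem hθ hP.ne_top hp hgp hgn hgP
  rw [← Ideal.span_singleton_prime hg0, ← h]
  exact hP.isPrime

end Adjoin

theorem fifth_root_two_of_pow_eq_self {F : Type*} [Field F] (h2 : (2 : F) ≠ 0) {t : F}
    (ht : t ^ 5 = 2) {N : ℕ} (hN1 : 1 < N) (hN : N ≤ 13) (hchar : (N : F) = 0) (hpow : t ^ N = t) :
    t = -1 ∨ (5 : F) = 0 ∧ t = 2 ∨ (7 : F) = 0 ∧ t = 4 ∨ (13 : F) = 0 ∧ t = 6 := by
  have ht0 : t ≠ 0 := by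
    rintro rfl
    exact h2 (by rw [← ht, zero_pow (by norm_num)])
  have hcancel {x : F} (h : x * t = 0) : x = 0 := (mul_eq_zero.1 h).resolve_right ht0
  have h4 (h : (4 : F) = 0) : False := h2 (mul_self_eq_zero.1 (by linear_combination h))
  interval_cases N <;> push_cast at hchar
  · exact absurd hchar h2
  · exact .inl (by linear_combination -hpow * (1 + t ^ 2) + ht + hchar)
  · exact (h4 hchar).elim
  · exact .inr (.inl ⟨hchar, by linear_combination ht - hpow⟩)
  · exact absurd (hcancel (x := 1) (by linear_combination hpow - t * ht)) one_ne_zero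
  · have h := hcancel (x := 2 * t - 1) (by linear_combination hpow - t ^ 2 * ht)
    exact .inr (.inr (.inl ⟨hchar, by linear_combination 4 * h - t * hchar⟩))
  · exact absurd (pow_eq_zero_iff (n := 3) (by norm_num) |>.1 (by linear_combination hchar)) h2
  · have h3 : (3 : F) = 0 := mul_self_eq_zero.1 (by linear_combination hchar)
    have h : t ^ 2 - 4 = 0 := by linear_combination (t ^ 5 + 2) * ht - t * hpow
    exact .inl (by linear_combination ht - t * (t ^ 2 + 4) * h + (1 - 5 * t) * h3)
  · have h5 : (5 : F) = 0 := (mul_eq_zero.1 (by linear_combination hchar)).resolve_left h2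
    obtain rfl : t = 4 := by linear_combination (t ^ 5 + 2) * ht - hpow
    exact absurd (by linear_combination ht - 204 * h5) h2
  · have h3 := hcancel (x := 3) (by linear_combination hpow - t * (t ^ 5 + 2) * ht)
    exact absurd (by linear_combination 4 * h3 - hchar) (one_ne_zero (α := F))
  · have h := hcancel (x := 4 * t - 1) (by linear_combination hpow - t ^ 2 * (t ^ 5 + 2) * ht)
    have h3 : (3 : F) = 0 := (mul_eq_zero.1 (by linear_combination hchar)).resolve_left h4
    obtain rfl : t = 1 := by linear_combination h - t * h3
    exact absurd (by linear_combination -ht) (one_ne_zero (α := F))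
  · have h := hcancel (x := 4 * t ^ 2 - 1)
      (by linear_combination hpow - t ^ 3 * (t ^ 5 + 2) * ht)
    have h10 : t ^ 2 - 10 = 0 := by linear_combination 10 * h - 3 * t ^ 2 * hchar
    exact .inr (.inr (.inr ⟨hchar, by
      linear_combination 3 * (ht - t * (t ^ 2 + 10) * h10) - 23 * t * hchar⟩))

theorem fifth_root_two_of_card_le {F : Type*} [Field F] [Finite F] (hF : Nat.card F ≤ 13) {t : F}
    (ht : t ^ 5 = 2) :
    t = 0 ∨ t = -1 ∨ (5 : F) = 0 ∧ t = 2 ∨ (7 : F) = 0 ∧ t = 4 ∨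
      (13 : F) = 0 ∧ t = 6 := by
  have := Fintype.ofFinite F
  by_cases h2 : (2 : F) = 0
  · exact .inl (pow_eq_zero_iff (n := 5) (by norm_num) |>.1 (ht.trans h2))
  · exact .inr <| fifth_root_two_of_pow_eq_self h2 ht Finite.one_lt_card hF
      (by rw [Nat.card_eq_fintype_card, Nat.cast_card_eq_zero])
      (by rw [Nat.card_eq_fintype_card, FiniteField.pow_card])

section RingOfIntegers

variable {K : Type*} [Field K] [NumberField K] {θ : 𝓞 K}

theorem isPrincipal_of_mk_fifth_root (hθ : θ ^ 5 = 2) (hK : Module.finrank ℚ K = 5)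
    {P : Ideal (𝓞 K)} (hP : P ≠ ⊤)
    (h : Ideal.Quotient.mk P θ = 0 ∨ Ideal.Quotient.mk P θ = -1 ∨
      (5 : 𝓞 K ⧸ P) = 0 ∧ Ideal.Quotient.mk P θ = 2 ∨
      (7 : 𝓞 K ⧸ P) = 0 ∧ Ideal.Quotient.mk P θ = 4 ∨
      (13 : 𝓞 K ⧸ P) = 0 ∧ Ideal.Quotient.mk P θ = 6) :
    Submodule.IsPrincipal P := by
  have hspan (p n : ℤ) (g : 𝓞 K) (hp : Prime p) (hgp : g ∣ p) (hgn : g ∣ θ - n)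
      (hg : Ideal.Quotient.mk P g = 0) : Submodule.IsPrincipal P :=
    ⟨g, eq_span_singleton_of_mem (adjoin_eq_top_of_pow_five hθ hK) hP hp hgp hgn
      (Ideal.Quotient.eq_zero_iff_mem.1 hg)⟩
  obtain h' | h' | ⟨h, h'⟩ | ⟨h, h'⟩ | ⟨h, h'⟩ := h
  · exact hspan 2 0 θ (by norm_num) ⟨θ ^ 4, by push_cast; linear_combination -hθ⟩ (by simp) h'
  · refine hspan 3 (-1) (1 + θ) (by norm_num)
      ⟨θ ^ 4 - θ ^ 3 + θ ^ 2 - θ + 1, by push_cast; linear_combination -hθ⟩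
      ⟨1, by push_cast; ring⟩ ?_
    rw [map_add, map_one, h', add_neg_cancel]
  · refine hspan 5 2 (1 + θ ^ 2) (by norm_num)
      ⟨1 - 2 * θ - θ ^ 2 + 2 * θ ^ 3 + θ ^ 4, by push_cast; linear_combination -(2 + θ) * hθ⟩
      ⟨θ - θ ^ 3, by push_cast; linear_combination hθ⟩ ?_
    rw [map_add, map_one, map_pow, h']
    linear_combination h
  · refine hspan 7 4 (1 + θ + θ ^ 2) (by norm_num)
      ⟨3 - θ - 2 * θ ^ 2 + 3 * θ ^ 3 - θ ^ 4, by push_cast; linear_combination (θ - 2) * hθ⟩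
      ⟨-2 + θ + θ ^ 2 - 2 * θ ^ 3 + θ ^ 4, by push_cast; linear_combination (1 - θ) * hθ⟩ ?_
    rw [map_add, map_add, map_one, map_pow, h']
    linear_combination 3 * h
  · refine hspan 13 6 (1 + θ + θ ^ 2 + θ ^ 4) (by norm_num)
      ⟨5 + 3 * θ - 6 * θ ^ 2 - θ ^ 3 + 2 * θ ^ 4, by
        push_cast; linear_combination (-4 + 4 * θ + θ ^ 2 - 2 * θ ^ 3) * hθ⟩
      ⟨-2 - θ + 3 * θ ^ 2 - θ ^ 4, by push_cast; linear_combination (2 - 2 * θ + θ ^ 3) * hθ⟩ ?_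
    rw [map_add, map_add, map_add, map_one, map_pow, map_pow, h']
    linear_combination 103 * h

theorem isPrincipal_of_absNorm_le (hθ : θ ^ 5 = 2) (hK : Module.finrank ℚ K = 5)
    {P : Ideal (𝓞 K)} (hP : P.IsPrime) (hP0 : P ≠ ⊥) (hN : Ideal.absNorm P ≤ 13) :
    Submodule.IsPrincipal P := by
  have : P.IsMaximal := hP.isMaximal hP0
  let _ : Field (𝓞 K ⧸ P) := Ideal.Quotient.field P
  have hcard : Nat.card (𝓞 K ⧸ P) ≠ 0 := Ideal.absNorm_ne_zero_iff_mem_nonZeroDivisors.2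
    (mem_nonZeroDivisors_of_ne_zero hP0)
  have : Finite (𝓞 K ⧸ P) := Nat.finite_of_card_ne_zero hcard
  exact isPrincipal_of_mk_fifth_root hθ hK hP.ne_top
    (fifth_root_two_of_card_le (F := 𝓞 K ⧸ P) hN (by rw [← map_pow, hθ, map_ofNat]))

theorem isPrincipalIdealRing_of_pow_five (hθ : θ ^ 5 = 2) (hK : Module.finrank ℚ K = 5) :
    IsPrincipalIdealRing (𝓞 K) := by
  refine RingOfIntegers.isPrincipalIdealRing_of_isPrincipal_of_norm_le_of_isPrime
    fun P hP hN => isPrincipal_of_absNorm_le hθ hK hP (nonZeroDivisors.coe_ne_zero P) ?_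
  rw [nrComplexPlaces_eq_two_of_pow_five (coe_pow_five hθ) hK, discr_eq_of_pow_five hθ hK, hK] at hN
  suffices h : (Ideal.absNorm (P : Ideal (𝓞 K)) : ℝ) < 14 by
    exact Nat.lt_succ_iff.1 (by exact_mod_cast h)
  refine hN.trans_lt ?_
  have hdiscr : √|((50000 : ℤ) : ℝ)| < 223.7 := by
    rw [Real.sqrt_lt' (by norm_num)]
    norm_num
  have hdiscr₀ : 0 ≤ √|((50000 : ℤ) : ℝ)| := Real.sqrt_nonneg _
  have hpi : 4 / Real.pi < 1.2733 := by
    rw [div_lt_iff₀ Real.pi_pos]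
    nlinarith [Real.pi_gt_d4]
  have hpi_sq : (4 / Real.pi) ^ 2 < 1.6213 := by
    have : 0 < 4 / Real.pi := by positivity
    nlinarith
  norm_num [Nat.factorial] at hdiscr hdiscr₀ ⊢
  nlinarith

end RingOfIntegers

/-! ### Primes dividing `10δ` -/

theorem five_dvd_card_sub_one_of_delta_eq_zero {F : Type*} [Field F] [Finite F] {t : F}
    (ht : t ^ 5 = 2) (hδ : delta t = 0) : 5 ∣ Nat.card F - 1 := by
  have := Fintype.ofFinite F
  have : Fact (Nat.Prime 5) := ⟨Nat.prime_five⟩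
  have h3 : (3 : F) = 0 := by
    rw [delta] at hδ
    linear_combination (1 + t) * hδ - ht
  have ht0 : t ≠ 0 := by
    rintro rfl
    simp [delta] at hδ
  have hsq : t ^ 2 ≠ 1 := fun h => by
    obtain rfl : t = 2 := by linear_combination ht - t * (t ^ 2 + 1) * h
    rw [delta] at hδ
    exact one_ne_zero (α := F) (by linear_combination 4 * h3 - hδ)
  rw [← orderOf_eq_prime (by linear_combination (t ^ 5 + 2) * ht + h3 : (t ^ 2) ^ 5 = 1) hsq,
    Nat.card_eq_fintype_card]
  exact orderOf_dvd_of_pow_eq_one (FiniteField.pow_card_sub_one_eq_one _ (pow_ne_zero 2 ht0))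

section Primes

variable {K : Type*} [Field K] [NumberField K] {θ : 𝓞 K}

theorem prime_fifth_root (hθ : θ ^ 5 = 2) (hK : Module.finrank ℚ K = 5) : Prime θ := by
  obtain ⟨f, hf⟩ := exists_ringHom_eq_of_pow_five hθ hK (show (0 : ZMod 2) ^ 5 = 2 by decide)
  refine prime_of_dvd_of_dvd_sub (adjoin_eq_top_of_pow_five hθ hK) (p := 2) (n := 0) (by norm_num)
    ⟨θ ^ 4, by push_cast; linear_combination -hθ⟩ (by simp) ?_ fun h => (h.map f).ne_zero hf
  rintro rfl
  norm_num at hθ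

theorem prime_one_add_sq (hθ : θ ^ 5 = 2) (hK : Module.finrank ℚ K = 5) : Prime (1 + θ ^ 2) := by
  have : Fact (1 < 5) := ⟨by norm_num⟩
  obtain ⟨f, hf⟩ := exists_ringHom_eq_of_pow_five hθ hK (show (2 : ZMod 5) ^ 5 = 2 by decide)
  have h5 : (1 + θ ^ 2) * (1 - 2 * θ - θ ^ 2 + 2 * θ ^ 3 + θ ^ 4) = 5 := by
    linear_combination (2 + θ) * hθ
  refine prime_of_dvd_of_dvd_sub (adjoin_eq_top_of_pow_five hθ hK) (p := 5) (n := 2) (by norm_num)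
    ⟨_, by push_cast; exact h5.symm⟩ ⟨θ - θ ^ 3, by push_cast; linear_combination hθ⟩
    (fun h => ?_) fun h => (h.map f).ne_zero ?_
  · rw [h, zero_mul] at h5
    norm_num at h5
  · rw [map_add, map_one, map_pow, hf]
    decide

theorem absNorm_dvd_of_delta_mem (hθ : θ ^ 5 = 2) (hK : Module.finrank ℚ K = 5) {I : Ideal (𝓞 K)}
    (h : delta θ ∈ I) : Ideal.absNorm I ∣ 3 ^ 5 := by
  have h3 : ((3 : ℕ) : 𝓞 K) ∈ I := by
    rw [Nat.cast_ofNat, ← one_add_mul_delta hθ]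
    exact I.mul_mem_left _ h
  have := Ideal.absNorm_dvd_absNorm_of_le ((Ideal.span_singleton_le_iff_mem I).2 h3)
  rwa [Ideal.absNorm_span_natCast, RingOfIntegers.rank, hK] at this

theorem absNorm_eq_of_delta_mem (hθ : θ ^ 5 = 2) (hK : Module.finrank ℚ K = 5) {M : Ideal (𝓞 K)}
    (hM : M.IsMaximal) (h : delta θ ∈ M) : Ideal.absNorm M = 3 ^ 4 := by
  let _ : Field (𝓞 K ⧸ M) := Ideal.Quotient.field M
  have hN := absNorm_dvd_of_delta_mem hθ hK h
  have hcard : Nat.card (𝓞 K ⧸ M) ≠ 0 := ne_zero_of_dvd_ne_zero (by norm_num) hN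
  have : Finite (𝓞 K ⧸ M) := Nat.finite_of_card_ne_zero hcard
  have h5 : 5 ∣ Ideal.absNorm M - 1 :=
    five_dvd_card_sub_one_of_delta_eq_zero (F := 𝓞 K ⧸ M) (t := Ideal.Quotient.mk M θ)
      (by rw [← map_pow, hθ, map_ofNat])
      (by rw [← map_delta, Ideal.Quotient.eq_zero_iff_mem.2 h])
  have hN1 : Ideal.absNorm M ≠ 1 := fun h => hM.ne_top (Ideal.absNorm_eq_one_iff.1 h)
  obtain ⟨k, hk, hNk⟩ := (Nat.dvd_prime_pow Nat.prime_three).1 hN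
  rw [hNk] at h5 hN1 ⊢
  interval_cases k <;> revert h5 hN1 <;> decide

theorem not_isUnit_delta (hθ : θ ^ 5 = 2) (hK : Module.finrank ℚ K = 5) : ¬IsUnit (delta θ) := by
  obtain ⟨f, hf⟩ := exists_ringHom_eq_of_pow_five hθ hK
    (show (Quintic_s10.root : Quintic_s10 (ZMod 3)) ^ 5 = 2 by decide)
  intro hδ
  have h3 : f (1 + θ) * f (delta θ) = 0 := by
    rw [← map_mul, one_add_mul_delta hθ, map_ofNat]
    decide
  have h := (hδ.map f).mul_left_eq_zero.1 h3
  rw [map_add, map_one, hf] at h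
  exact absurd h (by decide)

theorem prime_delta (hθ : θ ^ 5 = 2) (hK : Module.finrank ℚ K = 5) : Prime (delta θ) := by
  have hδ0 : delta θ ≠ 0 := fun h => by
    have := one_add_mul_delta hθ
    rw [h, mul_zero] at this
    norm_num at this
  obtain ⟨M, hM, hδM⟩ := exists_max_ideal_of_mem_nonunits (not_isUnit_delta hθ hK)
  obtain ⟨J, hJ⟩ := Ideal.dvd_iff_le.2 ((Ideal.span_singleton_le_iff_mem M).2 hδM)
  have hnorm := absNorm_dvd_of_delta_mem hθ hK (Ideal.mem_span_singleton_self (delta θ))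
  rw [hJ, map_mul, absNorm_eq_of_delta_mem hθ hK hM hδM] at hnorm
  have hJtop : J = ⊤ := by
    by_contra hJtop
    obtain ⟨M', hM', hJM'⟩ := J.exists_le_maximal hJtop
    have hδM' : delta θ ∈ M' := hJM' <| (Ideal.mul_le_right (I := M)) <| hJ ▸
      Ideal.mem_span_singleton_self (delta θ)
    have := (mul_dvd_mul_left _ (Ideal.absNorm_dvd_absNorm_of_le hJM')).trans hnorm
    rw [absNorm_eq_of_delta_mem hθ hK hM' hδM'] at this
    norm_num at this
  rw [← Ideal.span_singleton_prime hδ0, hJ, hJtop, Ideal.mul_top]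
  exact hM.isPrime

end Primes

/-! ### Square classes of units and `S`-units -/

theorem exists_units_map_sq {K : Type*} [Field K] [NumberField K]
    (hK : Odd (Module.finrank ℚ K)) :
    ∃ φ : (𝓞 K)ˣ → Bool × (Fin (Units.rank K) → ZMod 2),
      ∀ x y, φ x = φ y → ∃ w, x = y * w ^ 2 := by
  classical
  choose f hf _ using Units.exist_unique_eq_mul_prod K
  refine ⟨fun x => (decide (((f x).1 : (𝓞 K)ˣ) = 1), fun i => ((f x).2 i : ZMod 2)),
    fun x y hxy => ?_⟩
  simp only [Prod.mk.injEq, decide_eq_decide] at hxy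
  have htors : ((f x).1 : (𝓞 K)ˣ) = (f y).1 := by
    obtain hx | hx := Units.torsion_eq_one_or_neg_one_of_odd_finrank hK (f x).1
    · rw [hx, hxy.1.1 hx]
    · obtain hy | hy := Units.torsion_eq_one_or_neg_one_of_odd_finrank hK (f y).1
      · rw [hy, hxy.1.2 hy]
      · rw [hx, hy]
  have hexp (i) : ∃ k, (f x).2 i = (f y).2 i + 2 * k := by
    obtain ⟨k, hk⟩ := (ZMod.intCast_eq_intCast_iff_dvd_sub _ _ 2).1 (congrFun hxy.2 i)
    push_cast at hk
    exact ⟨-k, by linear_combination -hk⟩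
  choose k hk using hexp
  refine ⟨∏ i, Units.fundSystem K i ^ k i, (hf x).trans ?_⟩
  rw [eq_comm, hf y, htors, mul_assoc, ← Finset.prod_pow, ← Finset.prod_mul_distrib]
  refine congrArg _ (Finset.prod_congr rfl fun i _ => ?_)
  rw [hk, zpow_add, mul_comm 2, zpow_mul]
  rfl

theorem mem_squareClassSpan_of_independent {K : Type*} [Field K] [NumberField K]
    (hK : Odd (Module.finrank ℚ K)) {ι : Type*} [Fintype ι]
    (hι : Fintype.card ι = Units.rank K + 1) {v : ι → (𝓞 K)ˣ}
    (hv : ∀ s : Finset ι, IsSquare (∏ i ∈ s, v i) → s = ∅) (u : (𝓞 K)ˣ) :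
    u ∈ squareClassSpan v := by
  classical
  obtain ⟨φ, hφ⟩ := exists_units_map_sq hK
  have hinj : Function.Injective fun s : Finset ι => φ (∏ i ∈ s, v i) := by
    intro s t hst
    obtain ⟨w, hw⟩ := hφ _ _ hst
    have h := prod_mul_prod_eq_prod_symmDiff_mul_sq v s t
    rw [hw, mul_right_comm, ← sq, ← mul_pow, ← div_eq_iff_eq_mul, ← div_pow] at h
    exact symmDiff_eq_bot.1 (hv _ (h ▸ IsSquare.sq _))
  have hbij := (Fintype.bijective_iff_injective_and_card _).2 ⟨hinj, by simp [hι, pow_succ']⟩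
  obtain ⟨s, hs⟩ := hbij.2 (φ u)
  obtain ⟨w, hw⟩ := hφ _ _ hs.symm
  exact ⟨s, w, hw⟩

theorem isUnit_classGen_castLE {A : Type*} [CommRing A] {a : A} (ha : a ^ 5 = 2) (i : Fin 3) :
    IsUnit (classGen a (Fin.castLE (by norm_num) i)) := by
  fin_cases i
  · exact isUnit_one.neg
  · exact .of_mul_eq_one (1 + a + a ^ 2 + a ^ 3 + a ^ 4)
      (show (a - 1) * _ = 1 by linear_combination ha)
  · exact .of_mul_eq_one (-1 + a ^ 2 - a ^ 3 + a ^ 4)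
      (show (a ^ 3 + a ^ 2 - 1) * _ = 1 by linear_combination a ^ 2 * ha)

section UnitClasses

variable {K : Type*} [Field K] [NumberField K] {θ : 𝓞 K}

theorem eq_empty_of_classRep_eq_sq (hθ : θ ^ 5 = 2) (hK : Module.finrank ℚ K = 5)
    {s : Finset (Fin 5)} {w : (𝓞 K)ˣ} (hs : classRep θ s = w ^ 2) : s = ∅ := by
  obtain ⟨f, hf⟩ := exists_ringHom_eq_of_pow_five hθ hK
    (Quintic_s10.root_pow_five : (Quintic_s10.root : Quintic_s10 (ZMod 8)) ^ 5 = 2)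
  obtain ⟨b₀, hb₀⟩ := Quintic_s10.exists_c0_eq_of_isUnit (by norm_num) (w.isUnit.map f)
  obtain ⟨d₁, d₂, d₃, d₄, hd⟩ := Quintic_s10.exists_root_pow_four_mul_sq_eq hb₀
  refine Quintic_s10.eq_empty_of_root_pow_four_mul_classRep_eq s d₁ d₂ d₃ d₄ ?_
  rw [← hd, ← map_pow, ← hs, map_classRep, hf]

theorem units_rank_eq_two_of_pow_five (hθ : θ ^ 5 = 2) (hK : Module.finrank ℚ K = 5) :
    Units.rank K = 2 := by
  rw [Units.rank, InfinitePlace.card_eq_nrRealPlaces_add_nrComplexPlaces,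
    nrRealPlaces_eq_one_of_pow_five (coe_pow_five hθ) hK,
    nrComplexPlaces_eq_two_of_pow_five (coe_pow_five hθ) hK]

theorem mem_squareClassSpan_of_isUnit (hθ : θ ^ 5 = 2) (hK : Module.finrank ℚ K = 5) {u : 𝓞 K}
    (hu : IsUnit u) : u ∈ squareClassSpan (classGen θ) := by
  obtain ⟨u, rfl⟩ := hu
  let v (i : Fin 3) : (𝓞 K)ˣ := (isUnit_classGen_castLE hθ i).unit
  have hv (s : Finset (Fin 3)) (hs : IsSquare (∏ i ∈ s, v i)) : s = ∅ := by
    obtain ⟨w, hw⟩ := hs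
    refine Finset.map_eq_empty.1 (eq_empty_of_classRep_eq_sq hθ hK (w := w)
      (s := s.map (Fin.castLEEmb (by norm_num))) ?_)
    rw [classRep, Finset.prod_map, ← Units.val_pow_eq_pow_val, sq, ← hw, Units.coe_prod]
    rfl
  have hspan := mem_squareClassSpan_of_independent (by rw [hK]; decide)
    (by rw [units_rank_eq_two_of_pow_five hθ hK, Fintype.card_fin]) hv u
  exact map_mem_of_mem_squareClassSpan (Units.coeHom (𝓞 K))
    (fun i => apply_mem_squareClassSpan (f := classGen θ) (Fin.castLE (by norm_num) i)) hspan

end UnitClasses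

section UniqueFactorization

variable {R : Type*} [CommRing R] [IsDomain R]

theorem dvd_of_squarefree_of_eq_sq {p d m n A D Z : R} (hp : Prime p) (hd : Squarefree d)
    (hmn : IsRelPrime m n)
    (h : d * (d ^ 2 * m ^ 4 + A * d * n ^ 2 * m ^ 2 + D * n ^ 4) = Z ^ 2) (hpd : p ∣ d) :
    p ∣ D := by
  by_contra hD
  obtain ⟨d, rfl⟩ := hpd
  have hpd : ¬ p ∣ d := fun h => hp.not_isUnit (hd p (mul_dvd_mul_left p h))
  obtain ⟨Z, rfl⟩ := hp.dvd_of_dvd_pow ⟨_, by rw [← h, mul_assoc]⟩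
  have h₁ : d * ((p * d) ^ 2 * m ^ 4 + A * (p * d) * n ^ 2 * m ^ 2 + D * n ^ 4) = p * Z ^ 2 :=
    mul_left_cancel₀ hp.ne_zero (by linear_combination h)
  obtain ⟨n, rfl⟩ : p ∣ n := by
    have : p ∣ d * (D * n ^ 4) :=
      ⟨Z ^ 2 - d * (p * d ^ 2 * m ^ 4 + A * d * n ^ 2 * m ^ 2), by linear_combination h₁⟩
    have hDn : p ∣ D * n ^ 4 := (hp.dvd_or_dvd this).resolve_left hpd
    exact hp.dvd_of_dvd_pow ((hp.dvd_or_dvd hDn).resolve_left hD)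
  obtain ⟨Z, rfl⟩ := hp.dvd_of_dvd_pow (a := Z) (n := 2)
    ⟨d * (d ^ 2 * m ^ 4 + p * (A * d * n ^ 2 * m ^ 2 + D * p * n ^ 4)),
      mul_left_cancel₀ hp.ne_zero (by linear_combination -h₁)⟩
  have h₂ : d * (d ^ 2 * m ^ 4 + p * (A * d * n ^ 2 * m ^ 2 + D * p * n ^ 4)) = p * Z ^ 2 :=
    mul_left_cancel₀ (pow_ne_zero 2 hp.ne_zero) (by linear_combination h₁)
  have hm : p ∣ m := by
    have : p ∣ d ^ 3 * m ^ 4 :=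
      ⟨Z ^ 2 - d * (A * d * n ^ 2 * m ^ 2 + D * p * n ^ 4), by linear_combination h₂⟩
    exact hp.dvd_of_dvd_pow
      ((hp.dvd_or_dvd this).resolve_left fun h => hpd (hp.dvd_of_dvd_pow h))
  exact hp.not_isUnit (hmn hm (dvd_mul_right p n))

variable [UniqueFactorizationMonoid R]

theorem exists_eq_squarefree_mul_sq {x : R} (hx : x ≠ 0) :
    ∃ d m, Squarefree d ∧ x = d * m ^ 2 := by
  induction x using WfDvdMonoid.induction_on_irreducible with
  | zero => contradiction
  | unit u hu => exact ⟨u, 1, hu.squarefree, by rw [one_pow, mul_one]⟩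
  | mul z p hz hp ih =>
    obtain ⟨d, m, hd, rfl⟩ := ih hz
    obtain ⟨e, rfl⟩ | h := hp.dvd_or_isRelPrime (n := d)
    · exact ⟨e, p * m, hd.squarefree_of_dvd (dvd_mul_left e p), by ring⟩
    · exact ⟨p * d, m, squarefree_mul_iff.2 ⟨h, hp.squarefree, hd⟩, by ring⟩

theorem exists_eq_mul_sq_forall_prime_dvd {A D b c z : R} (hb : b ≠ 0)
    (h : b ^ 2 + A * b * c ^ 2 + D * c ^ 4 = b * z ^ 2) :
    ∃ d m, b = d * m ^ 2 ∧ ∀ p, Prime p → p ∣ d → p ∣ D := by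
  obtain ⟨d, m, hd, rfl⟩ := exists_eq_squarefree_mul_sq hb
  refine ⟨d, m, rfl, fun p hp hpd => ?_⟩
  have hm : m ≠ 0 := by
    rintro rfl
    simp at hb
  obtain ⟨m, n, g, hmn, rfl, rfl⟩ := UniqueFactorizationMonoid.exists_reduced_factors m hm c
  have hg : g ≠ 0 := left_ne_zero_of_mul hm
  have hgZ : g ^ 2 * (d * (d ^ 2 * m ^ 4 + A * d * n ^ 2 * m ^ 2 + D * n ^ 4)) =
      (d * m * z) ^ 2 :=
    mul_left_cancel₀ (pow_ne_zero 2 hg) (by linear_combination d * h)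
  obtain ⟨Z, hZ⟩ := (IsIntegrallyClosed.pow_dvd_pow_iff two_ne_zero).1 ⟨_, hgZ.symm⟩
  refine dvd_of_squarefree_of_eq_sq (A := A) (Z := Z) hp hd hmn ?_ hpd
  exact mul_left_cancel₀ (pow_ne_zero 2 hg) (by rw [hgZ, hZ, mul_pow])

end UniqueFactorization

theorem mem_of_forall_prime_dvd_mem {M : Type*} [CommMonoidWithZero M]
    [UniqueFactorizationMonoid M] {S : Submonoid M} (hS : ∀ u, IsUnit u → u ∈ S)
    {d : M} (hd : d ≠ 0) (h : ∀ p, Prime p → p ∣ d → p ∈ S) : d ∈ S := by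
  induction d using UniqueFactorizationMonoid.induction_on_prime with
  | h₁ => contradiction
  | h₂ u hu => exact hS u hu
  | h₃ z p hz hp ih =>
    exact mul_mem (h p hp (dvd_mul_right p z))
      (ih hz fun q hq hqz => h q hq (hqz.mul_left p))

section SUnitClasses

variable {K : Type*} [Field K] [NumberField K] {θ : 𝓞 K}

theorem mem_squareClassSpan_of_prime_dvd (hθ : θ ^ 5 = 2) (hK : Module.finrank ℚ K = 5) {p : 𝓞 K}
    (hp : Prime p) (hpd : p ∣ 5 * delta θ ^ 2) : p ∈ squareClassSpan (classGen θ) := by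
  have hgen (i : Fin 5) (hi : Prime (classGen θ i)) (hpi : p ∣ classGen θ i) :
      p ∈ squareClassSpan (classGen θ) := by
    obtain ⟨u, hu⟩ := hp.associated_of_dvd hi hpi
    rw [Units.eq_mul_inv_iff_mul_eq _ |>.2 hu]
    exact mul_mem (apply_mem_squareClassSpan i) (mem_squareClassSpan_of_isUnit hθ hK u⁻¹.isUnit)
  have h5 : (5 : 𝓞 K) ∣ (1 + θ ^ 2) ^ 5 :=
    ⟨1 + 4 * θ + θ ^ 2 + 2 * θ ^ 3 + 2 * θ ^ 4, by
      linear_combination (10 * θ + 5 * θ ^ 3 + θ ^ 5 + 2) * hθ⟩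
  obtain hp5 | hpδ := hp.dvd_or_dvd hpd
  · exact hgen 4 (prime_one_add_sq hθ hK) (hp.dvd_of_dvd_pow (hp5.trans h5))
  · exact hgen 3 (prime_delta hθ hK) (hp.dvd_of_dvd_pow hpδ)

theorem mem_squareClassSpan_of_sq_add_eq (hθ : θ ^ 5 = 2) (hK : Module.finrank ℚ K = 5)
    {a b c z : 𝓞 K} (hb : b ≠ 0)
    (h : b ^ 2 + a * b * c ^ 2 + 5 * delta θ ^ 2 * c ^ 4 = b * z ^ 2) :
    b ∈ squareClassSpan (classGen θ) := by
  have := isPrincipalIdealRing_of_pow_five hθ hK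
  obtain ⟨d, m, rfl, hd⟩ := exists_eq_mul_sq_forall_prime_dvd hb h
  refine mul_mem (mem_of_forall_prime_dvd_mem (fun u => mem_squareClassSpan_of_isUnit hθ hK)
    (left_ne_zero_of_mul hb) fun p hp hpd => ?_) (sq_mem_squareClassSpan m)
  exact mem_squareClassSpan_of_prime_dvd hθ hK hp (hd p hp hpd)

theorem hasSUnitSquareClasses_algebraMap (hθ : θ ^ 5 = 2) (hK : Module.finrank ℚ K = 5)
    {M : Submonoid (𝓞 K)} (hM : M ≤ nonZeroDivisors (𝓞 K)) {R : Type*} [CommRing R]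
    [Nontrivial R] [Algebra (𝓞 K) R] [IsLocalization M R] :
    HasSUnitSquareClasses (algebraMap (𝓞 K) R θ) := by
  classical
  intro a b c z hb h
  obtain ⟨q, hq⟩ := IsLocalization.exist_integer_multiples_of_finset M {b, c, z}
  obtain ⟨b', hb'⟩ := hq b (by simp)
  obtain ⟨c', hc'⟩ := hq c (by simp)
  obtain ⟨z', hz'⟩ := hq z (by simp)
  rw [Algebra.smul_def] at hb' hc' hz'
  obtain ⟨u, hu⟩ := IsLocalization.map_units R q
  obtain ⟨β, hβ⟩ : ∃ β, algebraMap (𝓞 K) R β = b * u ^ 2 :=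
    ⟨q * b', by rw [map_mul, hb', hu]; ring⟩
  have hβ0 : β ≠ 0 := by
    rintro rfl
    exact (hb.mul (u.isUnit.pow 2)).ne_zero (by rw [← hβ, map_zero])
  have hmem : β ∈ squareClassSpan (classGen θ) := by
    refine mem_squareClassSpan_of_sq_add_eq hθ hK (a := a * delta θ) (c := c') (z := z') hβ0
      (IsLocalization.injective R hM ?_)
    simp only [map_add, map_mul, map_pow, map_delta, map_intCast, map_ofNat, hβ, hc', hz', ← hu]
    linear_combination u ^ 4 * h
  have hβR := map_mem_of_mem_squareClassSpan (algebraMap (𝓞 K) R)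
    (g := classGen (algebraMap (𝓞 K) R θ))
    (fun i => map_classGen (algebraMap (𝓞 K) R) θ i ▸ apply_mem_squareClassSpan i) hmem
  have hbβ : b = algebraMap (𝓞 K) R β * (↑u⁻¹ : R) ^ 2 := by
    rw [hβ, mul_assoc, ← mul_pow, u.mul_inv, one_pow, mul_one]
  rw [hbβ]
  exact mul_mem hβR (sq_mem_squareClassSpan _)

end SUnitClasses

/-! ### Rational points -/

section Curve

variable {K : Type*} [Field K] [NumberField K] {θ : 𝓞 K}

theorem dvd_or_dvd_sub_one (hθ : θ ^ 5 = 2) (hK : Module.finrank ℚ K = 5) (x : 𝓞 K) :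
    θ ∣ x ∨ θ ∣ x - 1 := by
  obtain ⟨m, y, hy⟩ := exists_int_dvd_sub (adjoin_eq_top_of_pow_five hθ hK) (g := θ) (n := 0)
    (by simp) x
  obtain ⟨n, rfl | rfl⟩ := m.even_or_odd'
  · exact .inl ⟨y + θ ^ 4 * n, by push_cast at hy; linear_combination hy - n * hθ⟩
  · exact .inr ⟨y + θ ^ 4 * n, by push_cast at hy; linear_combination hy - n * hθ⟩

theorem isFifthRootUniformizer_algebraMap (hθ : θ ^ 5 = 2) (hK : Module.finrank ℚ K = 5)
    [(Ideal.span {θ}).IsPrime] {R : Type*} [CommRing R] [IsDomain R] [IsDiscreteValuationRing R]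
    [Algebra (𝓞 K) R] [IsLocalization.AtPrime R (Ideal.span {θ})] :
    IsFifthRootUniformizer (algebraMap (𝓞 K) R θ) where
  pow_five := by rw [← map_pow, hθ, map_ofNat]
  irreducible := by
    rw [IsDiscreteValuationRing.irreducible_iff_uniformizer, ← Set.image_singleton,
      ← Ideal.map_span]
    exact (IsLocalization.AtPrime.map_eq_maximalIdeal (Ideal.span {θ}) R).symm
  exists_reduction k := by
    obtain ⟨f, hf⟩ := exists_ringHom_eq_of_pow_five hθ hK
      (Quintic_s10.root_pow_five : (Quintic_s10.root : Quintic_s10 (ZMod (2 ^ k))) ^ 5 = 2)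
    have hunit (q : (Ideal.span {θ}).primeCompl) : IsUnit (f q) := by
      obtain ⟨y, hy⟩ := (dvd_or_dvd_sub_one hθ hK q).resolve_left fun h =>
        q.2 (Ideal.mem_span_singleton.2 h)
      rw [sub_eq_iff_eq_add'.1 hy, map_add, map_mul, map_one, hf]
      exact Quintic_s10.isUnit_one_add_root_mul _
    exact ⟨IsLocalization.lift hunit, by rw [IsLocalization.lift_eq, hf]⟩

theorem eq_of_delta_mul_sq_eq_quarticForm (hθ : θ ^ 5 = 2) (hK : Module.finrank ℚ K = 5)
    {p r : ℤ} (hpr : IsCoprime p r) {w : 𝓞 K}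
    (hw : delta θ * w ^ 2 = quarticForm (θ * p) r) : p = r := by
  have hθ' := prime_fifth_root hθ hK
  have : (Ideal.span {θ}).IsPrime := (Ideal.span_singleton_prime hθ'.ne_zero).2 hθ'
  let R := Localization.AtPrime (Ideal.span {θ})
  have : IsDiscreteValuationRing R :=
    IsLocalization.AtPrime.isDiscreteValuationRing_of_dedekind_domain (𝓞 K)
      (mt Ideal.span_singleton_eq_bot.1 hθ'.ne_zero) R
  have hS : HasSUnitSquareClasses (algebraMap (𝓞 K) R θ) :=
    hasSUnitSquareClasses_algebraMap hθ hK (Ideal.primeCompl_le_nonZeroDivisors (Ideal.span {θ}))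
  refine (isFifthRootUniformizer_algebraMap hθ hK).eq_of_delta_mul_sq_eq hS hpr
    (w := algebraMap (𝓞 K) R w) ?_
  simpa only [map_mul, map_pow, map_delta, map_quarticForm, map_intCast]
    using congrArg (algebraMap (𝓞 K) R) hw

theorem eq_one_of_delta_mul_eq (hθ : θ ^ 5 = 2) (hK : Module.finrank ℚ K = 5) {X : ℚ} {Y : K}
    (h : delta ((θ : K) * X) = delta (θ : K) * Y ^ 2) : X = 1 := by
  have hX : (X : K) * X.den = X.num := by exact_mod_cast Rat.mul_den_eq_num X
  let f : 𝓞 K := quarticForm (θ * X.num) (X.den : ℤ)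
  have hf : delta (θ : K) * (Y * X.den ^ 2) ^ 2 = algebraMap (𝓞 K) K f := by
    rw [map_quarticForm, map_mul, map_intCast, map_intCast, Int.cast_natCast, ← hX, ← mul_assoc,
      quarticForm_mul_left, h]
    ring
  have hsq : (delta (θ : K) * (Y * X.den ^ 2)) ^ 2 =
      algebraMap (𝓞 K) K (delta θ * f) := by
    rw [map_mul, map_delta, ← hf]
    ring
  obtain ⟨W, hW⟩ : ∃ W, algebraMap (𝓞 K) K W = delta (θ : K) * (Y * X.den ^ 2) :=
    ⟨⟨_, .of_pow two_pos (hsq ▸ RingOfIntegers.isIntegral_coe _)⟩, rfl⟩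
  have hWf : W ^ 2 = delta θ * f := RingOfIntegers.coe_injective (by rw [map_pow, hW, hsq])
  have hδ := prime_delta hθ hK
  obtain ⟨w, rfl⟩ := hδ.dvd_of_dvd_pow ⟨f, hWf⟩
  have hwf : delta θ * w ^ 2 = f := mul_left_cancel₀ hδ.ne_zero (by rw [← hWf]; ring)
  have hnd := eq_of_delta_mul_sq_eq_quarticForm hθ hK (Rat.isCoprime_num_den X) hwf
  rw [← Rat.num_div_den X, hnd]
  exact div_self (by exact_mod_cast X.den_ne_zero)

end Curve

open IntermediateField in
theorem chabauty_curve_C2_general {L : Type*} [Field L] [CharZero L] {α : L} (hα : α ^ 5 = 2)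
    {X : ℚ} {Y : L} (hY : Y ∈ ℚ⟮α⟯) :
    delta (α * X) = delta α * Y ^ 2 ↔ X = 1 ∧ (Y = 1 ∨ Y = -1) := by
  refine ⟨fun h => ?_, ?_⟩
  · have hint : IsIntegral ℚ α := (isIntegral_of_pow_five hα).tower_top
    have := adjoin.finiteDimensional hint
    have : NumberField ℚ⟮α⟯ := ⟨⟩
    have hK : Module.finrank ℚ ℚ⟮α⟯ = 5 := by
      rw [adjoin.finrank hint, minpoly_rat_eq_of_pow_five hα, natDegree_X_pow_sub_C]
    have hgen : (⟨α, mem_adjoin_simple_self ℚ α⟩ : ℚ⟮α⟯) ^ 5 = 2 := Subtype.ext hα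
    let θ : 𝓞 ℚ⟮α⟯ := ⟨_, isIntegral_of_pow_five hgen⟩
    have hθ : θ ^ 5 = 2 := RingOfIntegers.ext hgen
    obtain rfl : X = 1 := eq_one_of_delta_mul_eq hθ hK (Y := ⟨Y, hY⟩) (Subtype.ext h)
    have hδ : delta α ≠ 0 := right_ne_zero_of_mul ((one_add_mul_delta hα).trans_ne three_ne_zero)
    refine ⟨rfl, sq_eq_one_iff.1 (mul_left_cancel₀ hδ ?_)⟩
    rw [← h, Rat.cast_one, mul_one, mul_one]
  · rintro ⟨rfl, rfl | rfl⟩ <;> simp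

/-- Lemma 5 (second curve) of the paper: with `α = ⁵√2` and `K = ℚ(α) ⊆ ℝ`, the only
solutions of `α⁴X⁴ - α³X³ + α²X² - αX + 1 = (α⁴-α³+α²-α+1)Y²` with `X ∈ ℚ` and
`Y ∈ K` are `(X,Y) = (1, ±1)`. -/
theorem chabauty_curve_C2 (α : ℝ) (hα : α ^ 5 = 2) (hαpos : 0 < α)
    (X : ℚ) (Y : ℝ) (hY : Y ∈ IntermediateField.adjoin ℚ ({α} : Set ℝ)) :
    α ^ 4 * (X : ℝ) ^ 4 - α ^ 3 * (X : ℝ) ^ 3 + α ^ 2 * (X : ℝ) ^ 2 - α * (X : ℝ) + 1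
        = (α ^ 4 - α ^ 3 + α ^ 2 - α + 1) * Y ^ 2 ↔
      (X = 1 ∧ (Y = 1 ∨ Y = -1)) := by
  simpa only [delta, mul_pow] using chabauty_curve_C2_general hα hY
end
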